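/- arXiv:2203.09274 — 6 statements merged into one kernel-verified Lean document; each statement's English description precedes it below -/
import Mathlib

section
/- Let a ∈ ℝ, b = 8π, and let ρ > 0 be a real number whose square root √ρ is rational. Then the ℂ-vector space 𝒮_ρ(a,b) has dimension 4 if √ρ is an integer, and dimension 2 if √ρ ∈ ℚ\ℤ. In particular, there exist almost Kähler metrics compatible with the same almost complex structure J_{a,8π} on the Kodaira–Thurston manifold whose associated Hodge numbers h^{0,1} differ. -/
open Complex MeasureTheory

noncomputable section

/-- Functions of four real variables `(t, x, y, z)` with complex values. -/
abbrev F4 : Type := ℝ → ℝ → ℝ → ℝ → ℂ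

/-- Smoothness of a function of four real variables. -/
def Smooth4 (f : F4) : Prop :=
  ContDiff ℝ (⊤ : ℕ∞) (fun p : ℝ × ℝ × ℝ × ℝ => f p.1 p.2.1 p.2.2.1 p.2.2.2)

/-- The invariance properties identifying smooth functions on `ℝ⁴` with smooth
functions on the Kodaira–Thurston manifold `KT⁴`. -/
def KTPeriodic (f : F4) : Prop :=
  ∀ t x y z : ℝ,
    f (t + 1) x y z = f t x y z ∧
    f t (x + 1) y (z + y) = f t x y z ∧
    f t x (y + 1) z = f t x y z ∧
    f t x y (z + 1) = f t x y z

/-- Partial derivative in `t`. -/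
def pT (f : F4) (t x y z : ℝ) : ℂ := deriv (fun s => f s x y z) t
/-- Partial derivative in `x`. -/
def pX (f : F4) (t x y z : ℝ) : ℂ := deriv (fun s => f t s y z) x
/-- Partial derivative in `y`. -/
def pY (f : F4) (t x y z : ℝ) : ℂ := deriv (fun s => f t x s z) y
/-- Partial derivative in `z`. -/
def pZ (f : F4) (t x y z : ℝ) : ℂ := deriv (fun s => f t x y s) z

/-- The vector field `V₁ = (1/2)(∂/∂t − i ∂/∂x)`. -/
def V₁ (f : F4) (t x y z : ℝ) : ℂ :=
  (1 / 2) * (pT f t x y z - Complex.I * pX f t x y z)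

/-- The conjugate vector field `V̄₁ = (1/2)(∂/∂t + i ∂/∂x)`. -/
def V₁c (f : F4) (t x y z : ℝ) : ℂ :=
  (1 / 2) * (pT f t x y z + Complex.I * pX f t x y z)

/-- The vector field `V₂ = (1/2)(∂/∂y + x ∂/∂z − ((a−i)/b) ∂/∂z)`. -/
def V₂ (a b : ℝ) (f : F4) (t x y z : ℝ) : ℂ :=
  (1 / 2) * (pY f t x y z + (x : ℂ) * pZ f t x y z -
    (((a : ℂ) - Complex.I) / (b : ℂ)) * pZ f t x y z)

/-- The conjugate vector field `V̄₂ = (1/2)(∂/∂y + x ∂/∂z − ((a+i)/b) ∂/∂z)`. -/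
def V₂c (a b : ℝ) (f : F4) (t x y z : ℝ) : ℂ :=
  (1 / 2) * (pY f t x y z + (x : ℂ) * pZ f t x y z -
    (((a : ℂ) + Complex.I) / (b : ℂ)) * pZ f t x y z)

/-- The space `𝒮(a,b)` of pairs `(f,g)` of smooth KT-periodic functions satisfying
`−V̄₂(f) + V̄₁(g) + (b/4)g = 0` and `V₁(f) + V₂(g) = 0`. -/
def Sol (a b : ℝ) : Set (F4 × F4) :=
  {fg | Smooth4 fg.1 ∧ Smooth4 fg.2 ∧ KTPeriodic fg.1 ∧ KTPeriodic fg.2 ∧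
    (∀ t x y z : ℝ,
      -V₂c a b fg.1 t x y z + V₁c fg.2 t x y z + ((b : ℂ) / 4) * fg.2 t x y z = 0) ∧
    (∀ t x y z : ℝ, V₁ fg.1 t x y z + V₂ a b fg.2 t x y z = 0)}

/-- `S` is a `ℂ`-subspace of dimension exactly `n`: there are `n` linearly independent
elements whose span is exactly `S`. -/
def HasDimOver {V : Type*} [AddCommGroup V] [Module ℂ V] (S : Set V) (n : ℕ) : Prop :=
  ∃ v : Fin n → V, LinearIndependent ℂ v ∧
    (Submodule.span ℂ (Set.range v) : Set V) = S

end

/-- The space `𝒮_ρ(a,b)` of pairs `(f,g)` of smooth KT-periodic functions satisfying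
`−V̄₂(f) + V̄₁(g) + (b/4)g = 0` and `ρ·V₁(f) + V₂(g) = 0`; its dimension is the Hodge
number `h^{0,1}` for the almost Kähler metric `h_{a,b,ρ}`. -/
def SolRho (a b ρ : ℝ) : Set (F4 × F4) :=
  {fg | Smooth4 fg.1 ∧ Smooth4 fg.2 ∧ KTPeriodic fg.1 ∧ KTPeriodic fg.2 ∧
    (∀ t x y z : ℝ,
      -V₂c a b fg.1 t x y z + V₁c fg.2 t x y z + ((b : ℂ) / 4) * fg.2 t x y z = 0) ∧
    (∀ t x y z : ℝ, (ρ : ℂ) * V₁ fg.1 t x y z + V₂ a b fg.2 t x y z = 0)}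

/-!
Put `r = √ρ`. In terms of `p = r f + g` and `q = r f - g`, on functions whose frequency in the
central direction `z` is `n`, the system reads `A p = r ∂ₜ q + (r b / 4 + 2πn / b) q`,
`A' q = r ∂ₜ p + (r b / 4 - 2πn / b) p` with `A'` the formal adjoint of `A` for the `L²` inner
product and `A A' - A' A = -4πrn`. Pairing `A' A p` with `∂ₜ p`, where `∂ₜ` is skew-adjoint and
commutes with `A`, gives `∂ₜ p = 0`, and similarly `∂ₜ q = 0`. For `n > 0` the powers of `A'` then
lead from `p` to eigenvectors of `A' A` whose eigenvalues decrease by the fixed amount `4πrn`; the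
sequence can only end before the eigenvalue turns negative if one of them vanishes, which is a
quadratic relation for `s = r b² / (8π)` with integer coefficients. For `n < 0` the roles of `p` and
`q` are exchanged. When `b = 8π` and `r` is rational, the relation is a nontrivial integer quadratic
equation for `π`, which is impossible: this case of the transcendence of `π` is proved by
Lindemann's argument.

There remain the functions on the torus with coordinates `t, x, y`, where the system has constant
coefficients: the dimension is the number of characters `(0, l, m)` with
`m² + ρ l (l - b / (4π)) = 0`. For `b = 8π` these are `(0, 0, 0)`, `(0, 2, 0)` and, if `r` is an
integer, `(0, 1, ±r)`.
-/

namespace KodairaThurston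

noncomputable section

/-! ### Dimension counts -/

theorem mem_span_singleton_of_mul_eq {K : Type*} [Field K] {ν : K × K} (hν : ν ≠ 0) {u v : K}
    (h : ν.1 * v = u * ν.2) : (u, v) ∈ K ∙ ν := by
  rw [Submodule.mem_span_singleton]
  rcases eq_or_ne ν.1 0 with h₁ | h₁
  · have h₂ : ν.2 ≠ 0 := fun h₂ => hν (Prod.ext h₁ h₂)
    have hu : u = 0 := by simpa [h₁, h₂] using h
    exact ⟨v / ν.2, Prod.ext (by simp [h₁, hu]) (div_mul_cancel₀ v h₂)⟩
  · refine ⟨u / ν.1, Prod.ext (div_mul_cancel₀ u h₁) ?_⟩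
    simp only [Prod.smul_snd, smul_eq_mul]
    field_simp
    exact h.symm

theorem hasDimOver_image {V V' : Type*} [AddCommGroup V] [Module ℂ V] [AddCommGroup V']
    [Module ℂ V'] {S : Set V} {n : ℕ} (h : HasDimOver S n) {F : V →ₗ[ℂ] V'}
    (hF : Function.Injective F) : HasDimOver (F '' S) n := by
  obtain ⟨v, hv, rfl⟩ := h
  refine ⟨F ∘ v, hv.map' F (LinearMap.ker_eq_bot.2 hF), ?_⟩
  rw [Set.range_comp, ← Submodule.map_span, Submodule.map_coe]

theorem hasDimOver_of_coordinates {V E ι : Type*} [AddCommGroup V] [Module ℂ V] [AddCommGroup E]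
    [Module ℂ E] [Finite ι] {W : Submodule ℂ V} {v : ι → V} {Φ : ι → V →ₗ[ℂ] E}
    (hv : ∀ i, v i ∈ W) (hdiag : ∀ i, Φ i (v i) ≠ 0) (hoff : ∀ i j, i ≠ j → Φ i (v j) = 0)
    (hspan : ∀ w ∈ W, ∀ i, Φ i w ∈ ℂ ∙ Φ i (v i))
    (hker : ∀ w ∈ W, (∀ i, Φ i w = 0) → w = 0) : HasDimOver (W : Set V) (Nat.card ι) := by
  have := Fintype.ofFinite ι
  have hΦ (c : ι → ℂ) (i : ι) : Φ i (∑ j, c j • v j) = c i • Φ i (v i) := by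
    rw [map_sum, Finset.sum_eq_single i
      (fun j _ hj => by rw [map_smul, hoff i j hj.symm, smul_zero]) (by simp), map_smul]
  have hli : LinearIndependent ℂ v := Fintype.linearIndependent_iff.2 fun c hc i =>
    (smul_eq_zero.1 ((hΦ c i).symm.trans (by rw [hc, map_zero]))).resolve_right (hdiag i)
  have hW : Submodule.span ℂ (Set.range v) = W := by
    refine le_antisymm (Submodule.span_le.2 (Set.range_subset_iff.2 hv)) fun w hw => ?_
    choose c hc using fun i => Submodule.mem_span_singleton.1 (hspan w hw i)
    have hsum : w - ∑ j, c j • v j = 0 := by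
      refine hker _ (W.sub_mem hw (W.sum_mem fun j _ => W.smul_mem _ (hv j))) fun i => ?_
      rw [map_sub, hΦ, hc, sub_self]
    rw [sub_eq_zero.1 hsum]
    exact Submodule.sum_mem _ fun j _ => Submodule.smul_mem _ _ (Submodule.subset_span ⟨j, rfl⟩)
  refine ⟨v ∘ (Finite.equivFin ι).symm, hli.comp _ (Finite.equivFin ι).symm.injective, ?_⟩
  rw [(Finite.equivFin ι).symm.surjective.range_comp, hW]

/-! ### `π` is not a root of an integer quadratic -/

section Lindemann

open Polynomial
open scoped Nat

theorem gaussianInt_eq_zero_of_norm_lt_one {w : GaussianInt} (hw : ‖(w : ℂ)‖ < 1) : w = 0 := by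
  have hsq : ‖(w : ℂ)‖ ^ 2 < 1 := by nlinarith [norm_nonneg (w : ℂ)]
  rw [← normSq_eq_norm_sq, ← GaussianInt.intCast_real_norm] at hsq
  have hlt : Zsqrtd.norm w < 1 := by exact_mod_cast hsq
  exact GaussianInt.norm_eq_zero.1 (by linarith [GaussianInt.norm_nonneg w])

theorem exists_prime_mul_pow_div_factorial_lt_one (N : ℕ) (C c : ℝ) :
    ∃ p : ℕ, N < p ∧ p.Prime ∧ C * (c ^ p / (p - 1)!) < 1 := by
  have hlim : Filter.Tendsto (fun n : ℕ => C * c * (c ^ n / n !)) Filter.atTop (nhds 0) := by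
    simpa using (FloorSemiring.tendsto_pow_div_factorial_atTop c).const_mul (C * c)
  obtain ⟨M, hM⟩ := Filter.eventually_atTop.1 (hlim.eventually (gt_mem_nhds one_pos))
  obtain ⟨p, hp, hprime⟩ := Nat.exists_infinite_primes (N + M + 1)
  refine ⟨p, by omega, hprime, ?_⟩
  have hlt := hM (p - 1) (by omega)
  have hpow : c ^ p = c * c ^ (p - 1) := by rw [← pow_succ', Nat.sub_add_cancel hprime.one_le]
  calc C * (c ^ p / (p - 1)!) = C * c * (c ^ (p - 1) / (p - 1)!) := by rw [hpow]; ring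
    _ < 1 := hlt

theorem pow_mul_sum_aeval_mem {K ι : Type*} [CommRing K] [Fintype ι] (R : Subring K) {α : ι → K}
    {D : ℤ} (hpow : ∀ j, (D : K) ^ j * ∑ i, α i ^ j ∈ R) (g : ℤ[X]) {m : ℕ}
    (hm : g.natDegree ≤ m) : (D : K) ^ m * ∑ i, aeval (α i) g ∈ R := by
  have hexpand : (D : K) ^ m * ∑ i, aeval (α i) g = ∑ j ∈ Finset.range (m + 1),
      (g.coeff j * D ^ (m - j) : ℤ) * ((D : K) ^ j * ∑ i, α i ^ j) := by
    simp only [aeval_eq_sum_range' (Nat.lt_succ_of_le hm), Finset.mul_sum]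
    rw [Finset.sum_comm]
    refine Finset.sum_congr rfl fun j hj => Finset.sum_congr rfl fun i _ => ?_
    rw [← Nat.sub_add_cancel (Finset.mem_range_succ_iff.1 hj), pow_add, zsmul_eq_mul]
    push_cast [Nat.add_sub_cancel]
    ring
  rw [hexpand]
  exact R.sum_mem fun j _ => R.mul_mem (intCast_mem R _) (hpow j)

theorem intCast_add_sum_exp_ne_zero {ι : Type*} [Fintype ι] {f : ℤ[X]} (hf : f.eval 0 ≠ 0)
    {α : ι → ℂ} (hα : ∀ i, aeval (α i) f = 0) {D : ℤ} (hD : D ≠ 0)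
    (hpow : ∀ j, (D : ℂ) ^ j * ∑ i, α i ^ j ∈ GaussianInt.toComplex.range) {k : ℤ} (hk : k ≠ 0) :
    (k : ℂ) + ∑ i, exp (α i) ≠ 0 := by
  intro hsum
  have hf0 : f ≠ 0 := by rintro rfl; simp at hf
  obtain ⟨c, hc⟩ := LindemannWeierstrass.exp_polynomial_approx f hf
  obtain ⟨p, hpN, hp, hsmall⟩ := exists_prime_mul_pow_div_factorial_lt_one
    ((f.eval 0).natAbs + D.natAbs + k.natAbs) (Fintype.card ι) ((|D| : ℤ) ^ f.natDegree * c)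
  have hpZ : Prime (p : ℤ) := Nat.prime_iff_prime_int.1 hp
  have hndvd : ∀ {z : ℤ}, z ≠ 0 → z.natAbs < p → ¬ (p : ℤ) ∣ z := fun hz hlt h =>
    hlt.not_ge (Nat.le_of_dvd (Int.natAbs_pos.2 hz) (Int.natCast_dvd.1 h))
  obtain ⟨n, hpn, g, hgdeg, hg⟩ := hc p (by omega) hp
  set m := f.natDegree * p
  obtain ⟨u, hu⟩ := pow_mul_sum_aeval_mem _ hpow g
    (show g.natDegree ≤ m from hgdeg.trans ((Nat.sub_le _ _).trans (mul_comm _ _).le))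
  let w : GaussianInt := ((D ^ m * (k * n) : ℤ) : GaussianInt) + ((p : ℤ) : GaussianInt) * u
  have hw : (w : ℂ) = -((D : ℂ) ^ m * ∑ i, (n • exp (α i) - p • aeval (α i) g)) := by
    have : (w : ℂ) = (D : ℂ) ^ m * (k * n) + p * GaussianInt.toComplex u := by simp [w]
    simp only [this, hu, zsmul_eq_mul, nsmul_eq_mul, Finset.sum_sub_distrib, ← Finset.mul_sum]
    linear_combination ((D : ℂ) ^ m * n) * hsum
  have hnorm : ‖(w : ℂ)‖ < 1 := by
    refine lt_of_le_of_lt ?_ hsmall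
    calc ‖(w : ℂ)‖ = |(D : ℝ)| ^ m * ‖∑ i, (n • exp (α i) - p • aeval (α i) g)‖ := by
          rw [hw, norm_neg, norm_mul, norm_pow, Complex.norm_intCast]
      _ ≤ |(D : ℝ)| ^ m * (Fintype.card ι • (c ^ p / (p - 1)!)) := by
          gcongr
          exact (norm_sum_le_of_le _ fun i _ => hg (mem_aroots.2 ⟨hf0, hα i⟩)).trans_eq
            (Finset.sum_const _)
      _ = _ := by rw [nsmul_eq_mul, Int.cast_abs, mul_pow, ← pow_mul]; ring
  have hdvd : (p : ℤ) ∣ D ^ m * (k * n) := by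
    have hre := congrArg Zsqrtd.re (gaussianInt_eq_zero_of_norm_lt_one hnorm)
    exact ⟨-u.re, by
      simp only [w, Zsqrtd.re_add, Zsqrtd.re_intCast, Zsqrtd.re_smul, Zsqrtd.re_zero] at hre
      linarith⟩
  rcases hpZ.dvd_or_dvd hdvd with h | h
  · exact hndvd hD (by omega) (hpZ.dvd_of_dvd_pow h)
  · exact (hpZ.dvd_or_dvd h).elim (hndvd hk (by omega)) hpn

theorem pow_add_pow_mem {K : Type*} [CommRing K] (R : Subring K) {x y : K} (hs : x + y ∈ R)
    (hp : x * y ∈ R) (k : ℕ) : x ^ k + y ^ k ∈ R := by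
  induction k using Nat.strong_induction_on with
  | _ k ih =>
    match k with
    | 0 => simpa using R.add_mem R.one_mem R.one_mem
    | 1 => simpa using hs
    | k + 2 =>
      have hrec : x ^ (k + 2) + y ^ (k + 2) =
          (x + y) * (x ^ (k + 1) + y ^ (k + 1)) - x * y * (x ^ k + y ^ k) := by ring
      rw [hrec]
      exact R.sub_mem (R.mul_mem hs (ih _ (by omega))) (R.mul_mem hp (ih _ (by omega)))

theorem pow_mul_add_pow_mem_gaussianInt {D S P : ℤ} {x y : ℂ} (hs : D * (x + y) = I * S)
    (hp : D ^ 2 * (x * y) = P) (j : ℕ) :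
    (D : ℂ) ^ j * (x ^ j + y ^ j) ∈ GaussianInt.toComplex.range := by
  rw [mul_add, ← mul_pow, ← mul_pow]
  refine pow_add_pow_mem _ (RingHom.mem_range.2 ⟨⟨0, S⟩, ?_⟩) (RingHom.mem_range.2 ⟨⟨P, 0⟩, ?_⟩) j
  · rw [← mul_add, hs]; simp [GaussianInt.toComplex_def, mul_comm I]
  · rw [mul_mul_mul_comm, ← sq, hp]; simp [GaussianInt.toComplex_def]

theorem mul_sq_pi_add_ne_zero {A C : ℤ} (hA : A ≠ 0) (hC : C ≠ 0) :
    (A : ℝ) * Real.pi ^ 2 + C ≠ 0 := by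
  intro h
  have hpi : (A : ℂ) * (Real.pi : ℂ) ^ 2 + C = 0 := by exact_mod_cast h
  let α : Fin 2 → ℂ := ![Real.pi * I, -(Real.pi * I)]
  let f : ℤ[X] := Polynomial.C A * X ^ 2 - Polynomial.C C
  have hroot : ∀ i, aeval (α i) f = 0 := by
    have : aeval (Real.pi * I) f = 0 := by
      simp only [f, map_sub, map_mul, map_pow, aeval_X, eq_intCast, map_intCast, mul_pow, I_sq]
      linear_combination -hpi
    intro i
    fin_cases i <;> simpa [α, f] using this
  refine intCast_add_sum_exp_ne_zero (f := f) (by simpa [f] using hC) hroot hA (fun j => ?_)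
    two_ne_zero ?_
  · simp only [α, Fin.sum_univ_two, Matrix.cons_val]
    refine pow_mul_add_pow_mem_gaussianInt (S := 0) (P := -(A * C)) (by simp) ?_ j
    push_cast
    linear_combination -(A ^ 2 * Real.pi ^ 2 : ℂ) * I_sq + (A : ℂ) * hpi
  · simp only [α, Fin.sum_univ_two, Matrix.cons_val, exp_neg, exp_pi_mul_I]
    norm_num

/-- If `β` is the other root of `A X² + B X + C`, then the exponents in
`0 = (1 + exp (iπ)) (1 + exp (iβ)) = 1 + exp (iπ) + exp (iβ) + exp (i(π + β))` are roots of an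
integer polynomial, and `i(π + β) = -iB/A`. -/
theorem mul_sq_pi_add_mul_pi_add_ne_zero {A B C : ℤ} (hA : A ≠ 0) (hB : B ≠ 0) (hC : C ≠ 0) :
    (A : ℝ) * Real.pi ^ 2 + B * Real.pi + C ≠ 0 := by
  intro h
  have hA0 : (A : ℂ) ≠ 0 := Int.cast_ne_zero.2 hA
  obtain ⟨β, hsum⟩ : ∃ β : ℂ, (A : ℂ) * (Real.pi + β) = -B :=
    ⟨-B / A - Real.pi, by rw [add_sub_cancel, mul_div_cancel₀ _ hA0]⟩
  have hprod : (A : ℂ) * (Real.pi * β) = C := by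
    have hpi : (A : ℂ) * Real.pi ^ 2 + B * Real.pi + C = 0 := by exact_mod_cast h
    linear_combination (Real.pi : ℂ) * hsum - hpi
  let α : Fin 3 → ℂ := ![Real.pi * I, β * I, Real.pi * I + β * I]
  let q : ℤ[X] := Polynomial.C (A ^ 2) * X ^ 4 + Polynomial.C (B ^ 2 - 2 * A * C) * X ^ 2 +
    Polynomial.C (C ^ 2)
  let f : ℤ[X] := q * (Polynomial.C (A ^ 2) * X ^ 2 + Polynomial.C (B ^ 2))
  have hroot : ∀ i, aeval (α i) f = 0 := by
    have haeval (x : ℂ) : aeval (x * I) f =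
        (A ^ 2 * x ^ 4 - (B ^ 2 - 2 * A * C) * x ^ 2 + C ^ 2) * (B ^ 2 - A ^ 2 * x ^ 2) := by
      simp only [f, q, map_add, map_mul, map_pow, map_sub, aeval_X, eq_intCast, map_intCast,
        mul_pow, I_sq, I_pow_four]
      ring
    have hB : (B : ℂ) = -(A * (Real.pi + β)) := by rw [hsum, neg_neg]
    intro i
    fin_cases i <;> simp only [α, Fin.zero_eta, Fin.mk_one, Fin.reduceFinMk, Matrix.cons_val,
      ← add_mul, haeval, hB, ← hprod] <;> ring
  refine intCast_add_sum_exp_ne_zero (f := f) (by simp [f, q, hB, hC]) hroot hA (fun j => ?_)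
    one_ne_zero ?_
  · simp only [α, Fin.sum_univ_three, Matrix.cons_val]
    rw [mul_add]
    refine Subring.add_mem _ (pow_mul_add_pow_mem_gaussianInt (S := -B) (P := -(A * C)) ?_ ?_ j) ?_
    · push_cast; linear_combination I * hsum
    · push_cast; linear_combination (A ^ 2 * Real.pi * β : ℂ) * I_sq - (A : ℂ) * hprod
    · rw [← mul_pow, ← add_mul, ← mul_assoc, hsum]
      exact pow_mem (RingHom.mem_range.2 ⟨⟨0, -B⟩, by simp [GaussianInt.toComplex_def]⟩) j
  · simp only [α, Fin.sum_univ_three, Int.cast_one, Matrix.cons_val, exp_add, exp_pi_mul_I]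
    ring

theorem eq_zero_of_quadratic_pi_eq_zero {A B C : ℤ}
    (h : (A : ℝ) * Real.pi ^ 2 + B * Real.pi + C = 0) : A = 0 ∧ B = 0 ∧ C = 0 := by
  have hlinear {S P : ℤ} (hSP : (S : ℝ) * Real.pi + P = 0) : S = 0 ∧ P = 0 := by
    by_cases hS : S = 0
    · exact ⟨hS, by simpa [hS] using hSP⟩
    · have hS0 : (S : ℝ) ≠ 0 := by exact_mod_cast hS
      exact absurd ⟨-P / S, by push_cast; field_simp; linarith⟩ irrational_pi
  by_cases hA : A = 0
  · exact ⟨hA, hlinear (by simpa [hA] using h)⟩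
  by_cases hC : C = 0
  · have := hlinear (S := A) (P := B) <| (mul_eq_zero.1 (show Real.pi * _ = 0 by
      rw [hC, Int.cast_zero] at h; linear_combination h)).resolve_left Real.pi_ne_zero
    exact ⟨this.1, this.2, hC⟩
  by_cases hB : B = 0
  · exact absurd (by simpa [hB] using h) (mul_sq_pi_add_ne_zero hA hC)
  · exact absurd h (mul_sq_pi_add_mul_pi_add_ne_zero hA hB hC)

end Lindemann

/-- Nonresonance of the parameter `s = √ρ b² / (8π)`: no rung of the ladder on a nonzero central
Fourier mode `±n` is annihilated. -/
def Nonresonant (s : ℝ) : Prop :=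
  ∀ n j : ℕ, 0 < n → 0 < j → s ^ 2 - 8 * j * n * s - n ^ 2 ≠ 0

theorem nonresonant_mul_pi (r : ℚ) : Nonresonant (8 * Real.pi * r) := by
  intro n j hn _ h
  have hquad : ((64 * r.num ^ 2 : ℤ) : ℝ) * Real.pi ^ 2 +
      ((-64 * j * n * r.num * r.den : ℤ) : ℝ) * Real.pi + ((-(n ^ 2 * r.den ^ 2) : ℤ) : ℝ) = 0 := by
    have hr : (r : ℝ) * r.den = r.num := by exact_mod_cast Rat.mul_den_eq_num r
    push_cast
    rw [← hr]
    linear_combination (r.den : ℝ) ^ 2 * h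
  have hC := (eq_zero_of_quadratic_pi_eq_zero hquad).2.2
  simp [hn.ne'] at hC

theorem Nonresonant.mul_add_ne_zero {b r : ℝ} (hb : b ≠ 0)
    (hs : Nonresonant (r * b ^ 2 / (8 * Real.pi))) {n : ℕ} (hn : 0 < n) (j : ℕ) :
    (r * b / 4 + 2 * Real.pi * n / b) * (r * b / 4 - 2 * Real.pi * n / b) +
      (j + 1) * -(4 * Real.pi * r * n) ≠ 0 := by
  have hπ := Real.pi_ne_zero
  refine fun h => hs n (j + 1) hn j.succ_pos ?_
  field_simp at h ⊢
  push_cast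
  linear_combination h

/-! ### Formal adjoints and the ladder argument -/

section FormalAdjoint

open scoped InnerProductSpace

variable {V : Type*} [NormedAddCommGroup V] [InnerProductSpace ℂ V]

/-- `A'` is a formal adjoint of the everywhere defined, possibly unbounded operator `A` on the
not necessarily complete inner product space `V`. -/
def IsFormalAdjoint (A A' : Module.End ℂ V) : Prop :=
  ∀ v w, ⟪A v, w⟫_ℂ = ⟪v, A' w⟫_ℂ

namespace IsFormalAdjoint

variable {A A' C C' : Module.End ℂ V}

theorem symm (h : IsFormalAdjoint A A') : IsFormalAdjoint A' A := fun v w => by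
  rw [← inner_conj_symm, ← h, inner_conj_symm]

theorem add (hA : IsFormalAdjoint A A') (hC : IsFormalAdjoint C C') :
    IsFormalAdjoint (A + C) (A' + C') := fun v w => by
  simp only [LinearMap.add_apply, inner_add_left, inner_add_right, hA v w, hC v w]

theorem smul (c : ℂ) (h : IsFormalAdjoint A A') :
    IsFormalAdjoint (c • A) (starRingEnd ℂ c • A') := fun v w => by
  simp only [LinearMap.smul_apply, inner_smul_left, inner_smul_right, h v w]

theorem one : IsFormalAdjoint (1 : Module.End ℂ V) 1 := fun _ _ => rfl

theorem inner_apply_apply (h : IsFormalAdjoint A A') (v : V) :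
    ⟪v, A' (A v)⟫_ℂ = (‖A v‖ : ℂ) ^ 2 := by
  rw [← h, inner_self_eq_norm_sq_to_K]; rfl

/-- The vectors `A' ^ j p` are eigenvectors of `A' A` with eigenvalues `μ + j δ`, which would
become negative. -/
theorem eq_zero_of_ladder {N : Module.End ℂ V} (hA : IsFormalAdjoint A A')
    (hN : A * A' = A' * A + N) (hNA : Commute N A') {μ δ : ℝ} (hδ : δ < 0)
    (hμ : ∀ j : ℕ, μ + (j + 1) * δ ≠ 0) {p : V} (hNp : N p = (δ : ℂ) • p)
    (hp : A' (A p) = (μ : ℂ) • p) : p = 0 := by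
  have hsucc (j : ℕ) : (A' ^ (j + 1)) p = A' ((A' ^ j) p) := by
    rw [pow_succ', Module.End.mul_apply]
  have hNj (j : ℕ) : N ((A' ^ j) p) = (δ : ℂ) • (A' ^ j) p := by
    rw [← Module.End.mul_apply, (hNA.pow_right j).eq, Module.End.mul_apply, hNp, map_smul]
  have hladder (j : ℕ) : A ((A' ^ (j + 1)) p) = ((μ + (j + 1) * δ : ℝ) : ℂ) • (A' ^ j) p := by
    have hstep (j : ℕ) : A ((A' ^ (j + 1)) p) = A' (A ((A' ^ j) p)) + (δ : ℂ) • (A' ^ j) p := by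
      rw [hsucc, ← Module.End.mul_apply, hN, LinearMap.add_apply, hNj, Module.End.mul_apply]
    induction j with
    | zero => rw [hstep, pow_zero, Module.End.one_apply, hp, ← add_smul]; push_cast; ring_nf
    | succ j ih =>
      rw [hstep, ih, map_smul, ← hsucc, ← add_smul]; push_cast; ring_nf
  have hnorm (j : ℕ) : ‖(A' ^ (j + 1)) p‖ ^ 2 = (μ + (j + 1) * δ) * ‖(A' ^ j) p‖ ^ 2 := by
    have h := hA.symm.inner_apply_apply ((A' ^ j) p)
    rw [← hsucc, hladder, inner_smul_right, inner_self_eq_norm_sq_to_K] at h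
    refine Complex.ofReal_injective ?_
    push_cast at h ⊢
    exact h.symm
  by_contra hp0
  have hpos (j : ℕ) : 0 < ‖(A' ^ j) p‖ ^ 2 := by
    induction j with
    | zero => simpa using sq_pos_of_pos (norm_pos_iff.2 hp0)
    | succ j ih =>
      exact (sq_nonneg _).lt_of_ne (hnorm j ▸ (mul_ne_zero (hμ j) ih.ne').symm)
  obtain ⟨j, hj⟩ := exists_nat_gt (μ / -δ)
  rw [div_lt_iff₀ (neg_pos.2 hδ)] at hj
  exact (hpos (j + 1)).not_ge <|
    hnorm j ▸ mul_nonpos_of_nonpos_of_nonneg (by linarith) (hpos j).le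

theorem apply_eq_zero_of_quadratic {T : Module.End ℂ V} (hT : IsFormalAdjoint T (-T))
    (hA : IsFormalAdjoint A A') (hAT : Commute A T) {c₂ c₁ c₀ : ℝ} (hc : c₁ ≠ 0) {p : V}
    (hp : A' (A p) = (c₂ : ℂ) • T (T p) + (c₁ : ℂ) • T p + (c₀ : ℂ) • p) : T p = 0 := by
  have hre (v : V) : (⟪T v, v⟫_ℂ).re = 0 := by
    have h := congrArg Complex.re (hT v v)
    rw [LinearMap.neg_apply, inner_neg_right, neg_re, ← inner_conj_symm v, conj_re] at h
    linarith
  have hpair : (⟪T p, A' (A p)⟫_ℂ).re = 0 := by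
    rw [← hA, ← Module.End.mul_apply, hAT.eq, Module.End.mul_apply, hre]
  have hTT : (⟪T p, T (T p)⟫_ℂ).re = 0 := by rw [← inner_conj_symm, conj_re, hre]
  rw [hp] at hpair
  simp only [inner_add_right, inner_smul_right, add_re, re_ofReal_mul, hTT, hre, mul_zero, zero_add,
    add_zero, inner_self_eq_norm_sq_to_K] at hpair
  have hsq : ‖T p‖ ^ 2 = 0 := by exact_mod_cast (mul_eq_zero.1 hpair).resolve_left hc
  simpa using hsq

theorem eq_zero_of_first_order_system {N T : Module.End ℂ V} (hA : IsFormalAdjoint A A')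
    (hN : A * A' = A' * A + N) (hNA : Commute N A') (hT : IsFormalAdjoint T (-T))
    (hAT : Commute A T) (hAT' : Commute A' T) {r c d δ : ℝ} (hr : r ≠ 0) (hcd : c + d ≠ 0)
    (hc : c ≠ 0) (hδ : δ < 0) (hres : ∀ j : ℕ, c * d + (j + 1) * δ ≠ 0) {p q : V}
    (hNp : N p = (δ : ℂ) • p) (hp : A p = (r : ℂ) • T q + (c : ℂ) • q)
    (hq : A' q = (r : ℂ) • T p + (d : ℂ) • p) : p = 0 ∧ q = 0 := by
  have hcomm {C : Module.End ℂ V} (h : Commute C T) (v : V) : C (T v) = T (C v) :=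
    LinearMap.congr_fun h.eq v
  have hTp : T p = 0 := by
    refine hT.apply_eq_zero_of_quadratic hA hAT (c₂ := r ^ 2) (c₀ := c * d)
      (mul_ne_zero hr hcd) ?_
    simp only [hp, map_add, map_smul, hcomm hAT', hq]
    push_cast
    module
  have hTq : T q = 0 := by
    refine hT.apply_eq_zero_of_quadratic hA.symm hAT' (c₂ := r ^ 2) (c₀ := c * d)
      (mul_ne_zero hr hcd) ?_
    simp only [hq, map_add, map_smul, hcomm hAT, hp]
    push_cast
    module
  rw [hTq, smul_zero, zero_add] at hp
  rw [hTp, smul_zero, zero_add] at hq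
  have hp0 : p = 0 := by
    refine hA.eq_zero_of_ladder hN hNA hδ hres hNp ?_
    rw [hp, map_smul, hq, smul_smul]
    push_cast; rfl
  refine ⟨hp0, (smul_eq_zero.1 (?_ : (c : ℂ) • q = 0)).resolve_left (by exact_mod_cast hc)⟩
  rw [← hp, hp0, map_zero]

theorem eq_zero_of_nonresonant {N T : Module.End ℂ V} (hA : IsFormalAdjoint A A')
    (hN : A * A' = A' * A + N) (hNA : Commute N A') (hT : IsFormalAdjoint T (-T))
    (hAT : Commute A T) (hAT' : Commute A' T) {b r : ℝ} (hb : b ≠ 0) (hr : 0 < r)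
    (hs : Nonresonant (r * b ^ 2 / (8 * Real.pi))) {n : ℕ} (hn : 0 < n) {p q : V}
    (hNp : N p = (-(4 * Real.pi * r * n) : ℂ) • p)
    (hp : A p = (r : ℂ) • T q + (r * b / 4 + 2 * Real.pi * n / b : ℂ) • q)
    (hq : A' q = (r : ℂ) • T p + (r * b / 4 - 2 * Real.pi * n / b : ℂ) • p) : p = 0 ∧ q = 0 := by
  refine hA.eq_zero_of_first_order_system hN hNA hT hAT hAT' hr.ne' ?_ ?_ ?_
    (hs.mul_add_ne_zero hb hn) (by exact_mod_cast hNp) (by exact_mod_cast hp)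
    (by exact_mod_cast hq)
  · refine fun h => mul_ne_zero hr.ne' hb ?_
    linear_combination 2 * h
  · refine fun h => (?_ : 0 < r * b ^ 2 / 4 + 2 * Real.pi * n).ne' ?_
    · positivity
    · field_simp at h ⊢
      linear_combination h
  · rw [neg_lt_zero]
    positivity

end IsFormalAdjoint

end FormalAdjoint

/-! ### Fourier means along a vector -/

section FourierMean

open scoped ContDiff

universe u

theorem hasFDerivAt_intervalIntegral {P E : Type*} [NormedAddCommGroup P] [NormedSpace ℝ P]
    [ProperSpace P] [NormedAddCommGroup E] [NormedSpace ℝ E] {F : P × ℝ → E}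
    (hF : ContDiff ℝ 1 F) (a b : ℝ) (p : P) :
    HasFDerivAt (fun p => ∫ s in a..b, F (p, s))
      (∫ s in a..b, (fderiv ℝ F (p, s)).comp (.inl ℝ P ℝ)) p := by
  have hF' : Continuous fun x : P × ℝ => (fderiv ℝ F x).comp (.inl ℝ P ℝ) :=
    (hF.continuous_fderiv one_ne_zero).clm_comp continuous_const
  obtain ⟨C, hC⟩ := ((isCompact_closedBall p 1).prod
    (isCompact_uIcc (a := a) (b := b))).exists_bound_of_continuousOn hF'.continuousOn
  refine intervalIntegral.hasFDerivAt_integral_of_dominated_of_fderiv_le (bound := fun _ => C)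
    (F' := fun p s => (fderiv ℝ F (p, s)).comp (.inl ℝ P ℝ))
    (Metric.closedBall_mem_nhds p one_pos)
    (.of_forall fun x => (hF.continuous.comp (.prodMk_right x)).aestronglyMeasurable)
    ((hF.continuous.comp (.prodMk_right p)).intervalIntegrable _ _)
    (hF'.comp (.prodMk_right p)).aestronglyMeasurable
    (.of_forall fun s hs x hx => hC (x, s) ⟨hx, Set.uIoc_subset_uIcc hs⟩)
    intervalIntegrable_const (.of_forall fun s _ x _ => ?_)
  exact ((hF.differentiable one_ne_zero) (x, s)).hasFDerivAt.comp x (hasFDerivAt_prodMk_left x s)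

theorem contDiff_intervalIntegral {P E : Type u} [NormedAddCommGroup P] [NormedSpace ℝ P]
    [ProperSpace P] [NormedAddCommGroup E] [NormedSpace ℝ E] {F : P × ℝ → E}
    (hF : ContDiff ℝ ∞ F) (a b : ℝ) : ContDiff ℝ ∞ fun p => ∫ s in a..b, F (p, s) := by
  refine contDiff_infty.2 fun n => ?_
  induction n generalizing E with
  | zero => exact contDiff_zero.2 <| continuous_iff_continuousAt.2 fun p =>
      (hasFDerivAt_intervalIntegral (hF.of_le (by simp)) a b p).continuousAt
  | succ n ih =>
    exact contDiff_succ_iff_hasFDerivAt.2 ⟨_,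
      ih ((contDiff_infty_iff_fderiv.1 hF).2.clm_comp contDiff_const),
      hasFDerivAt_intervalIntegral (hF.of_le (by exact_mod_cast le_top)) a b⟩

variable {P : Type*} [NormedAddCommGroup P] [NormedSpace ℝ P]

/-- The `n`-th Fourier coefficient of `s ↦ h (p + s • w)` on the unit interval, as a function
of `p`. -/
def fourierMean (w : P) (n : ℤ) (h : P → ℂ) (p : P) : ℂ :=
  ∫ s in (0 : ℝ)..1, fourier (-n) (s : UnitAddCircle) * h (p + s • w)

variable {w v p : P} {n : ℤ} {h : P → ℂ}

theorem continuous_fourierMean_integrand (hh : Continuous h) (w : P) (n : ℤ) (p : P) :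
    Continuous fun s : ℝ => fourier (-n) (s : UnitAddCircle) * h (p + s • w) := by
  have := (map_continuous (fourier (T := 1) (-n))).comp (AddCircle.continuous_mk' 1)
  fun_prop

theorem fourierMean_add {g : P → ℂ} (hg : Continuous g) (hh : Continuous h) :
    fourierMean w n (g + h) = fourierMean w n g + fourierMean w n h := by
  funext p
  simp only [fourierMean, Pi.add_apply, mul_add]
  exact intervalIntegral.integral_add
    ((continuous_fourierMean_integrand hg w n p).intervalIntegrable _ _)
    ((continuous_fourierMean_integrand hh w n p).intervalIntegrable _ _)

theorem fourierMean_smul (c : ℂ) : fourierMean w n (c • h) = c • fourierMean w n h := by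
  funext p
  simp only [fourierMean, Pi.smul_apply, smul_eq_mul, mul_left_comm _ c,
    intervalIntegral.integral_const_mul]

theorem fourierMean_star : fourierMean w n (star h) = star (fourierMean w (-n) h) := by
  funext p
  simp only [fourierMean, Pi.star_apply, RCLike.star_def, ← intervalIntegral.intervalIntegral_conj,
    map_mul, fourier_neg, neg_neg]

theorem fourierMean_eq_self (hh : ∀ s : ℝ, h (p + s • w) = fourier n (s : UnitAddCircle) * h p) :
    fourierMean w n h p = h p := by
  simp only [fourierMean, hh, ← mul_assoc, ← fourier_add, neg_add_cancel, fourier_zero, one_mul,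
    intervalIntegral.integral_const, sub_zero, one_smul]

theorem fourierMean_periodic {u : P} (hh : Function.Periodic h u) :
    Function.Periodic (fourierMean w n h) u := fun p => by
  simp only [fourierMean, add_right_comm p u, hh _]

theorem periodic_comp_add_smul (hh : Function.Periodic h w) (p : P) :
    Function.Periodic (fun s : ℝ => h (p + s • w)) 1 := fun s => by
  simp only [add_smul, one_smul, ← add_assoc, hh _]

theorem fourierMean_zero_add_smul (hh : Function.Periodic h w) (c : ℝ) :
    fourierMean w 0 h (p + c • w) = fourierMean w 0 h p := by
  simp only [fourierMean, neg_zero, fourier_zero, one_mul, add_assoc, ← add_smul]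
  rw [intervalIntegral.integral_comp_add_left (fun s => h (p + s • w)), add_zero]
  simpa using (periodic_comp_add_smul hh p).intervalIntegral_add_eq c 0

theorem eq_zero_of_fourierMean_eq_zero (hh : Continuous h) (hper : Function.Periodic h w)
    (hzero : ∀ n, fourierMean w n h p = 0) (s : ℝ) : h (p + s • w) = 0 := by
  have hcont : Continuous fun s : ℝ => h (p + s • w) := hh.comp (by fun_prop)
  let F : C(UnitAddCircle, ℂ) :=
    ⟨(periodic_comp_add_smul hper p).lift, continuous_coinduced_dom.2 hcont⟩
  have hF : fourierCoeff F = 0 := by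
    funext n
    rw [fourierCoeff_eq_intervalIntegral _ n 0, one_div_one, one_smul, zero_add]
    exact hzero n
  have hsum := has_pointwise_sum_fourier_series_of_summable (f := F) (hF ▸ summable_zero)
    (s : UnitAddCircle)
  simp only [hF, Pi.zero_apply, zero_smul] at hsum
  exact hsum.unique hasSum_zero

section Positivity

open scoped ComplexOrder

theorem fourierMean_zero_eq_ofReal (hh : 0 ≤ h) :
    fourierMean w 0 h p = ((∫ s in (0 : ℝ)..1, (h (p + s • w)).re : ℝ) : ℂ) := by
  rw [← intervalIntegral.integral_ofReal]
  simp only [fourierMean, neg_zero, fourier_zero, one_mul]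
  exact intervalIntegral.integral_congr fun s _ => Complex.eq_re_of_ofReal_le (hh (p + s • w))

theorem fourierMean_zero_nonneg (hh : 0 ≤ h) : 0 ≤ fourierMean w 0 h := fun p => by
  rw [fourierMean_zero_eq_ofReal hh, Pi.zero_apply, zero_le_real]
  exact intervalIntegral.integral_nonneg zero_le_one fun s _ => (le_def.1 (hh _)).1

theorem eq_zero_of_fourierMean_zero_eq_zero (hh : Continuous h) (hper : Function.Periodic h w)
    (hnonneg : 0 ≤ h) (hzero : fourierMean w 0 h p = 0) (c : ℝ) : h (p + c • w) = 0 := by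
  have hcont : Continuous fun s : ℝ => (h (p + c • w + s • w)).re :=
    continuous_re.comp (hh.comp (by fun_prop))
  have hre (q : P) : 0 ≤ (h q).re := (le_def.1 (hnonneg q)).1
  rw [← fourierMean_zero_add_smul hper c, fourierMean_zero_eq_ofReal hnonneg,
    ofReal_eq_zero] at hzero
  by_contra hp
  refine (intervalIntegral.integral_pos zero_lt_one hcont.continuousOn (fun s _ => hre _)
    ⟨0, by simp, (hre _).lt_of_ne' fun h0 => hp ?_⟩).ne' hzero
  rw [zero_smul, add_zero] at h0
  rw [eq_re_of_ofReal_le (hnonneg (p + c • w)), h0, ofReal_zero]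

end Positivity

theorem contDiff_fourierMean_integrand (hh : ContDiff ℝ ∞ h) (w : P) (n : ℤ) :
    ContDiff ℝ ∞ fun x : P × ℝ => fourier (-n) (x.2 : UnitAddCircle) * h (x.1 + x.2 • w) := by
  have hofReal : ContDiff ℝ ∞ fun x : P × ℝ => (x.2 : ℂ) := ofRealCLM.contDiff.comp contDiff_snd
  simp only [fourier_coe_apply]
  fun_prop

variable [ProperSpace P]

theorem contDiff_fourierMean {P : Type} [NormedAddCommGroup P] [NormedSpace ℝ P] [ProperSpace P]
    {w : P} {h : P → ℂ} (hh : ContDiff ℝ ∞ h) : ContDiff ℝ ∞ (fourierMean w n h) :=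
  contDiff_intervalIntegral (contDiff_fourierMean_integrand hh w n) 0 1

theorem fourierMean_fderiv (hh : ContDiff ℝ ∞ h) (v : P) :
    fourierMean w n (fun p => fderiv ℝ h p v) = fun p => fderiv ℝ (fourierMean w n h) p v := by
  funext p
  have hF := contDiff_fourierMean_integrand hh w n
  have hF' : Continuous fun s : ℝ => (fderiv ℝ (fun x : P × ℝ =>
      fourier (-n) (x.2 : UnitAddCircle) * h (x.1 + x.2 • w)) (p, s)).comp (.inl ℝ P ℝ) :=
    ((hF.continuous_fderiv (by simp)).comp (.prodMk_right p)).clm_comp continuous_const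
  rw [fourierMean, show fderiv ℝ (fourierMean w n h) p = _ from
    (hasFDerivAt_intervalIntegral (hF.of_le (by simp)) 0 1 p).fderiv,
    ContinuousLinearMap.intervalIntegral_apply (hF'.intervalIntegrable 0 1)]
  refine intervalIntegral.integral_congr fun s _ => ?_
  have hs : HasFDerivAt (fun q => fourier (-n) (s : UnitAddCircle) * h (q + s • w)) _ p :=
    (((hh.differentiable (by simp)) (p + s • w)).hasFDerivAt.comp p
      ((hasFDerivAt_id p).add_const (s • w))).const_mul (fourier (-n) (s : UnitAddCircle))
  have hs' := ((hF.differentiable (by simp)) (p, s)).hasFDerivAt.comp (𝕜 := ℝ) p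
    (hasFDerivAt_prodMk_left p s)
  exact DFunLike.congr_fun (hs.unique hs') v

theorem fderiv_fourierMean_of_eigenfunction (hh : ContDiff ℝ ∞ h) {c : ℂ}
    (hc : ∀ p, fderiv ℝ h p v = c * h p) (p : P) :
    fderiv ℝ (fourierMean w n h) p v = c * fourierMean w n h p := by
  rw [← congrFun (fourierMean_fderiv hh v) p, funext hc]
  exact congrFun (fourierMean_smul c) p

theorem fderiv_fourierMean_self (hh : ContDiff ℝ ∞ h) (hper : Function.Periodic h w)
    (p : P) : fderiv ℝ (fourierMean w n h) p w = 2 * Real.pi * I * n * fourierMean w n h p := by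
  have hline (s : ℝ) : HasDerivAt (fun s : ℝ => h (p + s • w)) (fderiv ℝ h (p + s • w) w) s := by
    have := ((hasDerivAt_id s).smul_const w).const_add p
    rw [one_smul] at this
    exact ((hh.differentiable (by simp)) _).hasFDerivAt.comp_hasDerivAt s this
  have hderiv : Continuous fun q => fderiv ℝ h q w :=
    (hh.continuous_fderiv (by simp)).clm_apply continuous_const
  have hchar : Continuous fun s : ℝ => fourier (-n) (s : UnitAddCircle) :=
    (map_continuous (fourier (-n))).comp (AddCircle.continuous_mk' 1)
  have hparts := intervalIntegral.integral_mul_deriv_eq_deriv_mul (a := 0) (b := 1)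
    (fun s _ => hasDerivAt_fourier_neg 1 n s) (fun s _ => hline s)
    ((continuous_const.mul hchar).intervalIntegrable _ _)
    ((hderiv.comp (by fun_prop)).intervalIntegrable _ _)
  rw [← congrFun (fourierMean_fderiv hh w) p, fourierMean, hparts]
  simp only [AddCircle.coe_period, QuotientAddGroup.mk_zero, one_smul, zero_smul, add_zero, hper p,
    sub_self, zero_sub, ofReal_one, div_one]
  simp only [mul_assoc, intervalIntegral.integral_const_mul, neg_mul,
    intervalIntegral.integral_neg, neg_neg, fourierMean]

end FourierMean

/-! ### Smooth functions on the Kodaira–Thurston manifold -/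

section Functions

open scoped ContDiff

/-- The universal cover `ℝ⁴` of `KT⁴`, with coordinates `(t, x, y, z)`. -/
abbrev R4 : Type := ℝ × ℝ × ℝ × ℝ

/-- The coordinate vector `∂/∂t`. -/
def eT : R4 := (1, 0, 0, 0)

/-- The coordinate vector `∂/∂x`. -/
def eX : R4 := (0, 1, 0, 0)

/-- The coordinate vector `∂/∂y`. -/
def eY : R4 := (0, 0, 1, 0)

/-- The coordinate vector `∂/∂z`. -/
def eZ : R4 := (0, 0, 0, 1)

theorem eq_sum_coordinates (v : R4) :
    v = v.1 • eT + v.2.1 • eX + v.2.2.1 • eY + v.2.2.2 • eZ := by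
  simp [eT, eX, eY, eZ]

/-- The identification of functions on `ℝ⁴` with the functions of four real arguments. -/
def curry4 : (R4 → ℂ) ≃ₗ[ℂ] F4 where
  toFun f t x y z := f (t, x, y, z)
  invFun f p := f p.1 p.2.1 p.2.2.1 p.2.2.2
  map_add' _ _ := rfl
  map_smul' _ _ := rfl
  left_inv _ := rfl
  right_inv _ := rfl

theorem curry4_apply (f : R4 → ℂ) (t x y z : ℝ) : curry4 f t x y z = f (t, x, y, z) := rfl

theorem ktPeriodic_map₂ {f g : F4} (hf : KTPeriodic f) (hg : KTPeriodic g) (F : ℂ → ℂ → ℂ) :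
    KTPeriodic fun t x y z => F (f t x y z) (g t x y z) := fun t x y z => by
  simp only [hf t x y z, hg t x y z, and_self]

/-- The star algebra of smooth complex functions on `KT⁴`, as functions on `ℝ⁴`. -/
def smoothAlgebra : StarSubalgebra ℂ (R4 → ℂ) where
  carrier := {f | ContDiff ℝ ∞ f ∧ KTPeriodic (curry4 f)}
  mul_mem' hf hg := ⟨hf.1.mul hg.1, ktPeriodic_map₂ hf.2 hg.2 (· * ·)⟩
  add_mem' hf hg := ⟨hf.1.add hg.1, ktPeriodic_map₂ hf.2 hg.2 (· + ·)⟩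
  algebraMap_mem' _ := ⟨contDiff_const, fun _ _ _ _ => ⟨rfl, rfl, rfl, rfl⟩⟩
  star_mem' hf := ⟨conjCLE.contDiff.comp hf.1, ktPeriodic_map₂ hf.2 hf.2 fun a _ => star a⟩

/-- Smooth complex functions on `KT⁴`. -/
abbrev KTSmooth : Type := smoothAlgebra

instance : CoeFun KTSmooth fun _ => R4 → ℂ := ⟨Subtype.val⟩

namespace KTSmooth

variable (f : KTSmooth) (p : R4)

theorem contDiff : ContDiff ℝ ∞ f := f.2.1

theorem differentiable : Differentiable ℝ f := f.contDiff.differentiable (by simp)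

theorem periodic_eT : Function.Periodic f eT := fun ⟨t, x, y, z⟩ => by
  simpa [eT, curry4_apply] using (f.2.2 t x y z).1

theorem periodic_eY : Function.Periodic f eY := fun ⟨t, x, y, z⟩ => by
  simpa [eY, curry4_apply] using (f.2.2 t x y z).2.2.1

theorem periodic_eZ : Function.Periodic f eZ := fun ⟨t, x, y, z⟩ => by
  simpa [eZ, curry4_apply] using (f.2.2 t x y z).2.2.2

theorem apply_add_eX_add : f (p + eX + p.2.2.1 • eZ) = f p := by
  obtain ⟨t, x, y, z⟩ := p
  simpa [eX, eZ, curry4_apply] using (f.2.2 t x y z).2.1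

theorem mem_of_periodic {h : R4 → ℂ} (hh : ContDiff ℝ ∞ h) (hT : Function.Periodic h eT)
    (hX : ∀ p, h (p + eX + p.2.2.1 • eZ) = h p) (hY : Function.Periodic h eY)
    (hZ : Function.Periodic h eZ) : h ∈ smoothAlgebra := by
  refine ⟨hh, fun t x y z => ⟨?_, ?_, ?_, ?_⟩⟩
  · simpa [eT, curry4_apply] using hT (t, x, y, z)
  · simpa [eX, eZ, curry4_apply] using hX (t, x, y, z)
  · simpa [eY, curry4_apply] using hY (t, x, y, z)
  · simpa [eZ, curry4_apply] using hZ (t, x, y, z)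

end KTSmooth

/-! ### Invariant vector fields -/

/-- The value at `p` of the invariant vector field with components `v` in the frame
`∂/∂t, ∂/∂x, ∂/∂y + x ∂/∂z, ∂/∂z` of `KT⁴`. -/
def frame (v p : R4) : R4 := v + (p.2.1 * v.2.2.1) • eZ

theorem frame_eZ (p : R4) : frame eZ p = eZ := by simp [frame, eZ]

theorem frame_fst_snd (v p : R4) : (frame v p).2.1 = v.2.1 := by simp [frame, eZ]

theorem hasFDerivAt_frame (v p : R4) :
    HasFDerivAt (frame v) ((((ContinuousLinearMap.fst ℝ ℝ (ℝ × ℝ)).comp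
      (.snd ℝ ℝ (ℝ × ℝ × ℝ))).smulRight (v.2.2.1 • eZ))) p := by
  have hx : HasFDerivAt (fun p : R4 => p.2.1) _ p :=
    ((ContinuousLinearMap.fst ℝ ℝ (ℝ × ℝ)).comp (.snd ℝ ℝ (ℝ × ℝ × ℝ))).hasFDerivAt
  have hsmul := (hx.smul_const (v.2.2.1 • eZ)).const_add v
  simp only [← mul_smul] at hsmul
  exact hsmul

theorem contDiff_frame (v : R4) : ContDiff ℝ ∞ (frame v) := by
  unfold frame
  fun_prop

namespace KTSmooth

variable {f : KTSmooth} {v : R4}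

theorem fderiv_apply_frame_of_invariant {L : R4 → R4} {L' : R4 →L[ℝ] R4} {p : R4}
    (hL : HasFDerivAt L L' p) (hf : ∀ q, f (L q) = f q)
    (hframe : frame v (L p) = L' (frame v p)) :
    fderiv ℝ f (L p) (frame v (L p)) = fderiv ℝ f p (frame v p) := by
  have hcomp := (f.differentiable (L p)).hasFDerivAt.comp p hL
  rw [show f ∘ L = f from funext hf] at hcomp
  rw [hcomp.fderiv, hframe, ContinuousLinearMap.comp_apply]

theorem fderiv_frame_mem (f : KTSmooth) (v : R4) :
    (fun p => fderiv ℝ f p (frame v p)) ∈ smoothAlgebra := by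
  have htranslate (w : R4) (hw : w.2.1 = 0) (hf : Function.Periodic f w) :
      Function.Periodic (fun p => fderiv ℝ f p (frame v p)) w := fun p =>
    fderiv_apply_frame_of_invariant ((hasFDerivAt_id p).add_const w) hf (by simp [frame, hw])
  refine mem_of_periodic ?_ (htranslate eT rfl f.periodic_eT) (fun p => ?_)
    (htranslate eY rfl f.periodic_eY) (htranslate eZ rfl f.periodic_eZ)
  · exact (contDiff_infty_iff_fderiv.1 f.contDiff).2.clm_apply (contDiff_frame v)
  · have hy : HasFDerivAt (fun p : R4 => p.2.2.1) _ p :=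
      ((ContinuousLinearMap.fst ℝ ℝ ℝ).comp ((ContinuousLinearMap.snd ℝ ℝ (ℝ × ℝ)).comp
        (.snd ℝ ℝ (ℝ × ℝ × ℝ)))).hasFDerivAt
    refine fderiv_apply_frame_of_invariant
      (((hasFDerivAt_id p).add_const eX).add (hy.smul_const eZ)) f.apply_add_eX_add ?_
    simp only [frame, eX, eZ]
    ext <;> simp [add_mul, add_assoc]

/-- The derivation of smooth functions on `KT⁴` along the invariant vector field `frame v`. -/
def lieD (v : R4) : Module.End ℂ KTSmooth where
  toFun f := ⟨fun p => fderiv ℝ f p (frame v p), f.fderiv_frame_mem v⟩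
  map_add' f g := Subtype.ext <| funext fun p => by
    simp [fderiv_add (f.differentiable p) (g.differentiable p)]
  map_smul' c f := Subtype.ext <| funext fun p => by
    simp [fderiv_const_smul (f.differentiable p) c]

theorem lieD_apply (v : R4) (f : KTSmooth) (p : R4) :
    (lieD v f : R4 → ℂ) p = fderiv ℝ f p (frame v p) := rfl

theorem lieD_mul_lieD (v w : R4) : lieD v * lieD w =
    lieD w * lieD v + ((v.2.1 * w.2.2.1 - w.2.1 * v.2.2.1 : ℝ) : ℂ) • lieD eZ := by
  refine LinearMap.ext fun f => Subtype.ext <| funext fun p => ?_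
  have hsecond (v w : R4) : (lieD v (lieD w f) : R4 → ℂ) p =
      fderiv ℝ (fderiv ℝ f) p (frame v p) (frame w p) + (v.2.1 * w.2.2.1 : ℝ) * lieD eZ f p := by
    have hf' : DifferentiableAt ℝ (fderiv ℝ f) p :=
      ((contDiff_infty_iff_fderiv.1 f.contDiff).2.differentiable (by simp)) p
    rw [lieD_apply v]
    change fderiv ℝ (fun p => fderiv ℝ f p (frame w p)) p _ = _
    rw [(hf'.hasFDerivAt.clm_apply (hasFDerivAt_frame w p)).fderiv]
    simp only [add_apply, ContinuousLinearMap.flip_apply,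
      ContinuousLinearMap.comp_apply, ContinuousLinearMap.smulRight_apply, frame_fst_snd, map_smul,
      ContinuousLinearMap.coe_snd', ContinuousLinearMap.coe_fst', lieD_apply, frame_eZ, smul_smul,
      real_smul]
    rw [add_comm]
  have hsymm : fderiv ℝ (fderiv ℝ f) p (frame v p) (frame w p) =
      fderiv ℝ (fderiv ℝ f) p (frame w p) (frame v p) :=
    (f.contDiff.contDiffAt.isSymmSndFDerivAt (by simpa using ENat.LEInfty.out)).eq _ _
  simp only [Module.End.mul_apply, LinearMap.add_apply, LinearMap.smul_apply]
  change (lieD v (lieD w f) : R4 → ℂ) p = lieD w (lieD v f) p + _ * lieD eZ f p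
  rw [hsecond, hsecond, hsymm]
  push_cast
  ring

theorem lieD_star_mul (f g : KTSmooth) :
    lieD v (star f * g) = star (lieD v f) * g + star f * lieD v g := by
  refine Subtype.ext <| funext fun p => ?_
  change fderiv ℝ (fun q => star (f q) * g q) p (frame v p) = star (fderiv ℝ f p (frame v p)) * g p
    + star (f p) * fderiv ℝ g p (frame v p)
  rw [fderiv_fun_mul (f.differentiable p).star (g.differentiable p), fderiv_star]
  exact (add_comm _ _).trans (congrArg (· + _) (mul_comm _ _))

end KTSmooth

end Functions

/-! ### Fourier decomposition of smooth functions on the manifold -/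

section FourierDecomposition

open scoped ContDiff

namespace KTSmooth

variable {f g : KTSmooth} {v : R4}

theorem fourierMean_eZ_mem (n : ℤ) (f : KTSmooth) : fourierMean eZ n f ∈ smoothAlgebra := by
  refine mem_of_periodic (contDiff_fourierMean f.contDiff) (fourierMean_periodic f.periodic_eT)
    (fun p => ?_) (fourierMean_periodic f.periodic_eY) (fourierMean_periodic f.periodic_eZ)
  have hX (s : ℝ) : f (p + eX + p.2.2.1 • eZ + s • eZ) = f (p + s • eZ) := by
    rw [← f.apply_add_eX_add (p + s • eZ)]
    refine congrArg f ?_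
    simp only [eZ, eX]
    ext <;> simp [add_assoc, add_comm s]
  simp only [fourierMean, hX]

/-- The projection of functions on `KT⁴` onto the frequency `n` in the central direction. -/
def fourierZ (n : ℤ) : Module.End ℂ KTSmooth where
  toFun f := ⟨fourierMean eZ n f, fourierMean_eZ_mem n f⟩
  map_add' f g := Subtype.ext (fourierMean_add f.contDiff.continuous g.contDiff.continuous)
  map_smul' c _ := Subtype.ext (fourierMean_smul c)

theorem coe_fourierZ (n : ℤ) (f : KTSmooth) : ⇑(fourierZ n f) = fourierMean eZ n f := rfl

theorem fourierZ_lieD (n : ℤ) (v : R4) (f : KTSmooth) :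
    fourierZ n (lieD v f) = lieD v (fourierZ n f) := by
  refine Subtype.ext <| funext fun p => ?_
  have hframe (s : ℝ) : frame v (p + s • eZ) = frame v p := by simp [frame, eZ]
  rw [lieD_apply, coe_fourierZ, coe_fourierZ, ← congrFun (fourierMean_fderiv f.contDiff _) p]
  simp only [fourierMean, lieD_apply, hframe]

theorem lieD_eZ_fourierZ (n : ℤ) (f : KTSmooth) :
    lieD eZ (fourierZ n f) = (2 * Real.pi * I * n : ℂ) • fourierZ n f :=
  Subtype.ext <| funext fun p => by
    rw [lieD_apply, frame_eZ]
    exact fderiv_fourierMean_self f.contDiff f.periodic_eZ p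

theorem periodic_eX_fourierZ_zero (f : KTSmooth) :
    Function.Periodic (fourierZ 0 f) eX := fun p => by
  rw [← (fourierZ 0 f).apply_add_eX_add p]
  exact (fourierMean_zero_add_smul f.periodic_eZ _).symm

theorem contDiff_fourierMean_fourierZ (f : KTSmooth) (κ : ℤ × ℤ × ℤ) :
    ContDiff ℝ ∞ (fourierMean eX κ.2.1 (fourierMean eY κ.2.2 (fourierZ 0 f))) :=
  contDiff_fourierMean (contDiff_fourierMean (fourierZ 0 f).contDiff)

/-- The Fourier coefficient of `f` at the frequencies `κ` in the directions `t, x, y` and `0` in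
the central direction. -/
def coef (κ : ℤ × ℤ × ℤ) : KTSmooth →ₗ[ℂ] ℂ where
  toFun f := fourierMean eT κ.1 (fourierMean eX κ.2.1 (fourierMean eY κ.2.2 (fourierZ 0 f))) 0
  map_add' f g := by
    have hc := fun f : KTSmooth => (fourierZ 0 f).contDiff
    rw [map_add]
    change fourierMean _ _ (fourierMean _ _ (fourierMean _ _
      (⇑(fourierZ 0 f) + ⇑(fourierZ 0 g)))) 0 = _
    rw [fourierMean_add (hc f).continuous (hc g).continuous,
      fourierMean_add (contDiff_fourierMean (hc f)).continuous
        (contDiff_fourierMean (hc g)).continuous,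
      fourierMean_add (f.contDiff_fourierMean_fourierZ κ).continuous
        (g.contDiff_fourierMean_fourierZ κ).continuous, Pi.add_apply]
  map_smul' c f := by
    rw [map_smul]
    change fourierMean _ _ (fourierMean _ _ (fourierMean _ _ (c • ⇑(fourierZ 0 f)))) 0 = _
    rw [fourierMean_smul, fourierMean_smul, fourierMean_smul]
    rfl

theorem coef_apply (κ : ℤ × ℤ × ℤ) (f : KTSmooth) : coef κ f =
    fourierMean eT κ.1 (fourierMean eX κ.2.1 (fourierMean eY κ.2.2 (fourierZ 0 f))) 0 := rfl

/-- The phase of the character of `KT⁴` with frequencies `κ` in the directions `t, x, y`. -/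
def phase (κ : ℤ × ℤ × ℤ) : R4 →L[ℝ] ℝ :=
  (κ.1 : ℝ) • .fst ℝ ℝ (ℝ × ℝ × ℝ) +
    ((κ.2.1 : ℝ) • .fst ℝ ℝ (ℝ × ℝ) + (κ.2.2 : ℝ) • (.fst ℝ ℝ ℝ ∘L .snd ℝ ℝ (ℝ × ℝ))) ∘L
      .snd ℝ ℝ (ℝ × ℝ × ℝ)

theorem phase_apply (κ : ℤ × ℤ × ℤ) (p : R4) :
    phase κ p = κ.1 * p.1 + (κ.2.1 * p.2.1 + κ.2.2 * p.2.2.1) := rfl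

theorem coef_lieD (κ : ℤ × ℤ × ℤ) (v : R4) (f : KTSmooth) :
    coef κ (lieD v f) = 2 * Real.pi * I * phase κ v * coef κ f := by
  set g := fourierZ 0 f with hg
  have hZ (p : R4) : fderiv ℝ g p eZ = 0 * g p := by
    have := congrFun (congrArg Subtype.val (lieD_eZ_fourierZ 0 f)) p
    rw [lieD_apply, frame_eZ] at this
    simpa using this
  have hD : ⇑(lieD v g) = fun p => fderiv ℝ g p v := funext fun p => by
    rw [lieD_apply, frame, map_add, map_smul, hZ, zero_mul, smul_zero, add_zero]
  have hcY := contDiff_fourierMean (w := eY) (n := κ.2.2) g.contDiff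
  have hcX := contDiff_fourierMean (w := eX) (n := κ.2.1) hcY
  have hpX := fourierMean_periodic (w := eY) (n := κ.2.2) f.periodic_eX_fourierZ_zero
  have hpT := fourierMean_periodic (w := eX) (n := κ.2.1)
    (fourierMean_periodic (w := eY) (n := κ.2.2) g.periodic_eT)
  have hY := fderiv_fourierMean_self (n := κ.2.2) g.contDiff g.periodic_eY
  rw [coef_apply, fourierZ_lieD, hD, fourierMean_fderiv g.contDiff, fourierMean_fderiv hcY,
    fourierMean_fderiv hcX]
  dsimp only
  conv_lhs => rw [eq_sum_coordinates v]
  simp only [map_add, map_smul, fderiv_fourierMean_self hcX hpT,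
    fderiv_fourierMean_of_eigenfunction hcX (fderiv_fourierMean_self hcY hpX),
    fderiv_fourierMean_of_eigenfunction hcX (fderiv_fourierMean_of_eigenfunction hcY hY),
    fderiv_fourierMean_of_eigenfunction hcX (fderiv_fourierMean_of_eigenfunction hcY
      (fderiv_fourierMean_of_eigenfunction g.contDiff hZ))]
  simp only [coef_apply, phase_apply, ← hg, real_smul]
  push_cast
  ring

theorem fourierZ_zero_eq_zero_of_coef (hf : ∀ κ, coef κ f = 0) : fourierZ 0 f = 0 := by
  have hc := (fourierZ 0 f).contDiff
  have hX (l m : ℤ) (t : ℝ) : fourierMean eX l (fourierMean eY m (fourierZ 0 f)) (0 + t • eT) = 0 :=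
    eq_zero_of_fourierMean_eq_zero (f.contDiff_fourierMean_fourierZ (0, l, m)).continuous
      (fourierMean_periodic (fourierMean_periodic (fourierZ 0 f).periodic_eT))
      (fun k => hf (k, l, m)) t
  have hY (m : ℤ) (t x : ℝ) : fourierMean eY m (fourierZ 0 f) (0 + t • eT + x • eX) = 0 :=
    eq_zero_of_fourierMean_eq_zero (contDiff_fourierMean hc).continuous
      (fourierMean_periodic f.periodic_eX_fourierZ_zero) (fun l => hX l m t) x
  refine Subtype.ext <| funext fun p => ?_
  rw [eq_sum_coordinates p, ← zero_add (p.1 • eT)]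
  exact (fourierMean_zero_add_smul f.periodic_eZ _).trans <| eq_zero_of_fourierMean_eq_zero
    hc.continuous (fourierZ 0 f).periodic_eY (fun m => hY m _ _) _

theorem eq_zero_of_fourierZ_of_coef (hf : ∀ n ≠ 0, fourierZ n f = 0) (hf' : ∀ κ, coef κ f = 0) :
    f = 0 := by
  refine Subtype.ext <| funext fun p => ?_
  rw [← add_zero p, ← zero_smul ℝ eZ]
  refine eq_zero_of_fourierMean_eq_zero f.contDiff.continuous f.periodic_eZ (fun n => ?_) 0
  rcases eq_or_ne n 0 with rfl | hn
  · exact congrFun (congrArg Subtype.val (fourierZ_zero_eq_zero_of_coef hf')) p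
  · exact congrFun (congrArg Subtype.val (hf n hn)) p

theorem phase_frame (κ : ℤ × ℤ × ℤ) (v p : R4) : phase κ (frame v p) = phase κ v := by
  simp [frame, phase_apply, eZ]

theorem exp_phase_add_smul (κ : ℤ × ℤ × ℤ) {w : R4} {n : ℤ} (hn : phase κ w = n) (p : R4) (s : ℝ) :
    exp (2 * Real.pi * I * phase κ (p + s • w)) =
      fourier n (s : UnitAddCircle) * exp (2 * Real.pi * I * phase κ p) := by
  rw [fourier_coe_apply, ← exp_add, map_add, map_smul, hn, smul_eq_mul]
  push_cast
  ring_nf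

/-- The character of `KT⁴` with frequencies `κ` in the directions `t, x, y`. -/
def char (κ : ℤ × ℤ × ℤ) : KTSmooth :=
  ⟨fun p => exp (2 * Real.pi * I * phase κ p), by
    have hperiodic {w : R4} {n : ℤ} (hn : phase κ w = n) :
        Function.Periodic (fun p => exp (2 * Real.pi * I * phase κ p)) w := fun p => by
      simpa only [one_smul, AddCircle.coe_period, QuotientAddGroup.mk_zero, fourier_eval_zero,
        one_mul] using exp_phase_add_smul κ hn p 1
    refine mem_of_periodic ?_ (hperiodic (n := κ.1) (by simp [phase_apply, eT])) (fun p => ?_)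
      (hperiodic (n := κ.2.2) (by simp [phase_apply, eY]))
      (hperiodic (n := 0) (by simp [phase_apply, eZ]))
    · exact (contDiff_const.mul (ofRealCLM.contDiff.comp (phase κ).contDiff)).cexp
    · rw [exp_phase_add_smul κ (n := 0) (by simp [phase_apply, eZ]), fourier_zero, one_mul]
      exact hperiodic (n := κ.2.1) (by simp [phase_apply, eX]) p⟩

theorem lieD_char (v : R4) (κ : ℤ × ℤ × ℤ) :
    lieD v (char κ) = (2 * Real.pi * I * phase κ v : ℂ) • char κ :=
  Subtype.ext <| funext fun p => by
    have hexp := ((ofRealCLM.hasFDerivAt.comp p (phase κ).hasFDerivAt).const_mul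
      (2 * Real.pi * I : ℂ)).cexp
    rw [lieD_apply]
    refine (congrFun (congrArg _ hexp.fderiv) _).trans ?_
    change _ * (_ * (phase κ (frame v p) : ℂ)) = _
    rw [phase_frame]
    exact mul_comm _ _

theorem coef_char_self (κ : ℤ × ℤ × ℤ) : coef κ (char κ) = 1 := by
  have hmean {w : R4} {n : ℤ} (hn : phase κ w = n) :
      fourierMean w n (char κ) = char κ := funext fun p =>
    fourierMean_eq_self fun s => exp_phase_add_smul κ hn p s
  rw [coef_apply, coe_fourierZ, hmean (by simp [phase_apply, eZ]),
    hmean (by simp [phase_apply, eY]), hmean (by simp [phase_apply, eX]),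
    hmean (by simp [phase_apply, eT])]
  simp [char]

theorem coef_char_of_ne {κ κ' : ℤ × ℤ × ℤ} (h : κ ≠ κ') : coef κ (char κ') = 0 := by
  by_contra hcoef
  have hphase (v : R4) : phase κ v = phase κ' v := by
    have hv := coef_lieD κ v (char κ')
    rw [lieD_char, map_smul, smul_eq_mul] at hv
    have := mul_right_cancel₀ hcoef hv
    simpa [two_pi_I_ne_zero] using this.symm
  have hT := hphase eT
  have hX := hphase eX
  have hY := hphase eY
  simp only [phase_apply, eT, eX, eY, mul_one, mul_zero, add_zero, zero_add,
    Int.cast_inj] at hT hX hY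
  exact h (Prod.ext hT (Prod.ext hX hY))

/-! ### The inner product -/

theorem coef_zero_star (f : KTSmooth) : coef 0 (star f) = star (coef 0 f) := by
  have hstar : ⇑(fourierZ 0 (star f)) = star ⇑(fourierZ 0 f) := by
    rw [coe_fourierZ]
    exact (fourierMean_star (h := f)).trans (by rw [neg_zero]; rfl)
  simp only [coef_apply, hstar, Prod.fst_zero, Prod.snd_zero, fourierMean_star, neg_zero,
    Pi.star_apply]

section

open scoped ComplexOrder

theorem coef_zero_star_mul_self_nonneg (f : KTSmooth) : 0 ≤ coef 0 (star f * f) :=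
  fourierMean_zero_nonneg (fourierMean_zero_nonneg (fourierMean_zero_nonneg
    (fourierMean_zero_nonneg fun p => star_mul_self_nonneg (f p)))) 0

theorem eq_zero_of_coef_zero_star_mul_self (hf : coef 0 (star f * f) = 0) : f = 0 := by
  set h := star f * f
  have hnn : 0 ≤ ⇑h := fun p => star_mul_self_nonneg (f p)
  have hZ : 0 ≤ ⇑(fourierZ 0 h) := fourierMean_zero_nonneg hnn
  have hY := fourierMean_zero_nonneg (w := eY) hZ
  have hX := fourierMean_zero_nonneg (w := eX) hY
  have hc := (fourierZ 0 h).contDiff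
  have hX0 (t : ℝ) : fourierMean eX 0 (fourierMean eY 0 (fourierZ 0 h)) (0 + t • eT) = 0 :=
    eq_zero_of_fourierMean_zero_eq_zero (h.contDiff_fourierMean_fourierZ 0).continuous
      (fourierMean_periodic (fourierMean_periodic (fourierZ 0 h).periodic_eT)) hX hf t
  have hY0 (t x : ℝ) : fourierMean eY 0 (fourierZ 0 h) (0 + t • eT + x • eX) = 0 :=
    eq_zero_of_fourierMean_zero_eq_zero (contDiff_fourierMean hc).continuous
      (fourierMean_periodic h.periodic_eX_fourierZ_zero) hY (hX0 t) x
  have hZ0 (t x y : ℝ) : fourierMean eZ 0 h (0 + t • eT + x • eX + y • eY) = 0 :=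
    eq_zero_of_fourierMean_zero_eq_zero hc.continuous (fourierZ 0 h).periodic_eY hZ (hY0 t x) y
  refine Subtype.ext <| funext fun p => ?_
  have hp := eq_zero_of_fourierMean_zero_eq_zero h.contDiff.continuous h.periodic_eZ hnn
    (hZ0 p.1 p.2.1 p.2.2.1) p.2.2.2
  rw [zero_add, ← eq_sum_coordinates] at hp
  exact (CStarRing.star_mul_self_eq_zero_iff _).1 hp

/-- The `L²` inner product on `KT⁴`; its topology is not that of pointwise convergence. -/
instance : InnerProductSpace.Core ℂ KTSmooth where
  inner f g := coef 0 (star f * g)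
  conj_inner_symm f g := by
    rw [← RCLike.star_def, ← coef_zero_star, star_mul, star_star]
  re_inner_nonneg f := (le_def.1 (coef_zero_star_mul_self_nonneg f)).1
  add_left f g h := by rw [star_add, add_mul, map_add]
  smul_left f g c := by rw [star_smul, smul_mul_assoc, map_smul, smul_eq_mul, RCLike.star_def]
  definite _ := eq_zero_of_coef_zero_star_mul_self

end

instance : NormedAddCommGroup KTSmooth := InnerProductSpace.Core.toNormedAddCommGroup (𝕜 := ℂ)

instance : InnerProductSpace ℂ KTSmooth := .ofCore _

theorem isFormalAdjoint_lieD (v : R4) : IsFormalAdjoint (lieD v) (-lieD v) := fun f g => by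
  have h := coef_lieD 0 v (star f * g)
  have hphase : phase 0 v = 0 := by simp [phase_apply]
  rw [lieD_star_mul, map_add, hphase, ofReal_zero, mul_zero, zero_mul] at h
  exact (eq_neg_of_add_eq_zero_left h).trans <|
    (map_neg (coef 0) _).symm.trans (congrArg (coef 0) (mul_neg (star f) (lieD v g)).symm)

end KTSmooth

end FourierDecomposition

/-! ### The first-order system -/

section System

namespace KTSmooth

/-- The vector field `V₁` acting on smooth functions on `KT⁴`. -/
def opV₁ : Module.End ℂ KTSmooth := (1 / 2 : ℂ) • (lieD eT - I • lieD eX)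

/-- The vector field `V̄₁` acting on smooth functions on `KT⁴`. -/
def opV₁c : Module.End ℂ KTSmooth := (1 / 2 : ℂ) • (lieD eT + I • lieD eX)

/-- The vector field `V₂` acting on smooth functions on `KT⁴`. -/
def opV₂ (a b : ℝ) : Module.End ℂ KTSmooth :=
  (1 / 2 : ℂ) • (lieD eY - ((a - I) / b : ℂ) • lieD eZ)

/-- The vector field `V̄₂` acting on smooth functions on `KT⁴`. -/
def opV₂c (a b : ℝ) : Module.End ℂ KTSmooth :=
  (1 / 2 : ℂ) • (lieD eY - ((a + I) / b : ℂ) • lieD eZ)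

/-- The space `𝒮_ρ(a,b)` inside the pairs of smooth functions on `KT⁴`. -/
def solutions (a b ρ : ℝ) : Submodule ℂ (KTSmooth × KTSmooth) :=
  LinearMap.ker ((-opV₂c a b).coprod (opV₁c + (b / 4 : ℂ) • 1)) ⊓
    LinearMap.ker (((ρ : ℂ) • opV₁).coprod (opV₂ a b))

variable {a b : ℝ} {f g : KTSmooth}

theorem mem_solutions {ρ : ℝ} : (f, g) ∈ solutions a b ρ ↔
    -opV₂c a b f + (opV₁c g + (b / 4 : ℂ) • g) = 0 ∧ (ρ : ℂ) • opV₁ f + opV₂ a b g = 0 :=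
  Iff.rfl

/-- The operator that the system with parameter `ρ = r²` applies to the unknown `r f + g`. -/
def ladder (a b r : ℝ) : Module.End ℂ KTSmooth :=
  (I * r) • lieD eX + (r * b / 4 : ℂ) • 1 - (lieD eY - (a / b : ℂ) • lieD eZ)

/-- The formal adjoint of `ladder a b r`; the system with parameter `ρ = r²` applies it to the
unknown `r f - g`. -/
def ladderAdjoint (a b r : ℝ) : Module.End ℂ KTSmooth :=
  (I * r) • lieD eX + (r * b / 4 : ℂ) • 1 + (lieD eY - (a / b : ℂ) • lieD eZ)

theorem ladder_apply_of_mem_solutions {r : ℝ} (h : (f, g) ∈ solutions a b (r ^ 2)) :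
    ladder a b r ((r : ℂ) • f + g) = (r : ℂ) • lieD eT ((r : ℂ) • f - g) +
      (r * b / 4 : ℂ) • ((r : ℂ) • f - g) - (I / b) • lieD eZ ((r : ℂ) • f - g) := by
  obtain ⟨h₁, h₂⟩ := mem_solutions.1 h
  simp only [ladder, opV₁, opV₂, opV₁c, opV₂c, LinearMap.add_apply, LinearMap.sub_apply,
    LinearMap.smul_apply, Module.End.one_apply, map_add, map_sub, map_smul] at h₁ h₂ ⊢
  push_cast at h₂
  linear_combination (norm := module) (2 * r : ℂ) • h₁ - (2 : ℂ) • h₂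

theorem ladderAdjoint_apply_of_mem_solutions {r : ℝ} (h : (f, g) ∈ solutions a b (r ^ 2)) :
    ladderAdjoint a b r ((r : ℂ) • f - g) = (r : ℂ) • lieD eT ((r : ℂ) • f + g) +
      (r * b / 4 : ℂ) • ((r : ℂ) • f + g) + (I / b) • lieD eZ ((r : ℂ) • f + g) := by
  obtain ⟨h₁, h₂⟩ := mem_solutions.1 h
  simp only [ladderAdjoint, opV₁, opV₂, opV₁c, opV₂c, LinearMap.add_apply, LinearMap.sub_apply,
    LinearMap.smul_apply, Module.End.one_apply, map_add, map_sub, map_smul] at h₁ h₂ ⊢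
  push_cast at h₂
  linear_combination (norm := module) -(2 * r : ℂ) • h₁ - (2 : ℂ) • h₂

theorem isFormalAdjoint_ladder (a b r : ℝ) :
    IsFormalAdjoint (ladder a b r) (ladderAdjoint a b r) := by
  convert (((isFormalAdjoint_lieD eX).smul (I * r)).add
    (IsFormalAdjoint.one.smul (r * b / 4 : ℂ))).add
    (((isFormalAdjoint_lieD eY).add ((isFormalAdjoint_lieD eZ).smul (-(a / b) : ℂ))).smul (-1 : ℂ))
    using 1
  · rw [ladder]
    module
  · simp only [ladderAdjoint, map_mul, map_div₀, map_neg, map_one, map_ofNat, conj_I, conj_ofReal]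
    module

theorem commute_lieD_eZ (v : R4) : Commute (lieD eZ) (lieD v) := by
  refine (lieD_mul_lieD eZ v).trans ?_
  simp [eZ]

theorem commute_lieD_eT (v : R4) : Commute (lieD v) (lieD eT) := by
  refine (lieD_mul_lieD v eT).trans ?_
  simp [eT]

theorem ladder_mul_ladderAdjoint (a b r : ℝ) : ladder a b r * ladderAdjoint a b r =
    ladderAdjoint a b r * ladder a b r + (2 * I * r) • lieD eZ := by
  have hXY : lieD eX * lieD eY = lieD eY * lieD eX + lieD eZ := by
    simpa [eX, eY] using lieD_mul_lieD eX eY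
  have hXZ := (commute_lieD_eZ eX).eq
  simp only [ladder, ladderAdjoint, mul_add, add_mul, mul_sub, sub_mul, smul_mul_assoc,
    mul_smul_comm, one_mul, mul_one, hXY, hXZ]
  module

theorem commute_ladder {C : Module.End ℂ KTSmooth} (hC : ∀ v, Commute (lieD v) C) (a b r : ℝ) :
    Commute (ladder a b r) C :=
  (((hC eX).smul_left _).add_left ((Commute.one_left C).smul_left _)).sub_left
    ((hC eY).sub_left ((hC eZ).smul_left _))

theorem commute_ladderAdjoint {C : Module.End ℂ KTSmooth} (hC : ∀ v, Commute (lieD v) C)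
    (a b r : ℝ) : Commute (ladderAdjoint a b r) C :=
  (((hC eX).smul_left _).add_left ((Commute.one_left C).smul_left _)).add_left
    ((hC eY).sub_left ((hC eZ).smul_left _))

theorem fourierZ_mem_solutions {ρ : ℝ} (h : (f, g) ∈ solutions a b ρ) (n : ℤ) :
    (fourierZ n f, fourierZ n g) ∈ solutions a b ρ := by
  obtain ⟨h₁, h₂⟩ := mem_solutions.1 h
  refine mem_solutions.2 ⟨?_, ?_⟩
  · simpa only [opV₁c, opV₂c, map_add, map_sub, map_neg, map_smul, map_zero, LinearMap.add_apply,
      LinearMap.sub_apply, LinearMap.smul_apply, fourierZ_lieD] using congrArg (fourierZ n) h₁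
  · simpa only [opV₁, opV₂, map_add, map_sub, map_smul, map_zero, LinearMap.add_apply,
      LinearMap.sub_apply, LinearMap.smul_apply, fourierZ_lieD] using congrArg (fourierZ n) h₂

theorem eq_zero_of_ladder_system {r : ℝ} (hb : b ≠ 0) (hr : 0 < r)
    (hs : Nonresonant (r * b ^ 2 / (8 * Real.pi))) {n : ℤ} (hn : n ≠ 0) {p q : KTSmooth}
    (hZp : lieD eZ p = (2 * Real.pi * I * n : ℂ) • p)
    (hZq : lieD eZ q = (2 * Real.pi * I * n : ℂ) • q)
    (hp : ladder a b r p = (r : ℂ) • lieD eT q + (r * b / 4 : ℂ) • q - (I / b) • lieD eZ q)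
    (hq : ladderAdjoint a b r q =
      (r : ℂ) • lieD eT p + (r * b / 4 : ℂ) • p + (I / b) • lieD eZ p) : p = 0 ∧ q = 0 := by
  have hI : (I / b * (2 * Real.pi * I * n) : ℂ) = -(2 * Real.pi * n / b) := by
    linear_combination (2 * Real.pi * n / b : ℂ) * I_sq
  rw [hZq, smul_smul, hI] at hp
  rw [hZp, smul_smul, hI] at hq
  have hZcomm (v : R4) : Commute (lieD v) (lieD eZ) := (commute_lieD_eZ v).symm
  have hA := isFormalAdjoint_ladder a b r
  have hAA' := ladder_mul_ladderAdjoint a b r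
  have hAT := commute_ladder commute_lieD_eT a b r
  have hAT' := commute_ladderAdjoint commute_lieD_eT a b r
  obtain ⟨m, rfl | rfl⟩ := n.eq_nat_or_neg
  · refine hA.eq_zero_of_nonresonant hAA'
      ((commute_ladderAdjoint hZcomm a b r).symm.smul_left _) (isFormalAdjoint_lieD eT) hAT hAT'
      hb hr hs (n := m) (by grind) ?_ ?_ ?_
    · rw [LinearMap.smul_apply, hZp, smul_smul]
      congr 1
      push_cast
      linear_combination 4 * Real.pi * r * m * I_sq
    · rw [hp]; push_cast; module
    · rw [hq]; push_cast; module
  · refine (hA.symm.eq_zero_of_nonresonant (p := q) (q := p)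
      (N := -(2 * I * r) • lieD eZ) ?_ ((commute_ladder hZcomm a b r).symm.smul_left _)
      (isFormalAdjoint_lieD eT) hAT' hAT hb hr hs (n := m) (by grind) ?_ ?_ ?_).symm
    · rw [hAA']; module
    · rw [LinearMap.smul_apply, hZq, smul_smul]
      congr 1
      push_cast
      linear_combination 4 * Real.pi * r * m * I_sq
    · rw [hq]; push_cast; module
    · rw [hp]; push_cast; module

theorem eq_zero_of_mem_solutions_of_central_frequency {r : ℝ} (hb : b ≠ 0) (hr : 0 < r)
    (hs : Nonresonant (r * b ^ 2 / (8 * Real.pi))) (h : (f, g) ∈ solutions a b (r ^ 2)) {n : ℤ}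
    (hn : n ≠ 0) (hf : lieD eZ f = (2 * Real.pi * I * n : ℂ) • f)
    (hg : lieD eZ g = (2 * Real.pi * I * n : ℂ) • g) : f = 0 ∧ g = 0 := by
  obtain ⟨hp, hq⟩ := eq_zero_of_ladder_system hb hr hs hn
    (by rw [map_add, map_smul, hf, hg]; module) (by rw [map_sub, map_smul, hf, hg]; module)
    (ladder_apply_of_mem_solutions h) (ladderAdjoint_apply_of_mem_solutions h)
  have hg0 : (2 : ℂ) • g = 0 := by linear_combination (norm := module) hp - hq
  have hf0 : (2 * r : ℂ) • f = 0 := by linear_combination (norm := module) hp + hq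
  exact ⟨(smul_eq_zero.1 hf0).resolve_left
    (mul_ne_zero two_ne_zero (ofReal_ne_zero.2 hr.ne')),
    (smul_eq_zero.1 hg0).resolve_left two_ne_zero⟩

theorem fourierZ_eq_zero_of_mem_solutions {r : ℝ} (hb : b ≠ 0) (hr : 0 < r)
    (hs : Nonresonant (r * b ^ 2 / (8 * Real.pi))) (h : (f, g) ∈ solutions a b (r ^ 2)) {n : ℤ}
    (hn : n ≠ 0) : fourierZ n f = 0 ∧ fourierZ n g = 0 :=
  eq_zero_of_mem_solutions_of_central_frequency hb hr hs (fourierZ_mem_solutions h n) hn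
    (lieD_eZ_fourierZ n f) (lieD_eZ_fourierZ n g)

/-! ### Comparison with the operators on functions of four variables -/

/-- A smooth function on `KT⁴` as a function of four real variables. -/
def toF4 : KTSmooth →ₗ[ℂ] F4 :=
  curry4.toLinearMap ∘ₗ smoothAlgebra.subtype.toAlgHom.toLinearMap

theorem toF4_injective : Function.Injective toF4 :=
  curry4.injective.comp Subtype.val_injective

theorem deriv_comp_eq_fderiv (f : KTSmooth) {γ : ℝ → R4} {w : R4} {s : ℝ}
    (hγ : HasDerivAt γ w s) : deriv (fun s => f (γ s)) s = fderiv ℝ f (γ s) w :=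
  ((f.differentiable (γ s)).hasFDerivAt.comp_hasDerivAt s hγ).deriv

theorem pT_toF4 (f : KTSmooth) (t x y z : ℝ) : pT (toF4 f) t x y z = lieD eT f (t, x, y, z) := by
  have h := f.deriv_comp_eq_fderiv ((hasDerivAt_id t).prodMk (hasDerivAt_const t (x, y, z)))
  rw [lieD_apply, show frame eT (t, x, y, z) = eT by simp [frame, eT]]
  exact h

theorem pX_toF4 (f : KTSmooth) (t x y z : ℝ) : pX (toF4 f) t x y z = lieD eX f (t, x, y, z) := by
  have h := f.deriv_comp_eq_fderiv ((hasDerivAt_const x t).prodMk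
    ((hasDerivAt_id x).prodMk (hasDerivAt_const x (y, z))))
  rw [lieD_apply, show frame eX (t, x, y, z) = eX by simp [frame, eX]]
  exact h

theorem pZ_toF4 (f : KTSmooth) (t x y z : ℝ) : pZ (toF4 f) t x y z = lieD eZ f (t, x, y, z) := by
  have h := f.deriv_comp_eq_fderiv ((hasDerivAt_const z t).prodMk
    ((hasDerivAt_const z x).prodMk ((hasDerivAt_const z y).prodMk (hasDerivAt_id z))))
  rw [lieD_apply, frame_eZ]
  exact h

theorem pY_add_pZ_toF4 (f : KTSmooth) (t x y z : ℝ) :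
    pY (toF4 f) t x y z + x * pZ (toF4 f) t x y z = lieD eY f (t, x, y, z) := by
  have h := f.deriv_comp_eq_fderiv ((hasDerivAt_const y t).prodMk
    ((hasDerivAt_const y x).prodMk ((hasDerivAt_id y).prodMk (hasDerivAt_const y z))))
  have hpY : pY (toF4 f) t x y z = fderiv ℝ f (t, x, y, z) eY := h
  rw [hpY, pZ_toF4, lieD_apply, lieD_apply, frame_eZ, frame, map_add, map_smul, real_smul]
  simp [eY]

theorem V₁_toF4 (f : KTSmooth) (t x y z : ℝ) : V₁ (toF4 f) t x y z = opV₁ f (t, x, y, z) := by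
  rw [V₁, pT_toF4, pX_toF4]; rfl

theorem V₁c_toF4 (f : KTSmooth) (t x y z : ℝ) : V₁c (toF4 f) t x y z = opV₁c f (t, x, y, z) := by
  rw [V₁c, pT_toF4, pX_toF4]; rfl

theorem V₂_toF4 (a b : ℝ) (f : KTSmooth) (t x y z : ℝ) :
    V₂ a b (toF4 f) t x y z = opV₂ a b f (t, x, y, z) := by
  rw [V₂, pY_add_pZ_toF4, pZ_toF4]; rfl

theorem V₂c_toF4 (a b : ℝ) (f : KTSmooth) (t x y z : ℝ) :
    V₂c a b (toF4 f) t x y z = opV₂c a b f (t, x, y, z) := by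
  rw [V₂c, pY_add_pZ_toF4, pZ_toF4]; rfl

theorem toF4_mem_solRho_iff {ρ : ℝ} :
    (toF4 f, toF4 g) ∈ SolRho a b ρ ↔ (f, g) ∈ solutions a b ρ := by
  simp only [SolRho, Set.mem_ofPred_eq, V₁_toF4, V₁c_toF4, V₂_toF4, V₂c_toF4]
  constructor
  · rintro ⟨-, -, -, -, h₁, h₂⟩
    exact mem_solutions.2 ⟨Subtype.ext <| funext fun p =>
      (add_assoc _ _ _).symm.trans (h₁ p.1 p.2.1 p.2.2.1 p.2.2.2),
      Subtype.ext <| funext fun p => h₂ p.1 p.2.1 p.2.2.1 p.2.2.2⟩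
  · intro h
    obtain ⟨h₁, h₂⟩ := mem_solutions.1 h
    exact ⟨f.2.1, g.2.1, f.2.2, g.2.2, fun t x y z => (add_assoc _ _ _).trans
      (congrFun (congrArg Subtype.val h₁) (t, x, y, z)),
      fun t x y z => congrFun (congrArg Subtype.val h₂) (t, x, y, z)⟩

theorem solRho_eq_image (a b ρ : ℝ) :
    SolRho a b ρ = toF4.prodMap toF4 '' (solutions a b ρ : Set (KTSmooth × KTSmooth)) := by
  refine Set.Subset.antisymm (fun ⟨F, G⟩ h => ?_) ?_
  · let f : KTSmooth := ⟨curry4.symm F, h.1, h.2.2.1⟩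
    let g : KTSmooth := ⟨curry4.symm G, h.2.1, h.2.2.2.1⟩
    exact ⟨(f, g), toF4_mem_solRho_iff.1 h, rfl⟩
  · rintro _ ⟨⟨f, g⟩, h, rfl⟩
    exact toF4_mem_solRho_iff.2 h

/-! ### Zero modes and the dimension count -/

/-- The characters `(k, l, m)` of the torus `ℝ³ / ℤ³` on which the symbol of the system is not
invertible. -/
def resonantFrequencies (b ρ : ℝ) : Set (ℤ × ℤ × ℤ) :=
  {κ | κ.1 = 0 ∧ (κ.2.2 : ℝ) ^ 2 + ρ * κ.2.1 * (κ.2.1 - b / (4 * Real.pi)) = 0}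

/-- The kernel of the symbol of the system on the character `κ`. -/
def symbolKernel (b ρ : ℝ) (κ : ℤ × ℤ × ℤ) : Submodule ℂ (ℂ × ℂ) :=
  LinearMap.ker ((-(I * κ.2.2) • LinearMap.fst ℂ ℂ ℂ +
    (I * κ.1 - κ.2.1 + b / (4 * Real.pi) : ℂ) • LinearMap.snd ℂ ℂ ℂ)) ⊓
  LinearMap.ker ((ρ * (I * κ.1 + κ.2.1) : ℂ) • LinearMap.fst ℂ ℂ ℂ +
    (I * κ.2.2) • LinearMap.snd ℂ ℂ ℂ)

theorem mem_symbolKernel {ρ : ℝ} {κ : ℤ × ℤ × ℤ} {u v : ℂ} : (u, v) ∈ symbolKernel b ρ κ ↔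
    -(I * κ.2.2) * u + (I * κ.1 - κ.2.1 + b / (4 * Real.pi)) * v = 0 ∧
      ρ * (I * κ.1 + κ.2.1) * u + I * κ.2.2 * v = 0 :=
  Iff.rfl

theorem coef_mem_symbolKernel {ρ : ℝ} (h : (f, g) ∈ solutions a b ρ) (κ : ℤ × ℤ × ℤ) :
    (coef κ f, coef κ g) ∈ symbolKernel b ρ κ := by
  have hπ : (Real.pi : ℂ) ≠ 0 := ofReal_ne_zero.2 Real.pi_ne_zero
  obtain ⟨h₁, h₂⟩ := mem_solutions.1 h
  replace h₁ := congrArg (coef κ) h₁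
  replace h₂ := congrArg (coef κ) h₂
  simp only [opV₁, opV₁c, opV₂, opV₂c, map_add, map_sub, map_neg, map_smul, map_zero,
    LinearMap.add_apply, LinearMap.sub_apply, LinearMap.smul_apply, coef_lieD, phase_apply, eT, eX,
    eY, eZ, smul_eq_mul, mul_zero, add_zero, zero_add, mul_one, ofReal_zero, ofReal_intCast,
    zero_mul, sub_zero] at h₁ h₂
  refine mem_symbolKernel.2 ⟨mul_left_cancel₀ hπ ?_, mul_left_cancel₀ hπ ?_⟩
  · field_simp
    linear_combination 4 * h₁ - 4 * Real.pi * κ.2.1 * coef κ g * I_sq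
  · linear_combination h₂ + Real.pi * ρ * κ.2.1 * coef κ f * I_sq

theorem smul_char_mem_solutions {ρ : ℝ} {κ : ℤ × ℤ × ℤ} {u v : ℂ}
    (h : (u, v) ∈ symbolKernel b ρ κ) :
    (u • char κ, v • char κ) ∈ solutions a b ρ := by
  have hπ : (Real.pi : ℂ) ≠ 0 := ofReal_ne_zero.2 Real.pi_ne_zero
  obtain ⟨h₁, h₂⟩ := mem_symbolKernel.1 h
  rw [mem_solutions]
  simp only [opV₁, opV₁c, opV₂, opV₂c, map_smul, LinearMap.add_apply, LinearMap.sub_apply,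
    LinearMap.smul_apply, lieD_char, phase_apply, eT, eX, eY, eZ, mul_zero, add_zero, zero_add,
    mul_one, ofReal_zero, ofReal_intCast, zero_smul, smul_zero, sub_zero]
  constructor <;> match_scalars
  · field_simp at h₁ ⊢
    linear_combination h₁ + 4 * Real.pi * κ.2.1 * v * I_sq
  · linear_combination Real.pi * h₂ - Real.pi * ρ * κ.2.1 * u * I_sq

theorem symbolKernel_eq_bot {ρ : ℝ} (hb : b ≠ 0) (hρ : ρ ≠ 0) {κ : ℤ × ℤ × ℤ}
    (hκ : κ ∉ resonantFrequencies b ρ) : symbolKernel b ρ κ = ⊥ := by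
  obtain ⟨k, l, m⟩ := κ
  have hdet : ((m ^ 2 + ρ * (k ^ 2 + l ^ 2 - l * (b / (4 * Real.pi))) : ℝ) -
      (ρ * (b / (4 * Real.pi)) * k : ℝ) * I : ℂ) ≠ 0 := by
    intro h
    have hre := congrArg Complex.re h
    have him := congrArg Complex.im h
    rw [sub_re, re_ofReal_mul, I_re, mul_zero, sub_zero, ofReal_re, zero_re] at hre
    rw [sub_im, im_ofReal_mul, I_im, mul_one, ofReal_im, zero_sub, zero_im, neg_eq_zero] at him
    have hk : k = 0 := by
      simpa [hb, hρ, Real.pi_ne_zero] using him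
    subst hk
    refine hκ ⟨rfl, ?_⟩
    push_cast at hre ⊢
    linear_combination hre
  refine (Submodule.eq_bot_iff _).2 fun ⟨u, v⟩ h => ?_
  obtain ⟨h₁, h₂⟩ := mem_symbolKernel.1 h
  refine Prod.ext ((mul_eq_zero.1 (?_ : _ * u = 0)).resolve_left hdet)
    ((mul_eq_zero.1 (?_ : _ * v = 0)).resolve_left hdet) <;> push_cast
  · linear_combination I * m * h₁ - (I * k - l + b / (4 * Real.pi)) * h₂ +
      (m ^ 2 + ρ * k ^ 2) * u * I_sq
  · linear_combination -ρ * (I * k + l) * h₁ - I * m * h₂ + (m ^ 2 + ρ * k ^ 2) * v * I_sq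

/-- A generator of the symbol kernel on a resonant frequency. -/
def symbolVector (b ρ : ℝ) (κ : ℤ × ℤ × ℤ) : ℂ × ℂ :=
  (b / (4 * Real.pi) - κ.2.1 + I * κ.2.2, I * κ.2.2 - ρ * κ.2.1)

theorem symbolVector_ne_zero {ρ : ℝ} (hb : b ≠ 0) (hρ : ρ ≠ 0) (κ : ℤ × ℤ × ℤ) :
    symbolVector b ρ κ ≠ 0 := by
  intro h
  have hl : κ.2.1 = 0 := by
    simpa [symbolVector, hρ] using congrArg (fun ν => (Prod.snd ν).re) h
  have hb0 : (b / (4 * Real.pi) : ℂ) = 0 := by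
    have h₁ : (b / (4 * Real.pi) - κ.2.1 + I * κ.2.2 : ℂ) = 0 := congrArg Prod.fst h
    have h₂ : (I * κ.2.2 - ρ * κ.2.1 : ℂ) = 0 := congrArg Prod.snd h
    rw [hl] at h₁ h₂
    push_cast at h₁ h₂
    linear_combination h₁ - h₂
  exact hb (by simpa [Real.pi_ne_zero] using hb0)

theorem symbolVector_mem_symbolKernel {ρ : ℝ} {κ : ℤ × ℤ × ℤ}
    (hκ : κ ∈ resonantFrequencies b ρ) : symbolVector b ρ κ ∈ symbolKernel b ρ κ := by
  obtain ⟨hk, h⟩ := hκ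
  replace h := congrArg ((↑) : ℝ → ℂ) h
  push_cast at h
  refine mem_symbolKernel.2 ?_
  rw [hk]
  push_cast
  constructor
  · linear_combination h - κ.2.2 ^ 2 * I_sq
  · linear_combination -h + κ.2.2 ^ 2 * I_sq

theorem symbolKernel_le_span {ρ : ℝ} (hb : b ≠ 0) (hρ : ρ ≠ 0) {κ : ℤ × ℤ × ℤ}
    (hκ : κ.1 = 0) : symbolKernel b ρ κ ≤ ℂ ∙ symbolVector b ρ κ := by
  rintro ⟨u, v⟩ h
  refine mem_span_singleton_of_mul_eq (symbolVector_ne_zero hb hρ κ) ?_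
  obtain ⟨h₁, h₂⟩ := mem_symbolKernel.1 h
  rw [hκ, Int.cast_zero] at h₁ h₂
  simp only [symbolVector]
  linear_combination h₁ + h₂

theorem finite_resonantFrequencies {ρ : ℝ} (hρ : 0 < ρ) (b : ℝ) :
    (resonantFrequencies b ρ).Finite := by
  set β := b / (4 * Real.pi) with hβ
  refine (Set.finite_Icc (0, -⌈|β|⌉, -⌈ρ * β ^ 2⌉) (0, ⌈|β|⌉, ⌈ρ * β ^ 2⌉)).subset ?_
  rintro ⟨k, l, m⟩ ⟨rfl, h⟩
  rw [← hβ] at h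
  have hl : |(l : ℝ)| ≤ |β| := by
    have hl' : (l : ℝ) * (l - β) ≤ 0 := by
      refine nonpos_of_mul_nonpos_right (?_ : ρ * (l * (l - β)) ≤ 0) hρ
      nlinarith [sq_nonneg (m : ℝ)]
    exact sq_le_sq.1 (by nlinarith [sq_nonneg (l - β)])
  have hm : |(m : ℝ)| ≤ ρ * β ^ 2 := by
    have habs : |(m : ℝ)| ≤ (m : ℝ) ^ 2 := by
      exact_mod_cast (Int.abs_eq_natAbs m).trans_le (Int.natAbs_le_self_sq m)
    have hm' : 0 ≤ ρ * (l - β / 2) ^ 2 := by positivity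
    have hβ2 : 0 ≤ ρ * β ^ 2 := by positivity
    linarith
  have hlceil : |l| ≤ ⌈|β|⌉ := by exact_mod_cast hl.trans (Int.le_ceil _)
  have hmceil : |m| ≤ ⌈ρ * β ^ 2⌉ := by exact_mod_cast hm.trans (Int.le_ceil _)
  exact ⟨⟨le_rfl, (abs_le.1 hlceil).1, (abs_le.1 hmceil).1⟩,
    ⟨le_rfl, (abs_le.1 hlceil).2, (abs_le.1 hmceil).2⟩⟩

theorem hasDimOver_solutions (a : ℝ) {r : ℝ} (hb : b ≠ 0) (hr : 0 < r)
    (hs : Nonresonant (r * b ^ 2 / (8 * Real.pi))) :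
    HasDimOver (solutions a b (r ^ 2) : Set (KTSmooth × KTSmooth))
      (resonantFrequencies b (r ^ 2)).ncard := by
  have hr2 : 0 < r ^ 2 := by positivity
  have : Finite (resonantFrequencies b (r ^ 2)) := finite_resonantFrequencies hr2 b
  rw [← Nat.card_coe_set_eq]
  have hdiag (κ : ℤ × ℤ × ℤ) (u v : ℂ) :
      (coef κ).prodMap (coef κ) (u • char κ, v • char κ) = (u, v) := by
    simp [coef_char_self]
  refine hasDimOver_of_coordinates
    (v := fun κ => ((symbolVector b (r ^ 2) κ).1 • char κ, (symbolVector b (r ^ 2) κ).2 • char κ))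
    (Φ := fun κ => (coef κ).prodMap (coef κ))
    (fun κ => smul_char_mem_solutions (symbolVector_mem_symbolKernel κ.2))
    (fun κ => ?_) (fun κ κ' hκ => ?_) (fun w hw κ => ?_) (fun w hw h => ?_)
  · rw [hdiag]
    exact symbolVector_ne_zero hb hr2.ne' κ
  · have := coef_char_of_ne (Subtype.coe_ne_coe.2 hκ)
    simp [this]
  · rw [hdiag]
    exact symbolKernel_le_span hb hr2.ne' κ.2.1 (coef_mem_symbolKernel hw κ)
  · have hcoef (κ : ℤ × ℤ × ℤ) : (coef κ w.1, coef κ w.2) = 0 := by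
      by_cases hκ : κ ∈ resonantFrequencies b (r ^ 2)
      · exact h ⟨κ, hκ⟩
      · have := coef_mem_symbolKernel hw κ
        rwa [symbolKernel_eq_bot hb hr2.ne' hκ] at this
    have hfourier (n : ℤ) (hn : n ≠ 0) := fourierZ_eq_zero_of_mem_solutions hb hr hs hw hn
    exact Prod.ext
      (eq_zero_of_fourierZ_of_coef (fun n hn => (hfourier n hn).1)
        fun κ => congrArg Prod.fst (hcoef κ))
      (eq_zero_of_fourierZ_of_coef (fun n hn => (hfourier n hn).2)
        fun κ => congrArg Prod.snd (hcoef κ))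

theorem hasDimOver_solRho (a : ℝ) {ρ : ℝ} (hb : b ≠ 0) (hρ : 0 < ρ)
    (hs : Nonresonant (√ρ * b ^ 2 / (8 * Real.pi))) :
    HasDimOver (SolRho a b ρ) (resonantFrequencies b ρ).ncard := by
  have h := hasDimOver_solutions a hb (Real.sqrt_pos.2 hρ) hs
  rw [Real.sq_sqrt hρ.le] at h
  rw [solRho_eq_image]
  exact hasDimOver_image h (toF4_injective.prodMap toF4_injective)

theorem mem_resonantFrequencies_eight_mul_pi_iff {ρ : ℝ} (hρ : 0 < ρ) {k l m : ℤ} :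
    (k, l, m) ∈ resonantFrequencies (8 * Real.pi) ρ ↔
      k = 0 ∧ ((l = 0 ∨ l = 2) ∧ m = 0 ∨ l = 1 ∧ (m : ℝ) ^ 2 = ρ) := by
  have hβ : 8 * Real.pi / (4 * Real.pi) = 2 := by
    field_simp
    norm_num
  simp only [resonantFrequencies, Set.mem_ofPred_eq, hβ, and_congr_right_iff]
  intro _
  constructor
  · intro h
    have hl : (l : ℝ) * (l - 2) ≤ 0 := by
      refine nonpos_of_mul_nonpos_right (?_ : ρ * (l * (l - 2)) ≤ 0) hρ
      linarith [sq_nonneg (m : ℝ)]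
    have hlZ : l * (l - 2) ≤ 0 := by exact_mod_cast hl
    have hl₀ : 0 ≤ l := by nlinarith
    have hl₂ : l ≤ 2 := by nlinarith
    interval_cases l
    · exact .inl ⟨.inl rfl, by simpa using h⟩
    · exact .inr ⟨rfl, by push_cast at h; linarith⟩
    · exact .inl ⟨.inr rfl, by simpa using h⟩
  · rintro (⟨rfl | rfl, rfl⟩ | ⟨rfl, h⟩)
    · simp
    · simp
    · push_cast
      linarith

theorem ncard_resonantFrequencies_eight_mul_pi_of_int {k : ℤ} (hk : k ≠ 0) :
    (resonantFrequencies (8 * Real.pi) ((k : ℝ) ^ 2)).ncard = 4 := by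
  have hρ : (0 : ℝ) < (k : ℝ) ^ 2 := by positivity
  have hset : resonantFrequencies (8 * Real.pi) ((k : ℝ) ^ 2) =
      ({(0, 0, 0), (0, 2, 0), (0, 1, k), (0, 1, -k)} : Finset (ℤ × ℤ × ℤ)) := by
    ext ⟨k', l, m⟩
    rw [mem_resonantFrequencies_eight_mul_pi_iff hρ, sq_eq_sq_iff_eq_or_eq_neg]
    norm_cast
    simp only [Finset.mem_insert, Finset.mem_singleton, Prod.mk.injEq]
    tauto
  have hneg : k ≠ -k := by lia
  rw [hset, Set.ncard_coe_finset]
  simp [Finset.card_insert_of_notMem, hneg]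

theorem ncard_resonantFrequencies_eight_mul_pi_of_not_int {r : ℝ} (hr : 0 < r)
    (hint : ¬ ∃ k : ℤ, r = k) : (resonantFrequencies (8 * Real.pi) (r ^ 2)).ncard = 2 := by
  have hset : resonantFrequencies (8 * Real.pi) (r ^ 2) =
      ({(0, 0, 0), (0, 2, 0)} : Finset (ℤ × ℤ × ℤ)) := by
    ext ⟨k, l, m⟩
    have hm : (m : ℝ) ^ 2 ≠ r ^ 2 := by
      rw [Ne, sq_eq_sq_iff_eq_or_eq_neg]
      rintro (h | h)
      · exact hint ⟨m, h.symm⟩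
      · exact hint ⟨-m, by rw [Int.cast_neg, h, neg_neg]⟩
    rw [mem_resonantFrequencies_eight_mul_pi_iff (by positivity)]
    simp only [hm, Finset.coe_insert, Finset.coe_singleton, Set.mem_insert_iff,
      Set.mem_singleton_iff, Prod.mk.injEq]
    tauto
  rw [hset, Set.ncard_coe_finset]
  rfl

theorem hasDimOver_solRho_eight_mul_pi (a : ℝ) {ρ : ℝ} (hρ : 0 < ρ)
    (hs : Nonresonant (8 * Real.pi * √ρ)) :
    HasDimOver (SolRho a (8 * Real.pi) ρ) (resonantFrequencies (8 * Real.pi) ρ).ncard := by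
  have hparam : √ρ * (8 * Real.pi) ^ 2 / (8 * Real.pi) = 8 * Real.pi * √ρ := by
    field_simp
  exact hasDimOver_solRho a (by positivity) hρ (hparam ▸ hs)

theorem hasDimOver_four_of_sqrt_eq_int (a : ℝ) {ρ : ℝ} (hρ : 0 < ρ)
    (hint : ∃ k : ℤ, √ρ = k) : HasDimOver (SolRho a (8 * Real.pi) ρ) 4 := by
  obtain ⟨k, hk⟩ := hint
  have hs : Nonresonant (8 * Real.pi * √ρ) := by
    simpa [hk] using nonresonant_mul_pi (k : ℚ)
  have hk0 : k ≠ 0 := by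
    rintro rfl
    exact (Real.sqrt_pos.2 hρ).ne' (by simpa using hk)
  have hρk : ρ = (k : ℝ) ^ 2 := by rw [← hk, Real.sq_sqrt hρ.le]
  have h := hasDimOver_solRho_eight_mul_pi a hρ hs
  rwa [hρk, ncard_resonantFrequencies_eight_mul_pi_of_int hk0, ← hρk] at h

theorem hasDimOver_two_of_sqrt_ne_int (a : ℝ) {ρ : ℝ} (hρ : 0 < ρ)
    (hs : Nonresonant (8 * Real.pi * √ρ)) (hint : ¬ ∃ k : ℤ, √ρ = k) :
    HasDimOver (SolRho a (8 * Real.pi) ρ) 2 := by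
  rw [← ncard_resonantFrequencies_eight_mul_pi_of_not_int (Real.sqrt_pos.2 hρ) hint,
    Real.sq_sqrt hρ.le]
  exact hasDimOver_solRho_eight_mul_pi a hρ hs

theorem hasDimOver_quarter (a : ℝ) : HasDimOver (SolRho a (8 * Real.pi) (1 / 4)) 2 := by
  have hsqrt : √(1 / 4 : ℝ) = (1 / 2 : ℚ) := by
    rw [Real.sqrt_eq_iff_mul_self_eq_of_pos] <;> norm_num
  refine hasDimOver_two_of_sqrt_ne_int a (by norm_num)
    (hsqrt ▸ nonresonant_mul_pi (1 / 2)) ?_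
  rintro ⟨k, hk⟩
  have h2k : (1 : ℝ) = 2 * k := by
    rw [← hk, hsqrt]
    norm_num
  have : (1 : ℤ) = 2 * k := by exact_mod_cast h2k
  lia

end KTSmooth

end System

end

end KodairaThurston

open KodairaThurston KTSmooth in
theorem hodge_number_h01_varies_with_almost_Kahler_metric_general
    (a : ℝ) (b : ℝ) (hb : b = 8 * Real.pi)
    (ρ : ℝ) (hρ : 0 < ρ) (hs : Nonresonant (8 * Real.pi * Real.sqrt ρ)) :
    ((∃ k : ℤ, Real.sqrt ρ = (k : ℝ)) → HasDimOver (SolRho a b ρ) 4) ∧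
    (¬ (∃ k : ℤ, Real.sqrt ρ = (k : ℝ)) → HasDimOver (SolRho a b ρ) 2) ∧
    (∃ ρ₁ ρ₂ : ℝ, 0 < ρ₁ ∧ 0 < ρ₂ ∧ ∃ n₁ n₂ : ℕ, n₁ ≠ n₂ ∧
      HasDimOver (SolRho a b ρ₁) n₁ ∧ HasDimOver (SolRho a b ρ₂) n₂) := by
  subst hb
  exact ⟨hasDimOver_four_of_sqrt_eq_int a hρ, hasDimOver_two_of_sqrt_ne_int a hρ hs,
    1, 1 / 4, one_pos, by norm_num, 4, 2, by norm_num,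
    hasDimOver_four_of_sqrt_eq_int a one_pos ⟨1, by simp⟩, hasDimOver_quarter a⟩

/-- Holt–Zhang: for `b = 8π` and `ρ > 0` with `√ρ` rational, `𝒮_ρ(a,b)`
has dimension `4` when `√ρ` is an integer and dimension `2` when `√ρ ∈ ℚ \ ℤ`.  In
particular there are almost Kähler metrics compatible with the same almost complex
structure `J_{a,8π}` whose Hodge numbers `h^{0,1}` differ. -/
theorem hodge_number_h01_varies_with_almost_Kahler_metric
    (a : ℝ) (b : ℝ) (hb : b = 8 * Real.pi)
    (ρ : ℝ) (hρ : 0 < ρ) (hrat : ∃ r : ℚ, Real.sqrt ρ = (r : ℝ)) :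
    ((∃ k : ℤ, Real.sqrt ρ = (k : ℝ)) → HasDimOver (SolRho a b ρ) 4) ∧
    (¬ (∃ k : ℤ, Real.sqrt ρ = (k : ℝ)) → HasDimOver (SolRho a b ρ) 2) ∧
    (∃ ρ₁ ρ₂ : ℝ, 0 < ρ₁ ∧ 0 < ρ₂ ∧ ∃ n₁ n₂ : ℕ, n₁ ≠ n₂ ∧
      HasDimOver (SolRho a b ρ₁) n₁ ∧ HasDimOver (SolRho a b ρ₂) n₂) := by
  obtain ⟨r, hr⟩ := hrat
  exact hodge_number_h01_varies_with_almost_Kahler_metric_general a b hb ρ hρ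
    (hr ▸ KodairaThurston.nonresonant_mul_pi r)
end

section
/- Let a ∈ ℝ and b ∈ ℝ\{0}. The ℂ-vector space of smooth KT-periodic functions f : ℝ⁴ → ℂ satisfying V̄₁(f) + (b/4)f = 0 and V̄₂(f) = 0 has dimension 1 if b ∈ 4πℤ (with b ≠ 0), and dimension 0 if b ∉ 4πℤ. Moreover, when b = 4πl with l ∈ ℤ\{0}, the solutions are exactly the functions f(t,x,y,z) = C·e^{2πi l x} with C ∈ ℂ. (This space computes the Hodge number h^{2,0} of (KT⁴, J_{a,b}).) -/
open Complex MeasureTheory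

/-- The space of smooth KT-periodic functions `f` with `V̄₁(f) + (b/4)f = 0` and
`V̄₂(f) = 0`; it computes the Hodge number `h^{2,0}` of `(KT⁴, J_{a,b})`. -/
def Sol20 (a b : ℝ) : Set F4 :=
  {f | Smooth4 f ∧ KTPeriodic f ∧
    (∀ t x y z : ℝ, V₁c f t x y z + ((b : ℂ) / 4) * f t x y z = 0) ∧
    (∀ t x y z : ℝ, V₂c a b f t x y z = 0)}

/-!
Both equations are Cauchy–Riemann equations in disguise. If `h : ℝ² → ℂ` is bounded and satisfies
`∂₁h + c ∂₂h = 0` with `Im c ≠ 0`, then `h` is an entire function of the complex coordinate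
`z - c y`, hence constant by Liouville's theorem.

For fixed `(t, x)` a solution `f` is periodic, hence bounded, in `(y, z)`, and `V̄₂ f = 0` is such
an equation with `c = x - (a + i)/b`, so `f` depends on `(t, x)` only. It is then periodic in
`(t, x)`, and `g = e^{-ibx/2} f` is bounded and satisfies `∂ₜg + i ∂ₓg = 0`; so `g` is a constant
`C`, and `f = C e^{ibx/2}`. Periodicity in `x` forces `C = 0` or `b/2 ∈ 2πℤ`.
-/

section CauchyRiemann

/-- The complex coordinate `z - c y` of `(y, z) ∈ ℝ²`, as a real-linear isomorphism. The functions
killed by `∂₁ + c ∂₂` are the holomorphic functions of this coordinate. -/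
noncomputable def obliqueCoord {c : ℂ} (hc : c.im ≠ 0) : (ℝ × ℝ) ≃L[ℝ] ℂ :=
  (LinearMap.linearEquivOfInjective
    (ofRealCLM ∘L .snd ℝ ℝ ℝ - c • (ofRealCLM ∘L .fst ℝ ℝ ℝ)).toLinearMap
    (by
      refine (injective_iff_map_eq_zero _).2 fun v hv => ?_
      have hfst : v.1 = 0 := by simpa [hc] using congrArg im hv
      have hsnd : v.2 = 0 := by simpa [hfst] using congrArg re hv
      exact Prod.ext hfst hsnd)
    (by simp [finrank_real_complex])).toContinuousLinearEquiv

lemma obliqueCoord_apply {c : ℂ} (hc : c.im ≠ 0) (v : ℝ × ℝ) :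
    obliqueCoord hc v = v.2 - c * v.1 := rfl

variable {F : Type*} [NormedAddCommGroup F] [NormedSpace ℂ F] {c : ℂ} {h : ℝ × ℝ → F}

lemma apply_eq_obliqueCoord_smul {D : ℝ × ℝ →L[ℝ] F} (hc : c.im ≠ 0)
    (hD : D (1, 0) + c • D (0, 1) = 0) (v : ℝ × ℝ) : D v = obliqueCoord hc v • D (0, 1) := by
  have hv : v = v.1 • ((1 : ℝ), (0 : ℝ)) + v.2 • ((0 : ℝ), (1 : ℝ)) := by ext <;> simp
  calc D v = v.1 • D (1, 0) + v.2 • D (0, 1) := by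
        conv_lhs => rw [hv, map_add, map_smul, map_smul]
    _ = (v.1 : ℂ) • (-(c • D (0, 1))) + (v.2 : ℂ) • D (0, 1) := by
        rw [eq_neg_of_add_eq_zero_left hD, coe_smul, coe_smul]
    _ = obliqueCoord hc v • D (0, 1) := by
        rw [obliqueCoord_apply]
        module

lemma differentiable_comp_obliqueCoord_symm (hc : c.im ≠ 0) (hd : Differentiable ℝ h)
    (hcr : ∀ p, fderiv ℝ h p (1, 0) + c • fderiv ℝ h p (0, 1) = 0) :
    Differentiable ℂ (h ∘ (obliqueCoord hc).symm) := fun ζ => by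
  refine differentiableAt_complex_iff_differentiableAt_real.2
    ⟨hd.comp (obliqueCoord hc).symm.differentiable ζ, ?_⟩
  rw [(obliqueCoord hc).symm.comp_right_fderiv]
  simp [apply_eq_obliqueCoord_smul hc (hcr _) ((obliqueCoord hc).symm _)]

theorem apply_eq_apply_of_cauchyRiemann (hc : c.im ≠ 0) (hd : Differentiable ℝ h)
    (hcr : ∀ p, fderiv ℝ h p (1, 0) + c • fderiv ℝ h p (0, 1) = 0)
    (hb : Bornology.IsBounded (Set.range h)) (p q : ℝ × ℝ) : h p = h q := by
  have hentire := differentiable_comp_obliqueCoord_symm hc hd hcr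
  have hbounded := hb.subset (Set.range_comp_subset_range (obliqueCoord hc).symm h)
  simpa using hentire.apply_eq_apply_of_bounded hbounded (obliqueCoord hc p) (obliqueCoord hc q)

/-- The substitution `g = e^{-μz} h` removes the twist, and `‖g‖ = ‖h‖` as `μ` is imaginary. -/
theorem eq_exp_smul_of_twisted_cauchyRiemann {μ : ℂ} (hμ : μ.re = 0) (hc : c.im ≠ 0)
    (hd : Differentiable ℝ h)
    (hcr : ∀ p, fderiv ℝ h p (1, 0) + c • (fderiv ℝ h p (0, 1) - μ • h p) = 0)
    (hb : Bornology.IsBounded (Set.range h)) (p : ℝ × ℝ) : h p = exp (μ * p.2) • h 0 := by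
  let g : ℝ × ℝ → F := fun q => exp (-μ * q.2) • h q
  have hg (q : ℝ × ℝ) : HasFDerivAt g _ q :=
    (((ofRealCLM.comp (.snd ℝ ℝ ℝ)).hasFDerivAt.const_mul (-μ)).cexp).smul (hd q).hasFDerivAt
  have hg_cr (q : ℝ × ℝ) : fderiv ℝ g q (1, 0) + c • fderiv ℝ g q (0, 1) = 0 := by
    calc fderiv ℝ g q (1, 0) + c • fderiv ℝ g q (0, 1)
        = exp (-μ * q.2) •
            (fderiv ℝ h q (1, 0) + c • (fderiv ℝ h q (0, 1) - μ • h q)) := by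
          rw [(hg q).fderiv]
          simp only [add_apply, smul_apply, ContinuousLinearMap.comp_apply,
            ContinuousLinearMap.smulRight_apply, ContinuousLinearMap.coe_snd', ofRealCLM_apply,
            ofReal_zero, ofReal_one, smul_eq_mul]
          module
      _ = 0 := by rw [hcr q, smul_zero]
  have hg_norm (q : ℝ × ℝ) : ‖g q‖ = ‖h q‖ := by simp [g, norm_smul, norm_exp, hμ]
  have hg_bdd : Bornology.IsBounded (Set.range g) := by
    simpa only [isBounded_iff_forall_norm_le, Set.forall_mem_range, hg_norm] using hb
  have hconst : g p = g 0 :=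
    apply_eq_apply_of_cauchyRiemann hc (fun q => (hg q).differentiableAt) hg_cr hg_bdd p 0
  calc h p = exp (μ * p.2) • g p := by simp [g, smul_smul, ← exp_add]
    _ = exp (μ * p.2) • h 0 := by
        rw [hconst]
        simp [g]

end CauchyRiemann

section Slices

variable {𝕜 E F : Type*} [NontriviallyNormedField 𝕜] [NormedAddCommGroup E] [NormedSpace 𝕜 E]
  [NormedAddCommGroup F] [NormedSpace 𝕜 F]

lemma deriv_fst_slice {h : 𝕜 × E → F} {p : 𝕜 × E} (hd : DifferentiableAt 𝕜 h p) :
    deriv (fun s => h (s, p.2)) p.1 = fderiv 𝕜 h p (1, 0) :=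
  (hd.hasFDerivAt.comp_hasDerivAt p.1
    ((hasDerivAt_id p.1).prodMk (hasDerivAt_const p.1 p.2))).deriv

lemma deriv_snd_slice {h : E × 𝕜 → F} {p : E × 𝕜} (hd : DifferentiableAt 𝕜 h p) :
    deriv (fun s => h (p.1, s)) p.2 = fderiv 𝕜 h p (0, 1) :=
  (hd.hasFDerivAt.comp_hasDerivAt p.2
    ((hasDerivAt_const p.2 p.1).prodMk (hasDerivAt_id p.2))).deriv

end Slices

section Periodic

lemma isCompact_range_of_periodic_basis {ι E X : Type*} [Finite ι] [NormedAddCommGroup E]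
    [NormedSpace ℝ E] [TopologicalSpace X] (e : Module.Basis ι ℝ E) {h : E → X}
    (hc : Continuous h) (hp : ∀ i, Function.Periodic h (e i)) : IsCompact (Set.range h) := by
  have := e.finiteDimensional_of_finite
  refine IsZLattice.isCompact_range_of_periodic (.span ℤ (Set.range e)) h hc fun v w hw => ?_
  have hw_periodic : Function.Periodic h w := by
    induction hw using Submodule.span_induction with
    | mem w hw =>
      obtain ⟨i, rfl⟩ := hw
      exact hp i
    | zero => exact Function.periodic_with_period_zero h
    | add _ _ _ _ hv hw => exact hv.add_period hw
    | smul n _ _ hw => exact hw.zsmul n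
  exact hw_periodic v

lemma isBounded_range_of_doubly_periodic {X : Type*} [PseudoMetricSpace X] {h : ℝ × ℝ → X}
    (hc : Continuous h) (h₁ : Function.Periodic h (1, 0)) (h₂ : Function.Periodic h (0, 1)) :
    Bornology.IsBounded (Set.range h) :=
  (isCompact_range_of_periodic_basis (.finTwoProd ℝ) hc
    (Fin.forall_fin_two.2 ⟨by simpa only [Module.Basis.finTwoProd_zero] using h₁,
      by simpa only [Module.Basis.finTwoProd_one] using h₂⟩)).isBounded

end Periodic

section Dimension

variable {V : Type*} [AddCommGroup V] [Module ℂ V]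

lemma hasDimOver_singleton_zero : HasDimOver ({0} : Set V) 0 :=
  ⟨Fin.elim0, linearIndependent_empty_type, by simp⟩

lemma hasDimOver_span_singleton {v : V} (hv : v ≠ 0) :
    HasDimOver (Submodule.span ℂ {v} : Set V) 1 :=
  ⟨fun _ => v, .of_subsingleton 0 hv, by rw [Set.range_const]⟩

end Dimension

section Solutions

variable {a b : ℝ} {f : F4}

lemma Smooth4.differentiable (hf : Smooth4 f) :
    Differentiable ℝ (fun p : ℝ × ℝ × ℝ × ℝ => f p.1 p.2.1 p.2.2.1 p.2.2.2) :=
  ContDiff.differentiable hf (by simp)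

lemma Smooth4.differentiable_tx (hf : Smooth4 f) (y z : ℝ) :
    Differentiable ℝ (fun p : ℝ × ℝ => f p.1 p.2 y z) :=
  hf.differentiable.comp (f := fun p : ℝ × ℝ => (p.1, p.2, y, z)) (by fun_prop)

lemma Smooth4.differentiable_yz (hf : Smooth4 f) (t x : ℝ) :
    Differentiable ℝ (fun p : ℝ × ℝ => f t x p.1 p.2) :=
  hf.differentiable.comp (f := fun p : ℝ × ℝ => (t, x, p.1, p.2)) (by fun_prop)

lemma apply_eq_of_V₂c_eq_zero (hb : b ≠ 0) (hs : Smooth4 f) (hp : KTPeriodic f)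
    (h₂ : ∀ t x y z, V₂c a b f t x y z = 0) (t x y z : ℝ) : f t x y z = f t x 0 0 := by
  have hd := hs.differentiable_yz t x
  refine apply_eq_apply_of_cauchyRiemann (c := x - (a + I) / b) ?_ hd (fun p => ?_) ?_ (y, z) (0, 0)
  · simp [div_ofReal_im, hb]
  · rw [← deriv_fst_slice (hd p), ← deriv_snd_slice (hd p), smul_eq_mul]
    have hV := h₂ t x p.1 p.2
    simp only [V₂c, pY, pZ] at hV
    linear_combination 2 * hV
  · exact isBounded_range_of_doubly_periodic hd.continuous
      (fun p => by simpa using (hp t x p.1 p.2).2.2.1)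
      (fun p => by simpa using (hp t x p.1 p.2).2.2.2)

lemma apply_eq_exp_mul_of_V₁c_add_eq_zero (hs : Smooth4 f) (hp : KTPeriodic f)
    (h₁ : ∀ t x y z, V₁c f t x y z + (b : ℂ) / 4 * f t x y z = 0) (t x : ℝ) :
    f t x 0 0 = exp (b / 2 * I * x) * f 0 0 0 0 := by
  have hd := hs.differentiable_tx 0 0
  refine eq_exp_smul_of_twisted_cauchyRiemann (c := I) (by simp) (by simp) hd
    (fun p => ?_) ?_ (t, x)
  · rw [← deriv_fst_slice (hd p), ← deriv_snd_slice (hd p), smul_eq_mul, smul_eq_mul]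
    have hV := h₁ p.1 p.2 0 0
    simp only [V₁c, pT, pX] at hV
    linear_combination 2 * hV - b / 2 * f p.1 p.2 0 0 * I_sq
  · exact isBounded_range_of_doubly_periodic hd.continuous
      (fun p => by simpa using (hp p.1 p.2 0 0).1)
      (fun p => by simpa using (hp p.1 p.2 0 0).2.1)

/-- The exponential `e^{μx}` as a function of `(t, x, y, z)`; the solutions are multiples of the one
with `μ = ib/2`. -/
noncomputable def xExp (μ : ℂ) : F4 := fun _t x _y _z => exp (μ * x)

lemma xExp_ne_zero (μ : ℂ) : xExp μ ≠ 0 := fun h =>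
  exp_ne_zero (μ * (0 : ℝ)) (congrFun (congrFun (congrFun (congrFun h 0) 0) 0) 0)

lemma smooth4_smul_xExp (C μ : ℂ) : Smooth4 (C • xExp μ) := by
  have hx : ContDiff ℝ (⊤ : ℕ∞) (fun p : ℝ × ℝ × ℝ × ℝ => (p.2.1 : ℂ)) :=
    ofRealCLM.contDiff.comp (contDiff_fst.comp contDiff_snd)
  exact contDiff_const.mul (contDiff_const.mul hx).cexp

lemma ktPeriodic_smul_xExp_iff {C μ : ℂ} :
    KTPeriodic (C • xExp μ) ↔ C = 0 ∨ ∃ n : ℤ, μ = n * (2 * Real.pi * I) := by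
  rw [← exp_eq_one_iff]
  constructor
  · intro hp
    have hper : C * exp μ = C := by simpa [xExp] using (hp 0 0 0 0).2.1
    exact (mul_right_eq_self₀.1 hper).symm
  · rintro (rfl | hμ) t x y z
    · simp
    · simp [xExp, mul_add, exp_add, hμ]

lemma V₁c_smul_xExp (C μ : ℂ) (t x y z : ℝ) :
    V₁c (C • xExp μ) t x y z = I * μ / 2 * (C • xExp μ) t x y z := by
  have hx : HasDerivAt (fun s : ℝ => C * exp (μ * s)) (C * (exp (μ * x) * μ)) x := by
    simpa using ((ofRealCLM.hasDerivAt (x := x)).const_mul μ).cexp.const_mul C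
  simp only [V₁c, pT, pX, xExp, Pi.smul_apply, smul_eq_mul, hx.deriv, deriv_const]
  ring

lemma V₂c_smul_xExp (C μ : ℂ) (t x y z : ℝ) : V₂c a b (C • xExp μ) t x y z = 0 := by
  simp [V₂c, pY, pZ, xExp]

theorem mem_sol20_iff (hb : b ≠ 0) :
    f ∈ Sol20 a b ↔ KTPeriodic f ∧ f ∈ Submodule.span ℂ {xExp (b / 2 * I)} := by
  rw [Submodule.mem_span_singleton]
  constructor
  · rintro ⟨hs, hp, h₁, h₂⟩
    refine ⟨hp, f 0 0 0 0, ?_⟩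
    funext t x y z
    rw [apply_eq_of_V₂c_eq_zero hb hs hp h₂ t x y z,
      apply_eq_exp_mul_of_V₁c_add_eq_zero hs hp h₁ t x]
    exact mul_comm _ _
  · rintro ⟨hp, C, rfl⟩
    refine ⟨smooth4_smul_xExp C _, hp, fun t x y z => ?_, V₂c_smul_xExp C _⟩
    rw [V₁c_smul_xExp]
    linear_combination b / 4 * (C • xExp (b / 2 * I)) t x y z * I_sq

lemma half_mul_I_eq_int_mul_two_pi_mul_I_iff {n : ℤ} :
    (b : ℂ) / 2 * I = n * (2 * Real.pi * I) ↔ b = 4 * Real.pi * n := by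
  rw [← mul_assoc, mul_left_inj' I_ne_zero, ← ofReal_inj]
  push_cast
  rw [div_eq_iff two_ne_zero]
  ring_nf

theorem sol20_eq_span (hb : b ≠ 0) (hl : ∃ l : ℤ, b = 4 * Real.pi * l) :
    Sol20 a b = Submodule.span ℂ {xExp (b / 2 * I)} := by
  ext f
  rw [mem_sol20_iff hb, SetLike.mem_coe, and_iff_right_iff_imp, Submodule.mem_span_singleton]
  rintro ⟨C, rfl⟩
  exact ktPeriodic_smul_xExp_iff.2 (.inr (hl.imp fun _ => half_mul_I_eq_int_mul_two_pi_mul_I_iff.2))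

theorem sol20_eq_singleton_zero (hb : b ≠ 0) (hl : ¬ ∃ l : ℤ, b = 4 * Real.pi * l) :
    Sol20 a b = {0} := by
  ext f
  rw [mem_sol20_iff hb, Submodule.mem_span_singleton, Set.mem_singleton_iff]
  constructor
  · rintro ⟨hp, C, rfl⟩
    have hC : C = 0 := (ktPeriodic_smul_xExp_iff.1 hp).resolve_right fun hn =>
      hl (hn.imp fun _ => half_mul_I_eq_int_mul_two_pi_mul_I_iff.1)
    rw [hC, zero_smul]
  · rintro rfl
    exact ⟨fun _ _ _ _ => ⟨rfl, rfl, rfl, rfl⟩, 0, zero_smul ℂ _⟩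

end Solutions

/-- for `b ≠ 0`, the space computing `h^{2,0}` has dimension `1` when
`b ∈ 4πℤ` and dimension `0` when `b ∉ 4πℤ`; moreover for `b = 4πl`, `l ∈ ℤ \ {0}`, the
solutions are exactly the functions `C·e^{2πilx}`. -/
theorem hodge_number_h20_KT
    (a b : ℝ) (hb : b ≠ 0) :
    ((∃ l : ℤ, b = 4 * Real.pi * (l : ℝ)) → HasDimOver (Sol20 a b) 1) ∧
    (¬ (∃ l : ℤ, b = 4 * Real.pi * (l : ℝ)) → HasDimOver (Sol20 a b) 0) ∧
    (∀ l : ℤ, l ≠ 0 → b = 4 * Real.pi * (l : ℝ) →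
      Sol20 a b = {f | ∃ C : ℂ, f = fun (_t x _y _z : ℝ) =>
        C * Complex.exp (2 * Real.pi * Complex.I * (l : ℂ) * (x : ℂ))}) := by
  refine ⟨fun hl => ?_, fun hl => ?_, fun l _ hl => ?_⟩
  · rw [sol20_eq_span hb hl]
    exact hasDimOver_span_singleton (xExp_ne_zero _)
  · rw [sol20_eq_singleton_zero hb hl]
    exact hasDimOver_singleton_zero
  · have hμ : (b : ℂ) / 2 * I = 2 * Real.pi * I * l := by
      rw [half_mul_I_eq_int_mul_two_pi_mul_I_iff.2 hl, mul_comm]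
    rw [sol20_eq_span hb ⟨l, hl⟩, hμ]
    ext f
    rw [SetLike.mem_coe, Submodule.mem_span_singleton]
    exact exists_congr fun C => eq_comm
end

section
/- Let p, q be coprime integers with p ≠ 0 and 1 ≤ q ≤ 5. Write p² = 2^{α₀} · p₁^{α₁} ⋯ p_s^{α_s} · q₁^{β₁} ⋯ q_t^{β_t}, where the p_i are distinct primes ≡ 3 (mod 4) and the q_j are distinct primes ≡ 1 (mod 4). Then the number of pairs (l,m) ∈ ℤ² with (ql − p)² + (qm)² = p² equals 4·(β₁+1)⋯(β_t+1) if q = 1; 2·(β₁+1)⋯(β_t+1) if q = 2; and (β₁+1)⋯(β_t+1) if q ∈ {3,4,5}. -/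
open scoped BigOperators

/-!
The points to be counted correspond, via `z = (q l - p) + q m i`, to the Gaussian integers `z` of
norm `p²` with `z ≡ -p (mod q)`.

All Gaussian integers of norm `p²` are counted one prime at a time. If a prime `π` of `ℤ[i]` divides
its conjugate (`1 + i`, or a rational prime `≡ 3 (mod 4)`), then it divides every element of norm
`N(π) n`, so norms `N(π) n` and `n` are attained equally often. If `π` does not divide its conjugate
nor `n`, then an element of norm `N(π) ^ (b + 1) n` is either a multiple of `π` or a multiple of
`π̄ ^ (b + 1)`, but not both, so raising the exponent by one adds as many elements as there are of
norm `n`. Starting from the four units this gives `4 ∏ (βⱼ + 1)`.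

For `q ≤ 5` the equation `x² + y² = p²` forces `x + i y ≡ u p (mod q)` with a unit `u`. The four
residue classes of the `u p` are equally populated, and `u p`, `u' p` lie in the same class exactly
when `u ≡ u' (mod q)`. Hence a single class has a quarter of the elements for every unit
`≡ 1 (mod q)`; there are `4`, `2`, `1` such units for `q = 1`, `q = 2`, `q ≥ 3`.
-/

section Zsqrtd

variable {d : ℤ}

/-- The set of elements of norm `n` in `ℤ√d`. Its cardinality for `d = -1` is the number of
representations of `n` as an ordered sum of two integer squares. -/
def normSet (d n : ℤ) : Set (ℤ√d) := {z | z.norm = n}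

lemma mem_normSet {n : ℤ} {z : ℤ√d} : z ∈ normSet d n ↔ z.norm = n := Iff.rfl

lemma mul_mem_normSet {m n : ℤ} {z w : ℤ√d} (hz : z ∈ normSet d m) (hw : w ∈ normSet d n) :
    z * w ∈ normSet d (m * n) := by
  rw [mem_normSet, Zsqrtd.norm_mul, hz, hw]

lemma star_mem_normSet {n : ℤ} {z : ℤ√d} (hz : z ∈ normSet d n) : star z ∈ normSet d n := by
  rwa [mem_normSet, Zsqrtd.norm_conj]

lemma mul_star_eq_one {u : ℤ√d} (hu : u ∈ normSet d 1) : u * star u = 1 := by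
  rw [← Zsqrtd.norm_eq_mul_conj, hu, Int.cast_one]

lemma finite_normSet (hd : d < 0) (n : ℤ) : (normSet d n).Finite := by
  refine Set.Finite.of_injOn (f := fun z : ℤ√d => (z.re, z.im))
    (t := Set.Icc (-n) n ×ˢ Set.Icc (-n) n) ?_ ?_
    ((Set.finite_Icc _ _).prod (Set.finite_Icc _ _))
  · intro z hz
    have hz : z.re * z.re - d * z.im * z.im = n := hz
    have him : z.im * z.im ≤ -d * (z.im * z.im) :=
      le_mul_of_one_le_left (mul_self_nonneg _) (by omega)
    simp only [Set.mem_prod, Set.mem_Icc, ← abs_le]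
    have habs : ∀ x : ℤ, |x| ≤ x * x := fun x => by
      rw [← sq, ← sq_abs]
      exact Int.le_self_sq |x|
    constructor
    · nlinarith [habs z.re, mul_self_nonneg z.im]
    · nlinarith [habs z.im, mul_self_nonneg z.re]
  · intro z _ w _ h
    exact Zsqrtd.ext (congrArg Prod.fst h) (congrArg Prod.snd h)

lemma isDomain_zsqrtd_of_neg (hd : d < 0) : IsDomain (ℤ√d) :=
  have : NoZeroDivisors (ℤ√d) := ⟨fun {z w} h => by
    simpa only [← Zsqrtd.norm_eq_zero_iff hd, ← mul_eq_zero, ← Zsqrtd.norm_mul] using h⟩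
  NoZeroDivisors.to_isDomain (ℤ√d)

lemma ncard_normSet_norm_mul_dvd (hd : d < 0) {c : ℤ√d} (hc : c ≠ 0) (n : ℤ) :
    {z ∈ normSet d (c.norm * n) | c ∣ z}.ncard = (normSet d n).ncard := by
  have := isDomain_zsqrtd_of_neg hd
  have hc0 : c.norm ≠ 0 := mt (Zsqrtd.norm_eq_zero_iff hd c).1 hc
  have himage : {z ∈ normSet d (c.norm * n) | c ∣ z} = (c * ·) '' normSet d n := by
    ext z
    constructor
    · rintro ⟨hz, w, rfl⟩
      rw [mem_normSet, Zsqrtd.norm_mul] at hz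
      exact ⟨w, mul_left_cancel₀ hc0 hz, rfl⟩
    · rintro ⟨w, hw, rfl⟩
      exact ⟨mul_mem_normSet rfl hw, dvd_mul_right c w⟩
  rw [himage, Set.ncard_image_of_injective _ (mul_right_injective₀ hc)]

lemma star_pow_dvd_of_pow_dvd_norm (hd : d < 0) {π z : ℤ√d} (hπ : Prime π) {k : ℕ}
    (hk : π ^ k ∣ (z.norm : ℤ√d)) (hz : ¬ π ∣ z) : star π ^ k ∣ z := by
  have := isDomain_zsqrtd_of_neg hd
  rw [Zsqrtd.norm_eq_mul_conj] at hk
  obtain ⟨w, hw⟩ := hπ.pow_dvd_of_dvd_mul_left k hz hk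
  exact ⟨star w, by rw [← star_star z, hw, star_mul', star_pow]⟩

lemma pow_dvd_intCast_norm_pow_mul (c : ℤ√d) (k : ℕ) (n : ℤ) :
    c ^ k ∣ ((c.norm ^ k * n : ℤ) : ℤ√d) := by
  rw [Int.cast_mul, Int.cast_pow, Zsqrtd.norm_eq_mul_conj, mul_pow, mul_assoc]
  exact dvd_mul_right _ _

lemma ncard_normSet_norm_mul_of_dvd_star (hd : d < 0) {π : ℤ√d} (hπ : Prime π)
    (hstar : π ∣ star π) (n : ℤ) :
    (normSet d (π.norm * n)).ncard = (normSet d n).ncard := by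
  rw [← ncard_normSet_norm_mul_dvd hd hπ.ne_zero n, Set.sep_eq_self_iff_mem_true.2]
  intro z hz
  by_contra hndvd
  refine hndvd (hstar.trans ?_)
  simpa using star_pow_dvd_of_pow_dvd_norm hd hπ (k := 1)
    (by simpa [mem_normSet.1 hz] using pow_dvd_intCast_norm_pow_mul π 1 n) hndvd

lemma zsqrtd_norm_pow (c : ℤ√d) (k : ℕ) : (c ^ k).norm = c.norm ^ k :=
  map_pow Zsqrtd.normMonoidHom c k

lemma ncard_normSet_norm_pow_succ_mul_not_dvd (hd : d < 0) {π : ℤ√d} (hπ : Prime π)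
    (hstar : ¬ π ∣ star π) {n : ℤ} (hn : ¬ π ∣ (n : ℤ√d)) (b : ℕ) :
    {z ∈ normSet d (π.norm ^ (b + 1) * n) | ¬ π ∣ z}.ncard = (normSet d n).ncard := by
  have := isDomain_zsqrtd_of_neg hd
  have hnorm : (star π ^ (b + 1)).norm = π.norm ^ (b + 1) := by
    rw [zsqrtd_norm_pow, Zsqrtd.norm_conj]
  rw [← ncard_normSet_norm_mul_dvd hd (pow_ne_zero (b + 1) (star_ne_zero.2 hπ.ne_zero)) n, hnorm]
  congr 1
  ext z
  refine and_congr_right fun hz => ⟨fun hndvd => ?_, ?_⟩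
  · refine star_pow_dvd_of_pow_dvd_norm hd hπ ?_ hndvd
    rw [hz]
    exact pow_dvd_intCast_norm_pow_mul π _ n
  · rintro ⟨w, rfl⟩ hdvd
    have hw : w.norm = n := by
      rw [mem_normSet, Zsqrtd.norm_mul, hnorm] at hz
      exact mul_left_cancel₀ (pow_ne_zero _ (mt (Zsqrtd.norm_eq_zero_iff hd π).1 hπ.ne_zero)) hz
    rcases hπ.dvd_or_dvd hdvd with h | h
    · exact hstar (hπ.dvd_of_dvd_pow h)
    · rw [← hw, Zsqrtd.norm_eq_mul_conj] at hn
      exact hn (h.mul_right _)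

lemma ncard_normSet_norm_pow_mul (hd : d < 0) {π : ℤ√d} (hπ : Prime π)
    (hstar : ¬ π ∣ star π) {n : ℤ} (hn : ¬ π ∣ (n : ℤ√d)) (b : ℕ) :
    (normSet d (π.norm ^ b * n)).ncard = (b + 1) * (normSet d n).ncard := by
  induction b with
  | zero => simp
  | succ b ih =>
    have hdvd : {z ∈ normSet d (π.norm ^ (b + 1) * n) | π ∣ z}.ncard =
        (b + 1) * (normSet d n).ncard := by
      rw [pow_succ', mul_assoc, ncard_normSet_norm_mul_dvd hd hπ.ne_zero, ih]
    rw [← Set.ncard_inter_add_ncard_sdiff_eq_ncard _ {z | π ∣ z} (finite_normSet hd _)]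
    refine (congrArg₂ (· + ·) hdvd
      (ncard_normSet_norm_pow_succ_mul_not_dvd hd hπ hstar hn b)).trans ?_
    ring

lemma ncard_normSet_mul_left {u : ℤ√d} (hu : u ∈ normSet d 1) (n : ℤ) (P : ℤ√d → Prop) :
    {z ∈ normSet d n | P (u * z)}.ncard = {z ∈ normSet d n | P z}.ncard := by
  have hmem : ∀ {v z : ℤ√d}, v ∈ normSet d 1 → z ∈ normSet d n → v * z ∈ normSet d n :=
    fun hv hz => one_mul n ▸ mul_mem_normSet hv hz
  have hstar : ∀ z, u * (star u * z) = z := fun z => by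
    rw [← mul_assoc, mul_star_eq_one hu, one_mul]
  have hstar' : ∀ z, star u * (u * z) = z := fun z => by
    rw [mul_left_comm, hstar]
  refine Set.BijOn.ncard_eq (f := (u * ·)) (Set.InvOn.bijOn (f' := (star u * ·))
    ⟨fun z _ => hstar' z, fun z _ => hstar z⟩ ?_ ?_)
  · rintro z ⟨hz, hP⟩
    exact ⟨hmem hu hz, hP⟩
  · rintro z ⟨hz, hP⟩
    exact ⟨hmem (star_mem_normSet hu) hz, (hstar z).symm ▸ hP⟩

lemma dvd_star_mul_sub_iff {u : ℤ√d} (hu : u ∈ normSet d 1) {m x y : ℤ√d} :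
    m ∣ star u * x - y ↔ m ∣ x - u * y := by
  have hunit : IsUnit (star u) := .of_mul_eq_one_right u (mul_star_eq_one hu)
  rw [← hunit.dvd_mul_left (b := x - u * y), mul_sub, ← mul_assoc, mul_comm (star u) u,
    mul_star_eq_one hu, one_mul]

/-- Double counting of the pairs `(z, u)` with `z ≡ u a (mod m)`. -/
lemma ncard_normSet_mul_ncard_units_modEq (hd : d < 0) {m a : ℤ√d} (hcop : IsCoprime m a) {n : ℤ}
    (hunit : ∀ z ∈ normSet d n, ∃ u ∈ normSet d 1, m ∣ z - u * a) :
    (normSet d n).ncard * {u ∈ normSet d 1 | m ∣ u - 1}.ncard =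
      (normSet d 1).ncard * {z ∈ normSet d n | m ∣ z - a}.ncard := by
  classical
  have habove : ∀ z ∈ normSet d n,
      {u ∈ normSet d 1 | m ∣ z - u * a}.ncard = {u ∈ normSet d 1 | m ∣ u - 1}.ncard := by
    intro z hz
    obtain ⟨v, hv, hvz⟩ := hunit z hz
    rw [← ncard_normSet_mul_left (star_mem_normSet hv) 1 (m ∣ · - 1)]
    congr 1
    ext u
    refine and_congr_right fun _ => ?_
    calc m ∣ z - u * a ↔ m ∣ (z - v * a) - (z - u * a) := (dvd_sub_right hvz).symm
      _ ↔ m ∣ (u - v) * a := by rw [sub_sub_sub_cancel_left, sub_mul]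
      _ ↔ m ∣ u - v := ⟨hcop.dvd_of_dvd_mul_right, (Dvd.dvd.mul_right · a)⟩
      _ ↔ m ∣ star v * u - 1 := by rw [dvd_star_mul_sub_iff hv, mul_one]
  have hbelow : ∀ u ∈ normSet d 1,
      {z ∈ normSet d n | m ∣ z - u * a}.ncard = {z ∈ normSet d n | m ∣ z - a}.ncard := by
    intro u hu
    rw [← ncard_normSet_mul_left (star_mem_normSet hu) n (m ∣ · - a)]
    simp only [dvd_star_mul_sub_iff hu]
  have key := Finset.card_mul_eq_card_mul (fun z u : ℤ√d => m ∣ z - u * a)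
    (s := (finite_normSet hd n).toFinset) (t := (finite_normSet hd 1).toFinset)
    (m := {u ∈ normSet d 1 | m ∣ u - 1}.ncard) (n := {z ∈ normSet d n | m ∣ z - a}.ncard)
    (fun z hz => ?_) (fun u hu => ?_)
  · simpa only [Set.ncard_eq_toFinset_card _ (finite_normSet hd _)] using key
  · rw [← habove z (by simpa using hz), ← Set.ncard_coe_finset]
    simp [Finset.coe_bipartiteAbove]
  · rw [← hbelow u (by simpa using hu), ← Set.ncard_coe_finset]
    simp [Finset.coe_bipartiteBelow]

end Zsqrtd

section GaussianInt

lemma mem_normSet_neg_one_one {u : GaussianInt} :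
    u ∈ normSet (-1) 1 ↔ u = ⟨1, 0⟩ ∨ u = ⟨-1, 0⟩ ∨ u = ⟨0, 1⟩ ∨ u = ⟨0, -1⟩ := by
  obtain ⟨x, y⟩ := u
  simp only [mem_normSet, Zsqrtd.norm_def, Zsqrtd.ext_iff]
  constructor
  · intro h
    have hx : |x| ≤ 1 := abs_le_one_iff_mul_self_le_one.2 (by nlinarith [mul_self_nonneg y])
    have hy : |y| ≤ 1 := abs_le_one_iff_mul_self_le_one.2 (by nlinarith [mul_self_nonneg x])
    rw [abs_le] at hx hy
    obtain ⟨_, _⟩ := hx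
    obtain ⟨_, _⟩ := hy
    interval_cases x <;> interval_cases y <;> simp_all
  · rintro (⟨rfl, rfl⟩ | ⟨rfl, rfl⟩ | ⟨rfl, rfl⟩ | ⟨rfl, rfl⟩) <;> norm_num

lemma normSet_neg_one_one :
    normSet (-1) 1 = (({⟨1, 0⟩, ⟨-1, 0⟩, ⟨0, 1⟩, ⟨0, -1⟩} : Finset GaussianInt) :
      Set GaussianInt) := by
  ext u
  simp [mem_normSet_neg_one_one]

lemma ncard_normSet_neg_one_one : (normSet (-1) 1).ncard = 4 := by
  rw [normSet_neg_one_one, Set.ncard_coe_finset]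
  rfl

lemma ncard_units_modEq_one {q : ℤ} (hq : 1 ≤ q) :
    {u ∈ normSet (-1) 1 | (q : GaussianInt) ∣ u - 1}.ncard =
      if q = 1 then 4 else if q = 2 then 2 else 1 := by
  have hset : {u ∈ normSet (-1) 1 | (q : GaussianInt) ∣ u - 1} =
      (({⟨1, 0⟩, ⟨-1, 0⟩, ⟨0, 1⟩, ⟨0, -1⟩} : Finset GaussianInt).filter
        fun u => q ∣ u.re - 1 ∧ q ∣ u.im : Finset GaussianInt) := by
    ext u
    simp [normSet_neg_one_one, Zsqrtd.intCast_dvd]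
  rw [hset, Set.ncard_coe_finset]
  obtain rfl | rfl | hq3 : q = 1 ∨ q = 2 ∨ 3 ≤ q := by omega
  · rfl
  · rfl
  · have hq1 : ¬ q ∣ 1 := fun h => by have := Int.le_of_dvd one_pos h; omega
    have hq2 : ¬ q ∣ 2 := fun h => by have := Int.le_of_dvd two_pos h; omega
    rw [if_neg (by omega), if_neg (by omega)]
    simp [Finset.filter_insert, Finset.filter_singleton, hq1, hq2]

lemma prime_of_prime_norm {z : GaussianInt} (hz : Prime z.norm) : Prime z := by
  have : IsLocalHom (Zsqrtd.normMonoidHom : GaussianInt →* ℤ) :=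
    ⟨fun w hw => (Zsqrtd.isUnit_iff_norm_isUnit w).2 hw⟩
  exact (Irreducible.of_map (f := Zsqrtd.normMonoidHom) hz.irreducible).prime

lemma ncard_normSet_two_pow_mul (a : ℕ) (n : ℤ) :
    (normSet (-1) (2 ^ a * n)).ncard = (normSet (-1) n).ncard := by
  have hnorm : (⟨1, 1⟩ : GaussianInt).norm = 2 := rfl
  have hstar : (⟨1, 1⟩ : GaussianInt) ∣ star ⟨1, 1⟩ := ⟨⟨0, -1⟩, rfl⟩
  induction a with
  | zero => simp
  | succ a ih =>
    rw [pow_succ', mul_assoc, ← hnorm, ncard_normSet_norm_mul_of_dvd_star (by norm_num)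
      (prime_of_prime_norm (hnorm ▸ Int.prime_two)) hstar, hnorm, ih]

lemma ncard_normSet_sq_mul_of_inert {m : ℕ} (hm : ∀ r : ℕ, r.Prime → r ∣ m → r % 4 = 3) (n : ℤ) :
    (normSet (-1) ((m : ℤ) ^ 2 * n)).ncard = (normSet (-1) n).ncard := by
  induction m using induction_on_primes with
  | zero => simpa using hm 2 Nat.prime_two (dvd_zero 2)
  | one => simp
  | prime_mul r m hr ih =>
    have : Fact r.Prime := ⟨hr⟩
    have hprime : Prime (r : GaussianInt) :=
      GaussianInt.prime_of_nat_prime_of_mod_four_eq_three r (hm r hr (dvd_mul_right r m))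
    have hnorm : ((r * m : ℕ) : ℤ) ^ 2 * n = (r : GaussianInt).norm * ((m : ℤ) ^ 2 * n) := by
      rw [Zsqrtd.norm_natCast]
      push_cast
      ring
    rw [hnorm, ncard_normSet_norm_mul_of_dvd_star (by norm_num) hprime (by simp),
      ih fun s hs hsm => hm s hs (hsm.mul_left r)]

lemma exists_norm_eq_not_dvd_star {r : ℕ} (hr : r.Prime) (h1 : r % 4 = 1) :
    ∃ π : GaussianInt, π.norm = r ∧ ¬ π ∣ star π := by
  have : Fact r.Prime := ⟨hr⟩
  obtain ⟨a, b, hab⟩ := Nat.Prime.sq_add_sq (p := r) (by omega)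
  have hnorm : (⟨a, b⟩ : GaussianInt).norm = r := by
    rw [Zsqrtd.norm_def, ← hab]; push_cast; ring
  refine ⟨⟨a, b⟩, hnorm, ?_⟩
  rintro ⟨u, hu⟩
  have hu1 : u ∈ normSet (-1) 1 := by
    have h := congrArg Zsqrtd.norm hu
    rw [Zsqrtd.norm_conj, Zsqrtd.norm_mul, hnorm] at h
    exact (mul_eq_left₀ (by exact_mod_cast hr.ne_zero)).1 h.symm
  -- `π̄ = u π` with a unit `u` leaves only `π` on an axis or on the diagonal.
  have hcases : b = 0 ∨ a = 0 ∨ a = b := by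
    rcases mem_normSet_neg_one_one.1 hu1 with rfl | rfl | rfl | rfl <;>
      simp only [Zsqrtd.ext_iff, Zsqrtd.re_star, Zsqrtd.im_star, Zsqrtd.re_mul,
        Zsqrtd.im_mul] at hu <;>
      omega
  rcases hcases with rfl | rfl | rfl
  · exact hr.prime.not_isSquare ⟨a, by rw [← hab]; ring⟩
  · exact hr.prime.not_isSquare ⟨b, by rw [← hab]; ring⟩
  · omega

lemma ncard_normSet_prime_pow_mul {r : ℕ} (hr : r.Prime) (h1 : r % 4 = 1) {n : ℤ}
    (hn : IsCoprime (r : ℤ) n) (b : ℕ) :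
    (normSet (-1) ((r : ℤ) ^ b * n)).ncard = (b + 1) * (normSet (-1) n).ncard := by
  obtain ⟨π, hnorm, hstar⟩ := exists_norm_eq_not_dvd_star hr h1
  have hπ : Prime π := prime_of_prime_norm (hnorm ▸ Nat.prime_iff_prime_int.1 hr)
  have hπr : π ∣ ((r : ℤ) : GaussianInt) := by
    rw [← hnorm, Zsqrtd.norm_eq_mul_conj]
    exact dvd_mul_right π _
  have hπn : ¬ π ∣ (n : GaussianInt) := fun h => hπ.not_isUnit (hn.intCast.isUnit_of_dvd' hπr h)
  rw [← hnorm, ncard_normSet_norm_pow_mul (by norm_num) hπ hstar hπn]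

lemma ncard_normSet_prod_mul {ι : Type*} {T : Finset ι} {f : ι → ℕ} (e : ι → ℕ)
    (hf : ∀ i ∈ T, (f i).Prime) (h1 : ∀ i ∈ T, f i % 4 = 1) (hinj : Set.InjOn f T) {n : ℤ}
    (hn : ∀ i ∈ T, IsCoprime (f i : ℤ) n) :
    (normSet (-1) ((∏ i ∈ T, (f i : ℤ) ^ e i) * n)).ncard =
      (∏ i ∈ T, (e i + 1)) * (normSet (-1) n).ncard := by
  classical
  induction T using Finset.induction_on with
  | empty => simp
  | insert i T hi ih =>
    simp only [Finset.forall_mem_insert] at hf h1 hn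
    have hcop : IsCoprime (f i : ℤ) ((∏ j ∈ T, (f j : ℤ) ^ e j) * n) := by
      refine (IsCoprime.prod_right fun j hj => .pow_right ?_).mul_right hn.1
      rw [Nat.isCoprime_iff_coprime, Nat.coprime_primes hf.1 (hf.2 j hj)]
      refine fun heq => hi ?_
      rwa [hinj (by simp) (by simp [hj]) heq]
    rw [Finset.prod_insert hi, Finset.prod_insert hi, mul_assoc,
      ncard_normSet_prime_pow_mul hf.1 h1.1 hcop,
      ih hf.2 h1.2 (hinj.mono (by simp)) hn.2, mul_assoc]

lemma ncard_normSet_sq_of_factorization {ι : Type*} {T : Finset ι} {p : ℤ} {m a : ℕ} {f : ι → ℕ}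
    {e : ι → ℕ} (hm : ∀ r : ℕ, r.Prime → r ∣ m → r % 4 = 3) (hf : ∀ i ∈ T, (f i).Prime)
    (h1 : ∀ i ∈ T, f i % 4 = 1) (hinj : Set.InjOn f T)
    (hp : p ^ 2 = 2 ^ a * m * ∏ i ∈ T, (f i : ℤ) ^ e i) :
    (normSet (-1) (p ^ 2)).ncard = 4 * ∏ i ∈ T, (e i + 1) := by
  have hcop : ∀ r : ℕ, r.Prime → r % 4 ≠ 3 → IsCoprime (m : ℤ) r := fun r hr hr3 =>
    Nat.isCoprime_iff_coprime.2 (hr.coprime_iff_not_dvd.2 fun h => hr3 (hm r hr h)).symm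
  obtain ⟨k, rfl⟩ : ∃ k : ℕ, m = k ^ 2 := by
    have h : IsCoprime (m : ℤ) (2 ^ a * ∏ i ∈ T, (f i : ℤ) ^ e i) :=
      (hcop 2 Nat.prime_two (by norm_num)).pow_right.mul_right <| .prod_right fun i hi =>
        (hcop (f i) (hf i hi) (by rw [h1 i hi]; norm_num)).pow_right
    obtain ⟨k, hk⟩ := Int.sq_of_isCoprime h (by rw [hp]; ring : _ = p ^ 2)
    refine ⟨k.natAbs, ?_⟩
    rcases hk with hk | hk <;> simpa [Int.natAbs_pow] using congrArg Int.natAbs hk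
  have hodd : ∀ i ∈ T, IsCoprime (f i : ℤ) (2 ^ a) := fun i hi => by
    have hne : f i ≠ 2 := fun h => by simpa [h] using h1 i hi
    exact .pow_right <| Nat.isCoprime_iff_coprime.2 <|
      (Nat.coprime_primes (hf i hi) Nat.prime_two).2 hne
  have hfact : p ^ 2 = (k : ℤ) ^ 2 * ((∏ i ∈ T, (f i : ℤ) ^ e i) * (2 ^ a * 1)) := by
    rw [hp]
    push_cast
    ring
  rw [hfact, ncard_normSet_sq_mul_of_inert fun r hr hrk => hm r hr (hrk.pow two_ne_zero),
    ncard_normSet_prod_mul e hf h1 hinj (by simpa using hodd), ncard_normSet_two_pow_mul,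
    ncard_normSet_neg_one_one, mul_comm]

lemma dvd_of_sq_add_sq_eq_sq {p q x y : ℤ} (hcop : IsCoprime p q) (hq1 : 1 ≤ q) (hq5 : q ≤ 5)
    (h : x ^ 2 + y ^ 2 = p ^ 2) :
    (q ∣ y ∧ (q ∣ x - p ∨ q ∣ x + p)) ∨ (q ∣ x ∧ (q ∣ y - p ∨ q ∣ y + p)) := by
  lift q to ℕ using by omega
  -- The equation modulo `q` is too weak for `q = 4`, where `x ≡ 2`, `y ≡ p ≡ 1` solves it.
  have hdvd : ∀ z : ℤ, (q : ℤ) ∣ z ↔ (2 * z : ZMod (2 * q)) = 0 := fun z => by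
    have := ZMod.intCast_zmod_eq_zero_iff_dvd (2 * z) (2 * q)
    push_cast at this
    rw [this, mul_dvd_mul_iff_left two_ne_zero]
  have hmod : (x : ZMod (2 * q)) ^ 2 + (y : ZMod (2 * q)) ^ 2 = (p : ZMod (2 * q)) ^ 2 := by
    exact_mod_cast congrArg (Int.cast : ℤ → ZMod (2 * q)) h
  have hp : q ≠ 1 → (2 * p : ZMod (2 * q)) ≠ 0 := fun hq hp => by
    have := Int.isUnit_iff.1 (hcop.isUnit_of_dvd' ((hdvd p).2 hp) dvd_rfl)
    omega
  have key : ∀ x y p : ZMod (2 * q), x ^ 2 + y ^ 2 = p ^ 2 → (q ≠ 1 → 2 * p ≠ 0) →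
      (2 * y = 0 ∧ (2 * (x - p) = 0 ∨ 2 * (x + p) = 0)) ∨
      (2 * x = 0 ∧ (2 * (y - p) = 0 ∨ 2 * (y + p) = 0)) := by
    obtain rfl | rfl | rfl | rfl | rfl : q = 1 ∨ q = 2 ∨ q = 3 ∨ q = 4 ∨ q = 5 := by omega
    all_goals decide
  simpa [hdvd] using key x y p hmod hp

lemma exists_mem_normSet_one_dvd_sub_mul {p q : ℤ} (hcop : IsCoprime p q) (hq1 : 1 ≤ q)
    (hq5 : q ≤ 5) {z : GaussianInt} (hz : z ∈ normSet (-1) (p ^ 2)) :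
    ∃ u ∈ normSet (-1) 1, (q : GaussianInt) ∣ z - u * p := by
  have h : z.re ^ 2 + z.im ^ 2 = p ^ 2 := by
    rw [← mem_normSet.1 hz, Zsqrtd.norm_def]
    ring
  simp only [mem_normSet_neg_one_one, exists_eq_or_imp, exists_eq_left, Zsqrtd.intCast_dvd]
  simpa [and_comm, and_or_left, or_assoc] using dvd_of_sq_add_sq_eq_sq hcop hq1 hq5 h

lemma four_mul_ncard_normSet_sq_modEq {p q : ℤ} (hcop : IsCoprime p q) (hq1 : 1 ≤ q)
    (hq5 : q ≤ 5) :
    4 * {z ∈ normSet (-1) (p ^ 2) | (q : GaussianInt) ∣ z - p}.ncard =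
      (normSet (-1) (p ^ 2)).ncard * if q = 1 then 4 else if q = 2 then 2 else 1 := by
  rw [← ncard_units_modEq_one hq1, ncard_normSet_mul_ncard_units_modEq (by norm_num)
    hcop.symm.intCast fun z hz => exists_mem_normSet_one_dvd_sub_mul hcop hq1 hq5 hz,
    ncard_normSet_neg_one_one]

lemma ncard_pairs_eq_ncard_normSet_modEq {q : ℤ} (hq : q ≠ 0) (a n : ℤ) :
    {lm : ℤ × ℤ | (q * lm.1 + a) ^ 2 + (q * lm.2) ^ 2 = n}.ncard =
      {z ∈ normSet (-1) n | (q : GaussianInt) ∣ z - a}.ncard := by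
  have hnorm : ∀ l m : ℤ,
      (⟨q * l + a, q * m⟩ : GaussianInt).norm = (q * l + a) ^ 2 + (q * m) ^ 2 := fun l m => by
    rw [Zsqrtd.norm_def]
    ring
  refine Set.BijOn.ncard_eq (f := fun lm => (⟨q * lm.1 + a, q * lm.2⟩ : GaussianInt)) ⟨?_, ?_, ?_⟩
  · rintro ⟨l, m⟩ hlm
    exact ⟨(hnorm l m).trans hlm, (Zsqrtd.intCast_dvd _ _).2 (by simp)⟩
  · rintro ⟨l, m⟩ - ⟨l', m'⟩ - h
    simpa [Zsqrtd.ext_iff, hq] using h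
  · rintro ⟨x, y⟩ ⟨hz, hdvd⟩
    obtain ⟨⟨l, hl⟩, m, hm⟩ := (Zsqrtd.intCast_dvd _ _).1 hdvd
    obtain rfl : x = q * l + a := by simpa [sub_eq_iff_eq_add] using hl
    obtain rfl : y = q * m := by simpa using hm
    exact ⟨(l, m), (hnorm l m).symm.trans hz, rfl⟩

end GaussianInt

/-- Holt–Zhang / Gauss circle counting: for coprime `p, q` with `p ≠ 0`
and `1 ≤ q ≤ 5`, writing `p² = 2^α₀ · ∏ pᵢ^αᵢ · ∏ qⱼ^βⱼ` with the `pᵢ` distinct primes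
`≡ 3 (mod 4)` and the `qⱼ` distinct primes `≡ 1 (mod 4)`, the number of integer pairs
`(l,m)` with `(ql − p)² + (qm)² = p²` equals `4·∏(βⱼ+1)` if `q = 1`, `2·∏(βⱼ+1)` if
`q = 2`, and `∏(βⱼ+1)` if `q ∈ {3,4,5}`. -/
theorem lattice_points_on_circle_count
    (p q : ℤ) (hcop : IsCoprime p q) (hp : p ≠ 0) (hq1 : 1 ≤ q) (hq5 : q ≤ 5)
    (α₀ s t : ℕ) (pr : Fin s → ℕ) (α : Fin s → ℕ) (qr : Fin t → ℕ) (β : Fin t → ℕ)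
    (hprP : ∀ i, Nat.Prime (pr i)) (hpr3 : ∀ i, pr i % 4 = 3)
    (hprInj : Function.Injective pr)
    (hqrP : ∀ j, Nat.Prime (qr j)) (hqr1 : ∀ j, qr j % 4 = 1)
    (hqrInj : Function.Injective qr)
    (hfact : p ^ 2 = 2 ^ α₀ * (∏ i, (pr i : ℤ) ^ α i) * ∏ j, (qr j : ℤ) ^ β j) :
    Set.ncard {lm : ℤ × ℤ | (q * lm.1 - p) ^ 2 + (q * lm.2) ^ 2 = p ^ 2} =
      (if q = 1 then 4 else if q = 2 then 2 else 1) * ∏ j, (β j + 1) := by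
  have hinert : ∀ r : ℕ, r.Prime → r ∣ ∏ i, pr i ^ α i → r % 4 = 3 := fun r hr hdvd => by
    obtain ⟨i, -, hi⟩ := hr.prime.exists_mem_finset_dvd hdvd
    rw [(Nat.prime_dvd_prime_iff_eq hr (hprP i)).1 (hr.dvd_of_dvd_pow hi), hpr3]
  have hcircle : (normSet (-1) (p ^ 2)).ncard = 4 * ∏ j, (β j + 1) :=
    ncard_normSet_sq_of_factorization hinert (fun j _ => hqrP j) (fun j _ => hqr1 j)
      hqrInj.injOn (by exact_mod_cast hfact)
  have hclass := four_mul_ncard_normSet_sq_modEq hcop.neg_left hq1 hq5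
  rw [neg_sq, hcircle] at hclass
  simp only [sub_eq_add_neg]
  rw [ncard_pairs_eq_ncard_normSet_modEq (by omega)]
  linarith
end

section
/- Let d ∈ ℚ with d ≠ 0 and set b = 8πd. Then there do not exist integers k and n with n ≠ 0 and a nonpositive integer N such that (π²/n)·(k − (n/b)i − d·i)·(k + (n/b)i − d·i) = 4πN, where i is the imaginary unit. (Consequently, when b/(8π) is rational, the sectors ℋ_{k,m,n} with n ≠ 0 contribute no ∂̄-harmonic (0,1)-forms on the Kodaira–Thurston manifold.) -/
open Complex

/-!
Put `c = k - di`. Clearing denominators turns the equation into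
`64 d² c² π² - 256 N n d² π + n² = 0`, a quadratic relation for `π` with algebraic coefficients and
nonzero constant term, which contradicts the transcendence of `π`.

The latter is proved by Lindemann's argument. Suppose `exp z = -1` and `a z` is an algebraic
integer, with conjugates `r₁, …, rₙ`. Expanding `∏ᵢ (1 + exp (rᵢ / a)) = 0` gives `∑ₜ exp (wₜ) = 0`,
where `a wₜ` ranges over the subset sums of the `rᵢ`. The `q` vanishing exponents contribute the
positive integer `q`, so it remains to refute `q + ∑ exp (wₜ) = 0` over the nonzero `wₜ`. For large
primes `p`, Hermite's method approximates all `exp (wₜ)` by `p g(wₜ) / m`, with `g` an integer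
polynomial and `p ∤ m`, so well that, after multiplication by `m` and a power of `a`, the relation
produces an integer of absolute value less than `1` that is not divisible by `p`. That it is an
integer rests on the sums `∑ₜ g(a wₜ)` being symmetric in the `rᵢ`.
-/

section SubsetSums

open MvPolynomial

lemma isSymmetric_sum_finset_aeval_sum_X {σ R : Type*} [Fintype σ] [CommSemiring R]
    (g : Polynomial R) :
    (∑ t : Finset σ, Polynomial.aeval (∑ i ∈ t, X i) g : MvPolynomial σ R).IsSymmetric := by
  intro e
  rw [map_sum]
  refine Fintype.sum_equiv e.finsetCongr _ _ fun t ↦ ?_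
  rw [← Polynomial.aeval_algHom_apply, map_sum]
  simp

variable {σ R S : Type*} [Fintype σ] [CommRing R] [CommRing S] [Algebra R S]
  {T : Subalgebra R S} {x : σ → S}

lemma aeval_mem_of_isSymmetric (hx : ∀ n, aeval x (esymm σ R n) ∈ T)
    {φ : MvPolynomial σ R} (hφ : φ.IsSymmetric) : aeval x φ ∈ T := by
  obtain ⟨ψ, hψ⟩ := esymmAlgHom_surjective R le_rfl ⟨φ, hφ⟩
  have hψφ : aeval (fun i : Fin (Fintype.card σ) ↦ esymm σ R (i + 1)) ψ = φ := by
    rw [← esymmAlgHom_apply, hψ]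
  rw [← hψφ, comp_aeval_apply]
  exact eval₂_mem (fun _ _ ↦ T.algebraMap_mem _) fun i ↦ hx _

lemma aeval_esymm_mem_of_coeff_prod_mem
    (hx : ∀ n, (∏ i, (Polynomial.X - Polynomial.C (x i))).coeff n ∈ T) (n : ℕ) :
    aeval x (esymm σ R n) ∈ T := by
  rw [aeval_esymm_eq_multiset_esymm]
  set m : Multiset S := Finset.univ.val.map x with hm
  have hprod : ∏ i, (Polynomial.X - Polynomial.C (x i)) =
      (m.map fun r ↦ Polynomial.X - Polynomial.C r).prod := by
    rw [hm, Multiset.map_map]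
    rfl
  rcases le_or_gt n m.card with hn | hn
  · have hcoeff := hx (m.card - n)
    rw [hprod, Multiset.prod_X_sub_C_coeff _ (Nat.sub_le _ _), Nat.sub_sub_self hn] at hcoeff
    simpa [← mul_assoc, ← mul_pow] using
      T.mul_mem (T.pow_mem (T.neg_mem T.one_mem) n) hcoeff
  · rw [Multiset.esymm, Multiset.powersetCard_eq_empty n hn, Multiset.map_zero, Multiset.sum_zero]
    exact T.zero_mem

lemma sum_finset_aeval_sum_mem
    (hx : ∀ n, (∏ i, (Polynomial.X - Polynomial.C (x i))).coeff n ∈ T) (g : Polynomial R) :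
    ∑ t : Finset σ, Polynomial.aeval (∑ i ∈ t, x i) g ∈ T := by
  have hmem := aeval_mem_of_isSymmetric (aeval_esymm_mem_of_coeff_prod_mem hx)
    (isSymmetric_sum_finset_aeval_sum_X g)
  simpa only [map_sum, ← Polynomial.aeval_algHom_apply, aeval_X] using hmem

end SubsetSums

open Polynomial

lemma exists_fin_prod_X_sub_C_eq {R : Type*} [CommRing R] [IsDomain R] {p : R[X]}
    (hp : p.Monic) (hsplits : p.Splits) :
    ∃ (n : ℕ) (r : Fin n → R), ∏ i, (X - C (r i)) = p := by
  refine ⟨_, p.roots.toList.get, ?_⟩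
  rw [← List.prod_ofFn, ← Function.comp_def (fun a ↦ X - C a) p.roots.toList.get,
    ← List.map_ofFn, List.ofFn_get, ← Multiset.prod_coe, ← Multiset.map_coe, Multiset.coe_toList]
  exact (hsplits.eq_prod_roots_of_monic hp).symm

lemma exists_prod_X_sub_C_coeff_mem_bot_of_isIntegral {R L : Type*} [CommRing R] [Field L]
    [IsAlgClosed L] [Algebra R L] {x : L} (hx : IsIntegral R x) :
    ∃ (n : ℕ) (r : Fin n → L), (∃ j, r j = x) ∧ (∀ i, IsIntegral R (r i)) ∧
      ∀ m, (∏ i, (X - C (r i))).coeff m ∈ (⊥ : Subalgebra R L) := by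
  obtain ⟨p, hp, hpx⟩ := hx
  obtain ⟨n, r, hr⟩ := exists_fin_prod_X_sub_C_eq (hp.map (algebraMap R L)) (IsAlgClosed.splits _)
  have heval (y : L) : eval₂ (algebraMap R L) y p = ∏ i, (y - r i) := by
    rw [eval₂_eq_eval_map, ← hr, eval_prod]
    simp only [eval_sub, eval_X, eval_C]
  refine ⟨n, r, ?_, fun i ↦ ⟨p, hp, ?_⟩, fun m ↦ ?_⟩
  · obtain ⟨j, -, hj⟩ := Finset.prod_eq_zero_iff.mp ((heval x).symm.trans hpx)
    exact ⟨j, (sub_eq_zero.mp hj).symm⟩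
  · rw [heval, Finset.prod_eq_zero (Finset.mem_univ i) (sub_self _)]
  · rw [hr, coeff_map]
    exact Subalgebra.algebraMap_mem _ _

lemma exists_polynomial_eval_zero_ne_zero_of_isAlgebraic {ι R S : Type*} [CommRing R] [IsDomain R]
    [CommRing S] [IsDomain S] [Algebra R S] {s : Finset ι} {w : ι → S}
    (halg : ∀ i ∈ s, IsAlgebraic R (w i)) (hw : ∀ i ∈ s, w i ≠ 0) :
    ∃ f : R[X], f.eval 0 ≠ 0 ∧ ∀ i ∈ s, aeval (w i) f = 0 := by
  choose! q hq0 hq using fun i hi ↦ (halg i hi).exists_nonzero_coeff_and_aeval_eq_zero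
    (mem_nonZeroDivisors_of_ne_zero (hw i hi))
  refine ⟨∏ i ∈ s, q i, ?_, fun i hi ↦ ?_⟩
  · rw [eval_prod, Finset.prod_ne_zero_iff]
    simpa only [coeff_zero_eq_eval_zero] using hq0
  · rw [map_prod, Finset.prod_eq_zero hi (hq i hi)]

lemma pow_smul_sum_aeval_mem {ι R S : Type*} [CommSemiring R] [CommSemiring S] [Algebra R S]
    {T : Subalgebra R S} {s : Finset ι} {w : ι → S} {a : R}
    (hT : ∀ g : R[X], ∑ i ∈ s, aeval (a • w i) g ∈ T) {g : R[X]} {M : ℕ} (hg : g.natDegree ≤ M) :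
    a ^ M • ∑ i ∈ s, aeval (w i) g ∈ T := by
  have hscale (i : ι) : aeval (a • w i) (g.scaleRoots a) = a ^ g.natDegree • aeval (w i) g := by
    simpa only [aeval_def, Algebra.smul_def, map_pow] using
      scaleRoots_eval₂_mul (algebraMap R S) (w i) a
  rw [← Nat.sub_add_cancel hg, pow_add, mul_smul, Finset.smul_sum]
  simpa only [hscale] using T.smul_mem (hT (g.scaleRoots a)) (a ^ (M - g.natDegree))

lemma eq_zero_of_quadratic_eq_zero_of_transcendental {K L : Type*} [Field K] [Field L]
    [Algebra K L] {x : L} (hx : Transcendental K x) {a b c : L} (ha : IsAlgebraic K a)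
    (hb : IsAlgebraic K b) (hc : IsAlgebraic K c) (h : a * x ^ 2 + b * x + c = 0) : c = 0 := by
  lift a to algebraicClosure K L using mem_algebraicClosure_iff.mpr ha
  lift b to algebraicClosure K L using mem_algebraicClosure_iff.mpr hb
  lift c to algebraicClosure K L using mem_algebraicClosure_iff.mpr hc
  have hroot : aeval x (C a * X ^ 2 + C b * X + C c) = 0 := by simpa using h
  have hpoly := transcendental_iff.mp (hx.extendScalars (algebraicClosure K L)) _ hroot
  simpa using congrArg (coeff · 0) hpoly

open Filter Topology in
lemma exists_prime_gt_mul_pow_div_factorial_lt (C D : ℝ) (N : ℕ) {ε : ℝ} (hε : 0 < ε) :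
    ∃ p > N, p.Prime ∧ C * (D ^ p / (p - 1).factorial) < ε := by
  have hlim : Tendsto (fun q : ℕ ↦ C * (D * (D ^ q / q.factorial))) atTop (𝓝 0) := by
    simpa using ((FloorSemiring.tendsto_pow_div_factorial_atTop D).const_mul D).const_mul C
  obtain ⟨q₀, hq₀⟩ := eventually_atTop.mp (hlim.eventually (gt_mem_nhds hε))
  obtain ⟨p, hp_ge, hp⟩ := Nat.exists_infinite_primes (q₀ + N + 1)
  refine ⟨p, by lia, hp, ?_⟩
  have hDp : D ^ p = D * D ^ (p - 1) := by rw [← pow_succ', Nat.sub_add_cancel hp.one_le]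
  simpa only [hDp, mul_div_assoc] using hq₀ (p - 1) (by lia)

section ExpSums

variable {ι : Type*} {s : Finset ι} {w : ι → ℂ}

lemma exists_norm_sum_exp_sub_sum_aeval_le {f : ℤ[X]} (hf : f.eval 0 ≠ 0)
    (hroot : ∀ i ∈ s, aeval (w i) f = 0) :
    ∃ c : ℝ, ∀ p > (f.eval 0).natAbs, p.Prime → ∃ n : ℤ, ¬ (p : ℤ) ∣ n ∧
      ∃ g : ℤ[X], g.natDegree ≤ p * f.natDegree ∧
        ‖n * ∑ i ∈ s, exp (w i) - p * ∑ i ∈ s, aeval (w i) g‖ ≤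
          s.card * (c ^ p / (p - 1).factorial) := by
  have hf0 : f ≠ 0 := by rintro rfl; exact hf eval_zero
  obtain ⟨c, hc⟩ := LindemannWeierstrass.exp_polynomial_approx f hf
  refine ⟨c, fun p hpf hp ↦ ?_⟩
  obtain ⟨n, hn, g, hg, happrox⟩ := hc p hpf hp
  refine ⟨n, hn, g, hg.trans (Nat.sub_le _ _), ?_⟩
  rw [Finset.mul_sum, Finset.mul_sum, ← Finset.sum_sub_distrib, ← nsmul_eq_mul]
  refine (norm_sum_le _ _).trans (Finset.sum_le_card_nsmul _ _ _ fun i hi ↦ ?_)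
  simpa only [zsmul_eq_mul, nsmul_eq_mul] using happrox (mem_aroots.mpr ⟨hf0, hroot i hi⟩)

lemma intCast_add_sum_exp_ne_zero {a k : ℤ} (ha : a ≠ 0) (hk : k ≠ 0) {f : ℤ[X]}
    (hf : f.eval 0 ≠ 0) (hroot : ∀ i ∈ s, aeval (w i) f = 0)
    (hint : ∀ g : ℤ[X], ∑ i ∈ s, aeval (a • w i) g ∈ (⊥ : Subalgebra ℤ ℂ)) :
    k + ∑ i ∈ s, exp (w i) ≠ 0 := by
  intro hsum
  obtain ⟨c, hc⟩ := exists_norm_sum_exp_sub_sum_aeval_le hf hroot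
  set e := f.natDegree
  obtain ⟨p, hpN, hp, hsmall⟩ := exists_prime_gt_mul_pow_div_factorial_lt s.card (|(a : ℝ)| ^ e * c)
    ((f.eval 0).natAbs + a.natAbs + k.natAbs) one_pos
  obtain ⟨n, hpn, g, hg, happrox⟩ := hc p (by lia) hp
  obtain ⟨m, hm⟩ := Algebra.mem_bot.mp (pow_smul_sum_aeval_mem hint hg)
  have hpndvd {x : ℤ} (hx : x ≠ 0) (hxp : x.natAbs < p) : ¬ (p : ℤ) ∣ x := fun h ↦
    (Int.natAbs_le_of_dvd_ne_zero h hx).not_gt hxp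
  have hpZ : Prime (p : ℤ) := Nat.prime_iff_prime_int.mp hp
  have hndvd : ¬ (p : ℤ) ∣ a ^ (p * e) * (n * k) + p * m := by
    rw [dvd_add_left (dvd_mul_right _ _), hpZ.dvd_mul, hpZ.dvd_mul]
    rintro (h | h | h)
    · exact hpndvd ha (by lia) (hpZ.dvd_of_dvd_pow h)
    · exact hpn h
    · exact hpndvd hk (by lia) h
  have hnorm : ‖((a ^ (p * e) * (n * k) + p * m : ℤ) : ℂ)‖ < 1 := calc
    _ = |(a : ℝ)| ^ (p * e) * ‖n * ∑ i ∈ s, exp (w i) - p * ∑ i ∈ s, aeval (w i) g‖ := by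
      rw [← norm_intCast, ← norm_pow, ← norm_mul, ← norm_neg]
      rw [eq_intCast, zsmul_eq_mul] at hm
      congr 1
      push_cast at hm ⊢
      linear_combination (-a ^ (p * e) * n : ℂ) * hsum - p * hm
    _ ≤ |(a : ℝ)| ^ (p * e) * (s.card * (c ^ p / (p - 1).factorial)) := by gcongr
    _ = s.card * ((|(a : ℝ)| ^ e * c) ^ p / (p - 1).factorial) := by ring
    _ < 1 := hsmall
  rw [norm_intCast] at hnorm
  have hzero : a ^ (p * e) * (n * k) + p * m = 0 := Int.abs_lt_one_iff.mp (by exact_mod_cast hnorm)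
  exact hndvd (hzero ▸ dvd_zero _)

lemma sum_exp_ne_zero_of_isAlgebraic {a : ℤ} (ha : a ≠ 0)
    (halg : ∀ i ∈ s, IsAlgebraic ℤ (w i)) (hzero : ∃ i ∈ s, w i = 0)
    (hint : ∀ g : ℤ[X], ∑ i ∈ s, aeval (a • w i) g ∈ (⊥ : Subalgebra ℤ ℂ)) :
    ∑ i ∈ s, exp (w i) ≠ 0 := by
  classical
  set s₀ := s.filter (w · = 0)
  set s₁ := s.filter (¬ w · = 0)
  have hs₀ {i : ι} (hi : i ∈ s₀) : w i = 0 := (Finset.mem_filter.mp hi).2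
  have hs₁ {i : ι} (hi : i ∈ s₁) : i ∈ s ∧ w i ≠ 0 := Finset.mem_filter.mp hi
  obtain ⟨f, hf, hroot⟩ := exists_polynomial_eval_zero_ne_zero_of_isAlgebraic
    (fun i hi ↦ halg i (hs₁ hi).1) (fun i hi ↦ (hs₁ hi).2)
  have hcard : (s₀.card : ℤ) ≠ 0 := by
    obtain ⟨i, hi, hwi⟩ := hzero
    exact_mod_cast Finset.card_ne_zero_of_mem (Finset.mem_filter.mpr ⟨hi, hwi⟩)
  have hint₁ (g : ℤ[X]) : ∑ i ∈ s₁, aeval (a • w i) g ∈ (⊥ : Subalgebra ℤ ℂ) := by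
    have hint₀ : ∑ i ∈ s₀, aeval (a • w i) g ∈ (⊥ : Subalgebra ℤ ℂ) := sum_mem fun i hi ↦ by
      rw [hs₀ hi, smul_zero, ← map_zero (algebraMap ℤ ℂ), aeval_algebraMap_apply]
      exact Subalgebra.algebraMap_mem _ _
    rw [← add_mem_cancel_left hint₀, Finset.sum_filter_add_sum_filter_not]
    exact hint g
  have hexp₀ : ∑ i ∈ s₀, exp (w i) = (s₀.card : ℤ) := by
    rw [Finset.sum_congr rfl fun i hi ↦ by rw [hs₀ hi, exp_zero]]
    simp
  rw [← Finset.sum_filter_add_sum_filter_not s (w · = 0), hexp₀]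
  exact intCast_add_sum_exp_ne_zero ha hcard hf hroot hint₁

end ExpSums

lemma exp_ne_neg_one_of_isAlgebraic {z : ℂ} (hz : IsAlgebraic ℤ z) : exp z ≠ -1 := by
  intro hexp
  obtain ⟨a, ha, haz⟩ := hz.exists_integral_multiple
  have haC : (a : ℂ) ≠ 0 := Int.cast_ne_zero.mpr ha
  obtain ⟨n, r, ⟨j, hj⟩, hr, hcoeff⟩ := exists_prod_X_sub_C_coeff_mem_bot_of_isIntegral haz
  let w (t : Finset (Fin n)) : ℂ := ∑ i ∈ t, r i / a
  have haw (t) : a • w t = ∑ i ∈ t, r i := by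
    simp only [w, ← Finset.sum_div, zsmul_eq_mul, mul_div_cancel₀ _ haC]
  have hw (t) : IsAlgebraic ℤ (w t) := by
    refine .of_mul (mem_nonZeroDivisors_of_ne_zero haC) (isAlgebraic_intCast a) ?_
    rw [← zsmul_eq_mul, haw]
    exact (IsIntegral.sum _ fun i _ ↦ hr i).isAlgebraic
  have hint (g : ℤ[X]) : ∑ t, aeval (a • w t) g ∈ (⊥ : Subalgebra ℤ ℂ) := by
    simpa only [haw] using sum_finset_aeval_sum_mem hcoeff g
  refine sum_exp_ne_zero_of_isAlgebraic ha (fun t _ ↦ hw t)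
    ⟨∅, Finset.mem_univ _, Finset.sum_empty⟩ hint ?_
  calc ∑ t, exp (w t) = ∏ i, (1 + exp (r i / a)) := by
        simp only [w, Finset.prod_one_add, Finset.powerset_univ, exp_sum]
    _ = 0 := Finset.prod_eq_zero (Finset.mem_univ j) (by
        rw [hj, zsmul_eq_mul, mul_div_cancel_left₀ _ haC, hexp, add_neg_cancel])

theorem transcendental_pi : Transcendental ℚ (Real.pi : ℂ) := fun hπ ↦
  exp_ne_neg_one_of_isAlgebraic ((IsFractionRing.isAlgebraic_iff ℤ ℚ ℂ).mpr
    (hπ.mul isIntegral_rat_I.isAlgebraic)) exp_pi_mul_I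

theorem no_infinite_orbit_solutions_of_rational_d_general {d b k n N : ℂ} (hd : d ≠ 0)
    (hb : b = 8 * Real.pi * d) (hn : n ≠ 0)
    (hdalg : IsAlgebraic ℚ d) (hkalg : IsAlgebraic ℚ k) (hnalg : IsAlgebraic ℚ n)
    (hNalg : IsAlgebraic ℚ N) :
    (Real.pi : ℂ) ^ 2 / n * (k - n / b * I - d * I) * (k + n / b * I - d * I) ≠
      4 * Real.pi * N := by
  intro h
  have hπ : (Real.pi : ℂ) ≠ 0 := ofReal_ne_zero.mpr Real.pi_ne_zero
  have hquad : (8 * d * (k - d * I)) ^ 2 * Real.pi ^ 2 + -(256 * N * n * d ^ 2) * Real.pi + n ^ 2 =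
      0 := by
    rw [hb] at h
    field_simp at h
    linear_combination h + n ^ 2 * I_sq
  have hIalg : IsAlgebraic ℚ I := isIntegral_rat_I.isAlgebraic
  have hlead : IsAlgebraic ℚ ((8 * d * (k - d * I)) ^ 2) :=
    (((isAlgebraic_natCast 8).mul hdalg).mul (hkalg.sub (hdalg.mul hIalg))).pow 2
  have hlin : IsAlgebraic ℚ (-(256 * N * n * d ^ 2)) :=
    ((((isAlgebraic_natCast 256).mul hNalg).mul hnalg).mul (hdalg.pow 2)).neg
  exact pow_ne_zero 2 hn (eq_zero_of_quadratic_eq_zero_of_transcendental transcendental_pi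
    hlead hlin (hnalg.pow 2) hquad)

/-- Holt–Zhang: when `d ∈ ℚ \ {0}` and `b = 8πd`, there are no integers
`k`, `n ≠ 0` and nonpositive integer `N` with
`(π²/n)·(k − (n/b)i − d·i)·(k + (n/b)i − d·i) = 4πN`; hence the sectors `ℋ_{k,m,n}` with
`n ≠ 0` contribute no `∂̄`-harmonic `(0,1)`-forms on the Kodaira–Thurston manifold. -/
theorem no_infinite_orbit_solutions_of_rational_d
    (d : ℚ) (hd : d ≠ 0) (b : ℝ) (hb : b = 8 * Real.pi * (d : ℝ)) :
    ¬ ∃ (k n N : ℤ), n ≠ 0 ∧ N ≤ 0 ∧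
      ((Real.pi : ℂ) ^ 2 / (n : ℂ)) *
        ((k : ℂ) - ((n : ℂ) / (b : ℂ)) * Complex.I - (d : ℂ) * Complex.I) *
        ((k : ℂ) + ((n : ℂ) / (b : ℂ)) * Complex.I - (d : ℂ) * Complex.I) =
      4 * (Real.pi : ℂ) * (N : ℂ) := by
  rintro ⟨k, n, N, hn, -, h⟩
  exact no_infinite_orbit_solutions_of_rational_d_general (by exact_mod_cast hd)
    (by rw [hb]; push_cast; rfl) (by exact_mod_cast hn) (isAlgebraic_ratCast ℚ d)
    (isAlgebraic_intCast k) (isAlgebraic_intCast n) (isAlgebraic_intCast N) h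
end

section
/- Let k, l, m ∈ ℤ with m ≠ 0 and let b ∈ ℝ. The linear system over ℂ given by −m·f + (k + il − (b/(4π))i)·g = 0 and (k − il)·f + m·g = 0 admits a nonzero solution (f,g) ∈ ℂ² if and only if k = 0 and b·l = 4π(l² + m²). In that case the solution space is one-dimensional, spanned by (f,g) = (m, il). -/
/-!
Nonzero solutions exist exactly when the determinant of the system vanishes. With `β = b / (4π)`,
this determinant is `(βl - k² - l² - m²) + iβk`. Its imaginary part forces `β = 0` or `k = 0`, and
`β = 0` would make the real part at most `-m² < 0`. When the determinant vanishes, the two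
equations are proportional, and `m ≠ 0` lets the second one be solved for `g`.
-/

open Complex

theorem exists_ne_zero_solution_iff_det_eq_zero {R : Type*} [CommRing R] [IsDomain R]
    (a b c d : R) :
    (∃ v : R × R, v ≠ 0 ∧ a * v.1 + b * v.2 = 0 ∧ c * v.1 + d * v.2 = 0) ↔
      a * d - b * c = 0 := by
  rw [← Matrix.det_fin_two_of, ← Matrix.exists_mulVec_eq_zero_iff,
    ← (finTwoArrowEquiv R).exists_congr_right]
  simp [funext_iff, Fin.forall_fin_two, Prod.ext_iff, Matrix.vecHead, Matrix.vecTail]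

theorem solution_iff_exists_eq_smul_of_det_eq_zero {K : Type*} [Field K] {a b c d : K}
    (hdet : a * d - b * c = 0) (hd : d ≠ 0) (v : K × K) :
    a * v.1 + b * v.2 = 0 ∧ c * v.1 + d * v.2 = 0 ↔ ∃ t : K, v = t • (d, -c) := by
  constructor
  · rintro ⟨-, hsecond⟩
    refine ⟨v.1 / d, Prod.ext (div_mul_cancel₀ v.1 hd).symm ?_⟩
    change v.2 = v.1 / d * -c
    field_simp
    linear_combination hsecond
  · rintro ⟨t, rfl⟩
    simp only [Prod.smul_mk, smul_eq_mul]
    constructor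
    · linear_combination t * hdet
    · ring

theorem harmonic_system_det_eq (k l m β : ℝ) :
    -(m : ℂ) * m - ((k : ℂ) + I * l - β * I) * (k - I * l) =
      ⟨β * l - k ^ 2 - l ^ 2 - m ^ 2, β * k⟩ := by
  rw [mk_eq_add_mul_I]
  push_cast
  linear_combination ((l : ℂ) ^ 2 - β * l) * I_sq

theorem harmonic_system_det_eq_zero_iff (k l β : ℝ) {m : ℝ} (hm : m ≠ 0) :
    -(m : ℂ) * m - ((k : ℂ) + I * l - β * I) * (k - I * l) = 0 ↔
      k = 0 ∧ β * l = l ^ 2 + m ^ 2 := by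
  rw [harmonic_system_det_eq, Complex.ext_iff, zero_re, zero_im]
  constructor
  · rintro ⟨hre, him⟩
    have hβ : β ≠ 0 := by
      rintro rfl
      nlinarith [sq_nonneg k, sq_nonneg l, sq_pos_of_ne_zero hm]
    obtain rfl : k = 0 := (mul_eq_zero.mp him).resolve_left hβ
    exact ⟨rfl, by linear_combination hre⟩
  · rintro ⟨rfl, hβl⟩
    exact ⟨by linear_combination hβl, mul_zero β⟩

theorem harmonic_system_det_div_four_pi_eq_zero_iff (k l b : ℝ) {m : ℝ} (hm : m ≠ 0) :
    -(m : ℂ) * m - ((k : ℂ) + I * l - (b : ℂ) / (4 * (Real.pi : ℂ)) * I) * (k - I * l) = 0 ↔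
      k = 0 ∧ b * l = 4 * Real.pi * (l ^ 2 + m ^ 2) := by
  have hdet := harmonic_system_det_eq_zero_iff k l (b / (4 * Real.pi)) hm
  rw [div_mul_eq_mul_div, div_eq_iff_mul_eq (by positivity), mul_comm (l ^ 2 + m ^ 2),
    eq_comm (b := b * l)] at hdet
  exact_mod_cast hdet

theorem finite_orbit_harmonic_system_general (k l m : ℝ) (hm : m ≠ 0) (b : ℝ) :
    ((∃ fg : ℂ × ℂ, fg ≠ 0 ∧
        -(m : ℂ) * fg.1 +
          ((k : ℂ) + I * l - ((b : ℂ) / (4 * (Real.pi : ℂ))) * I) * fg.2 = 0 ∧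
        ((k : ℂ) - I * l) * fg.1 + (m : ℂ) * fg.2 = 0) ↔
      (k = 0 ∧ b * l = 4 * Real.pi * (l ^ 2 + m ^ 2))) ∧
    (k = 0 → b * l = 4 * Real.pi * (l ^ 2 + m ^ 2) →
      {fg : ℂ × ℂ |
        -(m : ℂ) * fg.1 +
          ((k : ℂ) + I * l - ((b : ℂ) / (4 * (Real.pi : ℂ))) * I) * fg.2 = 0 ∧
        ((k : ℂ) - I * l) * fg.1 + (m : ℂ) * fg.2 = 0} =
      {fg : ℂ × ℂ | ∃ c : ℂ, fg = (c * m, c * (I * l))}) := by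
  have hdet := harmonic_system_det_div_four_pi_eq_zero_iff k l b hm
  refine ⟨(exists_ne_zero_solution_iff_det_eq_zero _ _ _ _).trans hdet, fun hk hbl => ?_⟩
  ext fg
  have hsol :=
    solution_iff_exists_eq_smul_of_det_eq_zero (hdet.mpr ⟨hk, hbl⟩) (ofReal_ne_zero.mpr hm) fg
  simpa [hk] using hsol

/-- for integers `k, l, m` with `m ≠ 0` and `b ∈ ℝ`, the linear system
`−m·f + (k + il − (b/(4π))i)·g = 0`, `(k − il)·f + m·g = 0` has a nonzero solution
`(f,g) ∈ ℂ²` iff `k = 0` and `b·l = 4π(l² + m²)`; in that case the solution space is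
one-dimensional, spanned by `(m, il)`. -/
theorem finite_orbit_harmonic_system
    (k l m : ℤ) (hm : m ≠ 0) (b : ℝ) :
    ((∃ fg : ℂ × ℂ, fg ≠ 0 ∧
        -(m : ℂ) * fg.1 +
          ((k : ℂ) + Complex.I * (l : ℂ) - ((b : ℂ) / (4 * (Real.pi : ℂ))) * Complex.I) * fg.2 = 0 ∧
        ((k : ℂ) - Complex.I * (l : ℂ)) * fg.1 + (m : ℂ) * fg.2 = 0) ↔
      (k = 0 ∧ b * (l : ℝ) = 4 * Real.pi * ((l : ℝ) ^ 2 + (m : ℝ) ^ 2))) ∧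
    (k = 0 → b * (l : ℝ) = 4 * Real.pi * ((l : ℝ) ^ 2 + (m : ℝ) ^ 2) →
      {fg : ℂ × ℂ |
        -(m : ℂ) * fg.1 +
          ((k : ℂ) + Complex.I * (l : ℂ) - ((b : ℂ) / (4 * (Real.pi : ℂ))) * Complex.I) * fg.2 = 0 ∧
        ((k : ℂ) - Complex.I * (l : ℂ)) * fg.1 + (m : ℂ) * fg.2 = 0} =
      {fg : ℂ × ℂ | ∃ c : ℂ, fg = (c * (m : ℂ), c * (Complex.I * (l : ℂ)))}) := by
  simpa only [ofReal_intCast, Int.cast_eq_zero] using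
    finite_orbit_harmonic_system_general k l m (Int.cast_ne_zero.mpr hm) b
end

section
/- Let a ∈ ℝ, b ∈ ℝ\{0}, and k, m, n ∈ ℤ with n ≠ 0. Let f, g ∈ 𝒮(ℝ) be Schwartz functions and define F(t,x,y,z) = Σ_{ξ∈ℤ} f(x+ξ)·e^{2πi(kt + (m+nξ)y + nz)} and G(t,x,y,z) = Σ_{ξ∈ℤ} g(x+ξ)·e^{2πi(kt + (m+nξ)y + nz)}. Then the pair (F,G) satisfies −V̄₂(F) + V̄₁(G) + (b/4)G = 0 and V₁(F) + V₂(G) = 0 on ℝ⁴ if and only if (f,g) satisfies the ODE system d/dx (f,g)ᵀ = (A_n x + B_{k,m,n})(f,g)ᵀ on ℝ, where A_n = 2π·[[0, n],[n, 0]] and B_{k,m,n} = 2π·[[k, m − n(a−i)/b],[m − n(a+i)/b, (b/(4π))i − k]]. -/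
/-!
Up to the phase `e^{2πi(kt + my + nz)}`, the Weil–Brezin transform of `f` is the Zak transform
`Zf(x, s) = Σ_ξ f(x+ξ) e^{2πiξs}` at `s = ny`. Since `∂Zf/∂x = Z(f')` and
`∂Zf/∂s = 2πi (Z(Xf) − x Zf)`, where `X` is multiplication by the variable, the operators `∂/∂t`,
`∂/∂x`, `∂/∂y + x ∂/∂z` and `∂/∂z` on transforms correspond to `2πik`, `d/dx`, `2πi(m + nX)` and
`2πin` on Schwartz functions. Hence each of the two equations says that the transform of the
residual of one line of the ODE system vanishes. For `n ≠ 0` the transform is injective: for fixed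
`x` it is, up to the phase, an absolutely convergent Fourier series in `ny` with coefficients
`f(x+ξ)`.
-/

open Complex MeasureTheory

/-- The Weil–Brezin transform of a Schwartz function `f` with parameters `(k,m,n)`:
`F(t,x,y,z) = Σ_{ξ∈ℤ} f(x+ξ)·e^{2πi(kt + (m+nξ)y + nz)}`. -/
noncomputable def weilBrezin (f : SchwartzMap ℝ ℂ) (k m n : ℤ) : F4 :=
  fun t x y z => ∑' ξ : ℤ,
    f (x + (ξ : ℝ)) *
      Complex.exp (2 * (Real.pi : ℂ) * Complex.I *
        ((k : ℂ) * (t : ℂ) + ((m : ℂ) + (n : ℂ) * (ξ : ℂ)) * (y : ℂ) + (n : ℂ) * (z : ℂ)))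

section

open Asymptotics Filter SchwartzMap
open scoped Real

lemma hasSum_fourierCoeff {T : ℝ} [Fact (0 < T)] {ι : Type*} {u : ι → C(AddCircle T, ℂ)}
    {F : C(AddCircle T, ℂ)} (hu : HasSum u F) (j : ℤ) :
    HasSum (fun i ↦ fourierCoeff (u i) j) (fourierCoeff F j) := by
  have inner_eq (v : C(AddCircle T, ℂ)) :
      innerSL ℂ (fourierLp 2 j) (v.toLp 2 AddCircle.haarAddCircle ℂ) = fourierCoeff v j := by
    rw [innerSL_apply_apply, ← coe_fourierBasis, ← fourierBasis.repr_apply_apply,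
      fourierBasis_repr, fourierCoeff_toLp]
  simpa only [inner_eq] using
    (hu.mapL (ContinuousMap.toLp 2 AddCircle.haarAddCircle ℂ)).mapL (innerSL ℂ (fourierLp 2 j))

lemma fourierCoeff_of_hasSum_smul_fourier {T : ℝ} [Fact (0 < T)] {c : ℤ → ℂ}
    {F : C(AddCircle T, ℂ)} (hF : HasSum (fun ξ ↦ c ξ • fourier ξ) F) (j : ℤ) :
    fourierCoeff F j = c j := by
  have hcoeff (ξ : ℤ) :
      fourierCoeff ⇑(c ξ • fourier ξ : C(AddCircle T, ℂ)) j = if j = ξ then c j else 0 := by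
    rw [ContinuousMap.coe_smul, fourierCoeff.const_smul, fourierCoeff_fourier, Pi.single_apply]
    split_ifs with h <;> simp [h]
  have hsum := hasSum_fourierCoeff hF j
  simp only [hcoeff] at hsum
  exact hsum.unique (hasSum_ite_eq' j (c j))

lemma eq_zero_of_tsum_mul_fourier_eq_zero {T : ℝ} [Fact (0 < T)] {c : ℤ → ℂ} (hc : Summable c)
    (h : ∀ s : AddCircle T, ∑' ξ, c ξ * fourier ξ s = 0) : c = 0 := by
  have hs : Summable fun ξ ↦ c ξ • (fourier ξ : C(AddCircle T, ℂ)) :=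
    .of_norm (hc.norm.congr fun ξ ↦ by rw [norm_smul, fourier_norm, mul_one])
  have h0 : ∑' ξ, c ξ • (fourier ξ : C(AddCircle T, ℂ)) = 0 := by
    ext s
    rw [← ContinuousMap.tsum_apply hs]
    exact h s
  ext j
  rw [← fourierCoeff_of_hasSum_smul_fourier hs.hasSum j, h0]
  simp [fourierCoeff]

lemma norm_fourier_apply {T : ℝ} (ξ : ℤ) (s : AddCircle T) : ‖fourier ξ s‖ = 1 :=
  Circle.norm_coe _

lemma summable_mul_fourier {T : ℝ} {c : ℤ → ℂ} (hc : Summable c) (s : AddCircle T) :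
    Summable fun ξ ↦ c ξ * fourier ξ s :=
  .of_norm (hc.norm.congr fun ξ ↦ by rw [norm_mul, norm_fourier_apply, mul_one])

lemma hasDerivAt_tsum_mul_fourier {T : ℝ} [Fact (0 < T)] {c : ℤ → ℂ} (hc : Summable c)
    (hc' : Summable fun ξ : ℤ ↦ ξ * c ξ) (s : ℝ) :
    HasDerivAt (fun s : ℝ ↦ ∑' ξ, c ξ * fourier ξ (s : AddCircle T))
      (2 * π * I / T * ∑' ξ : ℤ, ξ * c ξ * fourier ξ (s : AddCircle T)) s := by
  have hderiv (ξ : ℤ) (s : ℝ) : HasDerivAt (fun s : ℝ ↦ c ξ * fourier ξ (s : AddCircle T))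
      (2 * π * I / T * (ξ * c ξ * fourier ξ (s : AddCircle T))) s :=
    ((hasDerivAt_fourier T ξ s).const_mul (c ξ)).congr_deriv (by ring)
  have hbound (ξ : ℤ) (s : ℝ) : ‖2 * π * I / T * (ξ * c ξ * fourier ξ (s : AddCircle T))‖ ≤
      ‖2 * π * I / T * (ξ * c ξ)‖ := by
    rw [← mul_assoc, norm_mul _ (fourier ξ _), norm_fourier_apply, mul_one]
  rw [← tsum_mul_left]
  exact hasDerivAt_tsum (hc'.mul_left _).norm hderiv hbound
    (summable_mul_fourier hc (s : AddCircle T)) s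

lemma exists_summable_norm_comp_add_intCast_le {E : Type*} [NormedAddCommGroup E] {f : ℝ → E}
    (hf : Continuous f) {p : ℝ} (hp : 1 < p) (hfp : f =O[cocompact ℝ] fun x ↦ |x| ^ (-p))
    {K : Set ℝ} (hK : IsCompact K) :
    ∃ u : ℤ → ℝ, Summable u ∧ ∀ ξ : ℤ, ∀ x ∈ K, ‖f (x + ξ)‖ ≤ u ξ := by
  have := isCompact_iff_compactSpace.mp hK
  let F : C(ℝ, E) := ⟨f, hf⟩
  refine ⟨fun ξ ↦ ‖(F.comp (ContinuousMap.addRight (ξ : ℝ))).restrict K‖, ?_, fun ξ x hx ↦ ?_⟩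
  · exact summable_of_isBigO (Real.summable_abs_int_rpow hp)
      ((isBigO_norm_restrict_cocompact F (one_pos.trans hp) hfp ⟨K, hK⟩).comp_tendsto
        Int.tendsto_coe_cofinite)
  · exact ((F.comp (ContinuousMap.addRight (ξ : ℝ))).restrict K).norm_coe_le_norm ⟨x, hx⟩

lemma summable_comp_add_intCast {E : Type*} [NormedAddCommGroup E] [NormedSpace ℝ E]
    [CompleteSpace E] (f : 𝓢(ℝ, E)) (x : ℝ) : Summable fun ξ : ℤ ↦ f (x + ξ) :=
  let ⟨_, hu, hfu⟩ := exists_summable_norm_comp_add_intCast_le f.continuous one_lt_two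
    (f.isBigO_cocompact_rpow (-2)) isCompact_singleton
  .of_norm_bounded hu fun ξ ↦ hfu ξ x rfl

/-- The Zak transform `f ↦ Zf(x, s) = Σ_{ξ∈ℤ} f(x+ξ) e^{2πiξs}` of Schwartz functions, as a linear
functional for each `(x, s)`; the variable `s`, dual to `ξ`, lives on the circle `ℝ/ℤ`. The
Weil–Brezin transform is its value at `s = ny` times the phase `e^{2πi(kt + my + nz)}`. -/
noncomputable def zak (x : ℝ) (s : UnitAddCircle) : 𝓢(ℝ, ℂ) →ₗ[ℂ] ℂ where
  toFun f := ∑' ξ : ℤ, f (x + ξ) * fourier ξ s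
  map_add' f g := by
    simp only [add_apply, add_mul]
    exact (summable_mul_fourier (summable_comp_add_intCast f x) s).tsum_add
      (summable_mul_fourier (summable_comp_add_intCast g x) s)
  map_smul' c f := by
    simp [mul_assoc, tsum_mul_left, -fourier_apply]

lemma zak_apply (x : ℝ) (s : UnitAddCircle) (f : 𝓢(ℝ, ℂ)) :
    zak x s f = ∑' ξ : ℤ, f (x + ξ) * fourier ξ s := rfl

/-- The position operator `(Xf)(x) = x f(x)` on Schwartz functions, which turns `∂/∂y` of a
Weil–Brezin transform into an operation on `f`. -/
noncomputable def position : 𝓢(ℝ, ℂ) →L[ℂ] 𝓢(ℝ, ℂ) :=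
  smulLeftCLM ℂ (fun x : ℝ ↦ (x : ℂ))

lemma position_apply (f : 𝓢(ℝ, ℂ)) (x : ℝ) : position f x = x * f x :=
  smulLeftCLM_apply_apply (by fun_prop) f x

lemma eq_zero_of_zak_eq_zero {f : 𝓢(ℝ, ℂ)} (h : ∀ x s, zak x s f = 0) : f = 0 := by
  ext x
  simpa using congrFun (eq_zero_of_tsum_mul_fourier_eq_zero (summable_comp_add_intCast f x) (h x)) 0

lemma hasDerivAt_zak_left (f : 𝓢(ℝ, ℂ)) (x : ℝ) (s : UnitAddCircle) :
    HasDerivAt (fun x ↦ zak x s f) (zak x s (derivCLM ℂ ℂ f)) x := by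
  obtain ⟨u, hu, hfu⟩ := exists_summable_norm_comp_add_intCast_le
    (derivCLM ℂ ℂ f).continuous one_lt_two ((derivCLM ℂ ℂ f).isBigO_cocompact_rpow (-2))
    (isCompact_closedBall x 1)
  have hderiv (ξ : ℤ) (x' : ℝ) : HasDerivAt (fun x ↦ f (x + ξ) * fourier ξ s)
      (derivCLM ℂ ℂ f (x' + ξ) * fourier ξ s) x' :=
    ((f.hasDerivAt (x' + ξ)).comp_add_const x' ξ).mul_const _
  have hx : x ∈ Metric.ball x 1 := Metric.mem_ball_self one_pos
  refine hasDerivAt_tsum_of_isPreconnected hu Metric.isOpen_ball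
    (convex_ball x 1).isPreconnected (fun ξ x' _ ↦ hderiv ξ x') (fun ξ x' hx' ↦ ?_) hx
    (summable_mul_fourier (summable_comp_add_intCast f x) s) hx
  rw [norm_mul, norm_fourier_apply, mul_one]
  exact hfu ξ x' (Metric.ball_subset_closedBall hx')

lemma hasDerivAt_zak_right (f : 𝓢(ℝ, ℂ)) (x s : ℝ) :
    HasDerivAt (fun s : ℝ ↦ zak x s f) (2 * π * I * (zak x s (position f) - x * zak x s f)) s := by
  have hweight (ξ : ℤ) : ξ * f (x + ξ) = position f (x + ξ) - x * f (x + ξ) := by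
    rw [position_apply]; push_cast; ring
  have hf := summable_comp_add_intCast f x
  have hpos := summable_comp_add_intCast (position f) x
  refine (hasDerivAt_tsum_mul_fourier hf ?_ s).congr_deriv ?_
  · simpa only [hweight] using hpos.sub (hf.mul_left (x : ℂ))
  · simp only [hweight, sub_mul, mul_assoc (x : ℂ)]
    rw [(summable_mul_fourier hpos _).tsum_sub ((summable_mul_fourier hf _).mul_left _),
      tsum_mul_left, ofReal_one, div_one, zak_apply, zak_apply]

variable (f g : 𝓢(ℝ, ℂ)) (k m n : ℤ) (t x y z : ℝ)

lemma weilBrezin_eq_cexp_mul_zak : weilBrezin f k m n t x y z =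
    cexp (2 * π * I * (k * t + m * y + n * z)) * zak x (n * y : ℝ) f := by
  rw [zak_apply, ← tsum_mul_left]
  refine tsum_congr fun ξ ↦ ?_
  rw [fourier_coe_apply, mul_left_comm, ← Complex.exp_add]
  push_cast
  ring_nf

lemma pT_weilBrezin :
    pT (weilBrezin f k m n) t x y z = 2 * π * I * k * weilBrezin f k m n t x y z := by
  simp only [pT, weilBrezin_eq_cexp_mul_zak]
  have hphase := (((((hasDerivAt_id' t).ofReal_comp.const_mul (k : ℂ)).add_const
    (m * y : ℂ)).add_const (n * z : ℂ)).const_mul (2 * π * I)).cexp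
  rw [(hphase.mul_const _).deriv]
  push_cast
  ring

lemma pX_weilBrezin :
    pX (weilBrezin f k m n) t x y z = weilBrezin (derivCLM ℂ ℂ f) k m n t x y z := by
  simp only [pX, weilBrezin_eq_cexp_mul_zak]
  exact ((hasDerivAt_zak_left f x _).const_mul _).deriv

lemma pZ_weilBrezin :
    pZ (weilBrezin f k m n) t x y z = 2 * π * I * n * weilBrezin f k m n t x y z := by
  simp only [pZ, weilBrezin_eq_cexp_mul_zak]
  have hphase := ((((hasDerivAt_id' z).ofReal_comp.const_mul (n : ℂ)).const_add
    (k * t + m * y : ℂ)).const_mul (2 * π * I)).cexp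
  rw [(hphase.mul_const _).deriv]
  push_cast
  ring

lemma pY_add_mul_pZ_weilBrezin :
    pY (weilBrezin f k m n) t x y z + x * pZ (weilBrezin f k m n) t x y z =
      2 * π * I * (m * weilBrezin f k m n t x y z + n * weilBrezin (position f) k m n t x y z) := by
  have hphase := (((((hasDerivAt_id' y).ofReal_comp.const_mul (m : ℂ)).const_add
    (k * t : ℂ)).add_const (n * z : ℂ)).const_mul (2 * π * I)).cexp
  have hzak : HasDerivAt (fun y : ℝ ↦ zak x (n * y : ℝ) f)
      (n * (2 * π * I * (zak x (n * y : ℝ) (position f) - x * zak x (n * y : ℝ) f))) y :=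
    ((hasDerivAt_zak_right f x (n * y)).scomp y
      ((hasDerivAt_id' y).const_mul (n : ℝ))).congr_deriv (by simp)
  rw [pZ_weilBrezin]
  simp only [pY, weilBrezin_eq_cexp_mul_zak]
  rw [(hphase.fun_mul hzak).deriv]
  push_cast
  ring

lemma weilBrezin_eq_zero_iff (hn : n ≠ 0) :
    (∀ t x y z, weilBrezin f k m n t x y z = 0) ↔ f = 0 := by
  constructor
  · refine fun h ↦ eq_zero_of_zak_eq_zero fun x s ↦ ?_
    induction s using QuotientAddGroup.induction_on with | H s
    have hny : (n : ℝ) * (s / n) = s := mul_div_cancel₀ s (Int.cast_ne_zero.mpr hn)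
    simpa [weilBrezin_eq_cexp_mul_zak, hny] using h 0 x (s / n) 0
  · rintro rfl t x y z
    rw [weilBrezin_eq_cexp_mul_zak, map_zero, mul_zero]

/-- The residual `u' − (α u + (β x + γ) v)` of one line of a linear system whose off-diagonal
coefficient is affine in `x`, as a Schwartz function so that the Weil–Brezin transform can be
applied to it. -/
noncomputable def odeResidual (α β γ : ℂ) (u v : 𝓢(ℝ, ℂ)) : 𝓢(ℝ, ℂ) :=
  derivCLM ℂ ℂ u - (α • u + (β • position v + γ • v))

lemma odeResidual_eq_zero_iff {α β γ : ℂ} {u v : 𝓢(ℝ, ℂ)} :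
    odeResidual α β γ u v = 0 ↔ ∀ x : ℝ, HasDerivAt u (α * u x + (β * x + γ) * v x) x := by
  have happly (x : ℝ) :
      odeResidual α β γ u v x = deriv u x - (α * u x + (β * x + γ) * v x) := by
    simp only [odeResidual, sub_apply, add_apply, smul_apply, derivCLM_apply, position_apply,
      smul_eq_mul]
    ring
  simp only [DFunLike.ext_iff, happly, zero_apply, sub_eq_zero]
  exact forall_congr' fun x ↦ ⟨fun h ↦ h ▸ u.differentiableAt.hasDerivAt, HasDerivAt.deriv⟩

lemma weilBrezin_odeResidual (α β γ : ℂ) (u v : 𝓢(ℝ, ℂ)) :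
    weilBrezin (odeResidual α β γ u v) k m n t x y z =
      weilBrezin (derivCLM ℂ ℂ u) k m n t x y z -
        (α * weilBrezin u k m n t x y z + (β * weilBrezin (position v) k m n t x y z +
          γ * weilBrezin v k m n t x y z)) := by
  simp only [weilBrezin_eq_cexp_mul_zak, odeResidual, map_sub, map_add, map_smul, smul_eq_mul]
  ring

variable (a b : ℝ)

lemma V₁_add_V₂_weilBrezin :
    V₁ (weilBrezin f k m n) t x y z + V₂ a b (weilBrezin g k m n) t x y z =
      -(I / 2) * weilBrezin (odeResidual (2 * π * k) (2 * π * n)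
        (2 * π * (m - n * (a - I) / b)) f g) k m n t x y z := by
  rw [V₁, V₂, pY_add_mul_pZ_weilBrezin, pT_weilBrezin, pX_weilBrezin, pZ_weilBrezin,
    weilBrezin_odeResidual]
  ring

lemma neg_V₂c_add_V₁c_add_weilBrezin :
    -V₂c a b (weilBrezin f k m n) t x y z + V₁c (weilBrezin g k m n) t x y z +
        b / 4 * weilBrezin g k m n t x y z =
      I / 2 * weilBrezin (odeResidual (2 * π * (b / (4 * π) * I - k)) (2 * π * n)
        (2 * π * (m - n * (a + I) / b)) g f) k m n t x y z := by
  have hπ : (π : ℂ) * (π : ℂ)⁻¹ = 1 := mul_inv_cancel₀ (ofReal_ne_zero.mpr Real.pi_ne_zero)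
  rw [V₁c, V₂c, pY_add_mul_pZ_weilBrezin, pT_weilBrezin, pX_weilBrezin, pZ_weilBrezin,
    weilBrezin_odeResidual]
  linear_combination b / 4 * weilBrezin g k m n t x y z * (I ^ 2 * hπ + I_sq)

end

/-- Holt–Zhang: the Weil–Brezin transforms `(F,G)` of Schwartz
functions `(f,g)` satisfy the harmonic `(0,1)`-form equations
`−V̄₂(F) + V̄₁(G) + (b/4)G = 0`, `V₁(F) + V₂(G) = 0` if and only if `(f,g)` satisfies the
ODE system `(f,g)′ = (A_n x + B_{k,m,n})(f,g)` with `A_n = 2π[[0,n],[n,0]]` and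
`B_{k,m,n} = 2π[[k, m−n(a−i)/b],[m−n(a+i)/b, (b/4π)i − k]]`. -/
theorem weilBrezin_harmonic_iff_ode
    (a : ℝ) (b : ℝ) (hb : b ≠ 0) (k m n : ℤ) (hn : n ≠ 0)
    (f g : SchwartzMap ℝ ℂ) :
    (let F := weilBrezin f k m n
     let G := weilBrezin g k m n
     (∀ t x y z : ℝ,
        -V₂c a b F t x y z + V₁c G t x y z + ((b : ℂ) / 4) * G t x y z = 0) ∧
     (∀ t x y z : ℝ, V₁ F t x y z + V₂ a b G t x y z = 0)) ↔
    (∀ x : ℝ,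
      HasDerivAt (⇑f)
        ((2 * (Real.pi : ℂ) * (k : ℂ)) * f x +
          (2 * (Real.pi : ℂ) * (n : ℂ) * (x : ℂ) +
            2 * (Real.pi : ℂ) * ((m : ℂ) - (n : ℂ) * ((a : ℂ) - Complex.I) / (b : ℂ))) * g x) x ∧
      HasDerivAt (⇑g)
        ((2 * (Real.pi : ℂ) * (n : ℂ) * (x : ℂ) +
            2 * (Real.pi : ℂ) * ((m : ℂ) - (n : ℂ) * ((a : ℂ) + Complex.I) / (b : ℂ))) * f x +
          (2 * (Real.pi : ℂ) * (((b : ℂ) / (4 * (Real.pi : ℂ))) * Complex.I - (k : ℂ))) * g x) x) := by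
  have hI : I / 2 ≠ 0 := div_ne_zero I_ne_zero two_ne_zero
  simp only [V₁_add_V₂_weilBrezin, neg_V₂c_add_V₁c_add_weilBrezin, mul_eq_zero, neg_eq_zero, hI,
    false_or, weilBrezin_eq_zero_iff _ k m n hn, odeResidual_eq_zero_iff]
  -- The first equation is the line of the system for `g`, the second the line for `f`.
  rw [and_comm, ← forall_and]
  simp only [add_comm (_ * g _)]
end
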